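/- Let R be a commutative Noetherian ring and 𝔞 a proper ideal of R such that either dim R = 3, or dim R/𝔞 = 2, or ara(𝔞) = 2. Let t ≥ 0 be an integer and M an R-module such that Ext^i_R(R/𝔞, M) is a finitely generated R-module for every i ≥ 0. Then H^i_𝔞(M) is 𝔞-cofinite for every integer 0 ≤ i ≤ t − 1 if and only if the R-module Hom_R(R/𝔞, H^i_𝔞(M)) is finitely generated for every integer 0 ≤ i ≤ t. -/

import Mathlib

open CategoryTheory

universe u

/-- The `R`-module `Ext^i_R(N, M)` for two `R`-modules (objects of `ModuleCat R`). -/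
noncomputable def extObj {R : Type u} [CommRing R] (N M : ModuleCat.{u} R) (i : ℕ) :
    ModuleCat.{u} R :=
  ((Ext R (ModuleCat.{u} R) i).obj (Opposite.op N)).obj M

/-- The `R`-module `Ext^i_R(R/𝔞, M)`. -/
noncomputable def extIdeal {R : Type u} [CommRing R] (𝔞 : Ideal R) (i : ℕ)
    (M : ModuleCat.{u} R) : ModuleCat.{u} R :=
  extObj (ModuleCat.of R (R ⧸ 𝔞)) M i

/-- An `R`-module `M` is `𝔞`-cofinite if `Supp_R M ⊆ V(𝔞)` and `Ext^i_R(R/𝔞, M)` is a finitely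
generated `R`-module for every `i ≥ 0`. -/
def IsCofinite {R : Type u} [CommRing R] (𝔞 : Ideal R) (M : ModuleCat.{u} R) : Prop :=
  Module.support R M ⊆ PrimeSpectrum.zeroLocus (𝔞 : Set R) ∧
    ∀ i : ℕ, Module.Finite R (extIdeal 𝔞 i M)

/-- The Krull dimension `dim_R M` of an `R`-module `M`: the Krull dimension of its support,
i.e. the supremum of `dim R/𝔭` over primes `𝔭` in the support of `M`. -/
noncomputable def moduleDim (R : Type u) [CommRing R] (M : Type u) [AddCommGroup M]
    [Module R M] : WithBot ℕ∞ :=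
  Order.krullDim (Module.support R M)

/-- An `R`-module `M` is in `FD_{≤n}` if there is a finitely generated submodule `N ⊆ M`
with `dim_R (M/N) ≤ n`. -/
def MemFD (R : Type u) [CommRing R] (n : ℕ) (M : Type u) [AddCommGroup M] [Module R M] : Prop :=
  ∃ N : Submodule R M, N.FG ∧ moduleDim R (M ⧸ N) ≤ (n : WithBot ℕ∞)

/-- An `R`-module `M` is `𝔞`-torsion if every element is annihilated by some power of `𝔞`. -/
def IsTorsionIdeal {R : Type u} [CommRing R] (𝔞 : Ideal R) (M : Type u) [AddCommGroup M]
    [Module R M] : Prop :=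
  ∀ m : M, ∃ n : ℕ, ∀ a ∈ 𝔞 ^ n, a • m = 0

/-- The arithmetic rank of an ideal `𝔞`: the least `n` such that there exist `a₁, …, aₙ ∈ R`
with `Rad (a₁, …, aₙ) = Rad 𝔞`. -/
noncomputable def arithRank {R : Type u} [CommRing R] (𝔞 : Ideal R) : ℕ :=
  sInf {n : ℕ | ∃ f : Fin n → R, (Ideal.span (Set.range f)).radical = 𝔞.radical}

/-!
Write `Γ` for the `𝔞`-torsion submodule. The module `M / Γ(M)` embeds in an injective module
without `𝔞`-torsion, whose local cohomology vanishes; so the cokernel `M'` of the embedding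
satisfies `H^i(M') = H^{i+1}(M)` and `Ext^i(R/𝔞, M') = Ext^{i+1}(R/𝔞, M / Γ(M))`. By induction on
`t` the theorem reduces to a statement about one torsion module: if `M` is `𝔞`-torsion and
`Ext^i(R/𝔞, M)` is finitely generated for `i ≤ 2`, then it is finitely generated for all `i`.

If `𝔞` is generated by two elements up to radical, these are killed one at a time. If
`dim R ≤ 3`, then `M` may be replaced by its submodule killed by `Γ(R)`, and `𝔞 + Γ(R)` has a
quotient of dimension at most two. So let `dim R/𝔞 ≤ 2`, and call `y` generic if it avoids the
minimal primes of `𝔞` that are not maximal. The same problem with `i ≤ 1` in dimension one, solved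
by artinian localization and superficial elements, shows that a generic `y` has finitely generated
kernel and cokernel on every `E = Ext^i(R/𝔞, M)`, while localization shows that `E` is finitely
generated up to powers of some generic `z`. Hence `E` has a quotient `X` by a finitely
generated submodule that is `z`-torsion and `z`-divisible, and it remains to prove `X = 0`.

Otherwise `ker z` on `X` is a nonzero finitely generated module; choose a maximal ideal `𝔪` with
`ker z ⊄ 𝔪 ker z` and a generic `y ∈ 𝔪` that is also generic for `𝔞 + (z)`. Then `X` is
`y`-divisible. After `y`-adic completion, a matrix `L` expressing a `y`-divisible chain that starts
at generators of `ker y` produces `w = det (z ^ k - y L)` killing the `y`-power torsion. Modulo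
`(𝔞, w)` the completion has dimension at most one, so the dimension one case shows that `ker w` is
finitely generated, which forces `ker y = 0` on `X`. Now `ker z = y ker z ⊆ 𝔪 ker z`, a
contradiction.
-/

section ShortExact

variable {R A B C : Type*} [CommRing R] [AddCommGroup A] [Module R A] [AddCommGroup B] [Module R B]
  [AddCommGroup C] [Module R C]

/-- The sequence `0 → A → B → C → 0` given by `f` and `g` is exact; the form of
`CategoryTheory.ShortComplex.ShortExact` for unbundled modules. -/
structure IsShortExact (f : A →ₗ[R] B) (g : B →ₗ[R] C) : Prop where
  injective : Function.Injective f
  surjective : Function.Surjective g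
  exact : Function.Exact f g

lemma isShortExact_subtype_mkQ (N : Submodule R B) : IsShortExact N.subtype N.mkQ :=
  ⟨N.injective_subtype, N.mkQ_surjective, LinearMap.exact_subtype_mkQ N⟩

lemma isShortExact_mkQ_range {f : A →ₗ[R] B} (hf : Function.Injective f) :
    IsShortExact f (LinearMap.range f).mkQ :=
  ⟨hf, Submodule.mkQ_surjective _, f.exact_map_mkQ_range⟩

lemma isShortExact_ker_subtype {g : B →ₗ[R] C} (hg : Function.Surjective g) :
    IsShortExact (LinearMap.ker g).subtype g :=
  ⟨Submodule.injective_subtype _, hg, g.exact_subtype_ker_map⟩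

lemma isShortExact_ker_subtype_rangeRestrict (g : B →ₗ[R] C) :
    IsShortExact (LinearMap.ker g).subtype g.rangeRestrict where
  injective := Submodule.injective_subtype _
  surjective := g.surjective_rangeRestrict
  exact := by rw [LinearMap.exact_iff, Submodule.range_subtype, LinearMap.ker_rangeRestrict]

end ShortExact

/-- The `R`-module `Ext^i_R(T, M)` for unbundled modules. It is Mathlib's `Ext` of the derived
category, whose functoriality and long exact sequences are available, rather than the derived
functor `extObj`; `extEquiv` compares the two. -/
abbrev ExtM (R : Type u) [CommRing R] (T M : Type u) [AddCommGroup T] [Module R T]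
    [AddCommGroup M] [Module R M] (i : ℕ) : Type u :=
  Abelian.Ext (ModuleCat.of R T) (ModuleCat.of R M) i

namespace ExtM

open Abelian

variable {R : Type u} [CommRing R]
variable {A B C : Type u} [AddCommGroup A] [Module R A] [AddCommGroup B] [Module R B]
  [AddCommGroup C] [Module R C]
variable (T M : Type u) [AddCommGroup T] [Module R T] [AddCommGroup M] [Module R M]

section Functoriality

/-- The map `Ext^i(T, f)`. -/
noncomputable def map (f : A →ₗ[R] B) (i : ℕ) : ExtM R T A i →ₗ[R] ExtM R T B i :=
  (Ext.mk₀ (ModuleCat.ofHom f)).postcompOfLinear R _ (add_zero i)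

/-- The map `Ext^i(f, M)`. -/
noncomputable def comap (f : A →ₗ[R] B) (i : ℕ) : ExtM R B M i →ₗ[R] ExtM R A M i :=
  (Ext.mk₀ (ModuleCat.ofHom f)).precompOfLinear R _ (zero_add i)

lemma map_apply (f : A →ₗ[R] B) (i : ℕ) (x : ExtM R T A i) :
    map T f i x = x.comp (Ext.mk₀ (ModuleCat.ofHom f)) (add_zero i) := rfl

lemma comap_apply (f : A →ₗ[R] B) (i : ℕ) (x : ExtM R B M i) :
    comap M f i x = (Ext.mk₀ (ModuleCat.ofHom f)).comp x (zero_add i) := rfl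

lemma map_comp (f : A →ₗ[R] B) (g : B →ₗ[R] C) (i : ℕ) :
    map T (g ∘ₗ f) i = map T g i ∘ₗ map T f i := by
  ext1 x
  simp only [LinearMap.comp_apply, map_apply, ModuleCat.ofHom_comp, ← Ext.mk₀_comp_mk₀,
    Ext.comp_assoc_of_third_deg_zero]

lemma comap_comp (f : A →ₗ[R] B) (g : B →ₗ[R] C) (i : ℕ) :
    comap M (g ∘ₗ f) i = comap M f i ∘ₗ comap M g i := by
  ext1 x
  simp only [LinearMap.comp_apply, comap_apply, ModuleCat.ofHom_comp, Ext.mk₀_comp_mk₀_assoc]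

lemma map_comap (f : A →ₗ[R] B) (g : T →ₗ[R] M) (i : ℕ) (x : ExtM R M A i) :
    map T f i (comap A g i x) = comap B g i (map M f i x) := by
  simp only [comap_apply, map_apply, Ext.comp_assoc_of_third_deg_zero]

lemma map_lsmul (r : R) (i : ℕ) :
    map T (LinearMap.lsmul R M r) i = LinearMap.lsmul R (ExtM R T M i) r := by
  have : ModuleCat.ofHom (LinearMap.lsmul R M r) = r • 𝟙 (ModuleCat.of R M) := rfl
  ext1 x
  simp [map_apply, this, Ext.mk₀_smul]

lemma comap_lsmul (r : R) (i : ℕ) :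
    comap M (LinearMap.lsmul R T r) i = LinearMap.lsmul R (ExtM R T M i) r := by
  have : ModuleCat.ofHom (LinearMap.lsmul R T r) = r • 𝟙 (ModuleCat.of R T) := rfl
  ext1 x
  simp [comap_apply, this, Ext.mk₀_smul]

lemma map_zero_hom (i : ℕ) : map T (0 : A →ₗ[R] B) i = 0 := by
  ext1 x
  simp [map_apply]

lemma comap_zero_hom (i : ℕ) : comap M (0 : A →ₗ[R] B) i = 0 := by
  ext1 x
  simp [comap_apply]

lemma map_id (i : ℕ) : map T (LinearMap.id : M →ₗ[R] M) i = LinearMap.id := by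
  ext1 x
  simp [map_apply]

lemma comap_id (i : ℕ) : comap M (LinearMap.id : T →ₗ[R] T) i = LinearMap.id := by
  ext1 x
  simp [comap_apply]

variable {T M} in
/-- The isomorphism of `Ext` modules induced by isomorphisms in both variables. -/
noncomputable def congr {T' M' : Type u} [AddCommGroup T'] [Module R T'] [AddCommGroup M']
    [Module R M'] (e : T ≃ₗ[R] T') (e' : M ≃ₗ[R] M') (i : ℕ) :
    ExtM R T M i ≃ₗ[R] ExtM R T' M' i :=
  let e₁ : ExtM R T M i ≃ₗ[R] ExtM R T' M i :=
    .ofLinearMap (comap M e.symm.toLinearMap i) (comap M e.toLinearMap i)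
      (by rw [← comap_comp, LinearEquiv.comp_symm, comap_id])
      (by rw [← comap_comp, LinearEquiv.symm_comp, comap_id])
  let e₂ : ExtM R T' M i ≃ₗ[R] ExtM R T' M' i :=
    .ofLinearMap (map T' e'.toLinearMap i) (map T' e'.symm.toLinearMap i)
      (by rw [← map_comp, LinearEquiv.comp_symm, map_id])
      (by rw [← map_comp, LinearEquiv.symm_comp, map_id])
  e₁.trans e₂

lemma subsingleton_of_subsingleton [Subsingleton T] (i : ℕ) : Subsingleton (ExtM R T M i) := by
  refine subsingleton_of_forall_eq 0 fun x => ?_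
  rw [← LinearMap.id_apply (R := R) x, ← comap_id,
    Subsingleton.elim (LinearMap.id : T →ₗ[R] T) 0, comap_zero_hom, LinearMap.zero_apply]

lemma subsingleton_of_free [Module.Free R T] (i : ℕ) : Subsingleton (ExtM R T M (i + 1)) :=
  Ext.subsingleton_of_projective _ _ _

lemma subsingleton_of_injective (hM : Module.Injective R M) (i : ℕ) :
    Subsingleton (ExtM R T M (i + 1)) := by
  have : Injective (ModuleCat.of R M) := Module.injective_object_of_injective_module R M
  exact Ext.subsingleton_of_injective _ _ _

lemma finite [IsNoetherianRing R] [Module.Finite R T] [Module.Finite R M] (i : ℕ) :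
    Module.Finite R (ExtM R T M i) :=
  ModuleCat.finite_ext R (ModuleCat.of R T) (ModuleCat.of R M) i

end Functoriality

section DegreeZero

/-- The identification `Ext^0 = Hom`. -/
noncomputable def zeroEquiv : ExtM R T M 0 ≃ₗ[R] (T →ₗ[R] M) :=
  (Ext.linearEquiv₀ (R := R)).trans ModuleCat.homLinearEquiv

lemma zeroEquiv_symm_apply (f : T →ₗ[R] M) :
    (zeroEquiv T M).symm f = Ext.mk₀ (ModuleCat.ofHom f) := rfl

lemma mk₀_zeroEquiv (x : ExtM R T M 0) : Ext.mk₀ (ModuleCat.ofHom (zeroEquiv T M x)) = x :=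
  (zeroEquiv T M).symm_apply_apply x

lemma zeroEquiv_map (f : A →ₗ[R] B) (x : ExtM R T A 0) :
    zeroEquiv T B (map T f 0 x) = f ∘ₗ zeroEquiv T A x := by
  rw [← LinearEquiv.eq_symm_apply, zeroEquiv_symm_apply, ModuleCat.ofHom_comp,
    ← Ext.mk₀_comp_mk₀, mk₀_zeroEquiv, map_apply]

lemma zeroEquiv_comap (f : A →ₗ[R] B) (x : ExtM R B M 0) :
    zeroEquiv A M (comap M f 0 x) = zeroEquiv B M x ∘ₗ f := by
  rw [← LinearEquiv.eq_symm_apply, zeroEquiv_symm_apply, ModuleCat.ofHom_comp,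
    ← Ext.mk₀_comp_mk₀, mk₀_zeroEquiv, comap_apply]

lemma map_zero_injective {f : A →ₗ[R] B} (hf : Function.Injective f) :
    Function.Injective (map T f 0) := by
  refine fun x y hxy => (zeroEquiv T A).injective (LinearMap.ext fun t => hf ?_)
  have := LinearMap.congr_fun (congrArg (zeroEquiv T B) hxy) t
  rwa [zeroEquiv_map, zeroEquiv_map] at this

lemma comap_zero_injective {g : B →ₗ[R] C} (hg : Function.Surjective g) :
    Function.Injective (comap M g 0) := by
  refine fun x y hxy => (zeroEquiv C M).injective (LinearMap.ext (hg.forall.2 fun b => ?_))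
  have := LinearMap.congr_fun (congrArg (zeroEquiv B M) hxy) b
  rwa [zeroEquiv_comap, zeroEquiv_comap] at this

end DegreeZero

section LongExact

variable {f : A →ₗ[R] B} {g : B →ₗ[R] C} (h : IsShortExact f g)

include h in
lemma shortExact :
    (ModuleCat.shortComplexOfCompEqZero f g h.exact.linearMap_comp_eq_zero).ShortExact :=
  ModuleCat.shortComplex_shortExact _ h.exact h.injective h.surjective

/-- The connecting map of the long exact sequence of `Ext^i(T, -)`. -/
noncomputable def δ (i : ℕ) : ExtM R T C i →ₗ[R] ExtM R T A (i + 1) :=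
  (shortExact h).extClass.postcompOfLinear R _ rfl

/-- The connecting map of the long exact sequence of `Ext^i(-, M)`. -/
noncomputable def coδ (i : ℕ) : ExtM R A M i →ₗ[R] ExtM R C M (i + 1) :=
  (shortExact h).extClass.precompOfLinear R _ (add_comm 1 i)

include h in
lemma exact_map_map (i : ℕ) : Function.Exact (map T f i) (map T g i) :=
  (ShortComplex.ab_exact_iff_function_exact _).1
    (Ext.covariant_sequence_exact₂' (ModuleCat.of R T) (shortExact h) i)

lemma exact_map_δ (i : ℕ) : Function.Exact (map T g i) (δ T h i) :=
  (ShortComplex.ab_exact_iff_function_exact _).1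
    (Ext.covariant_sequence_exact₃' (ModuleCat.of R T) (shortExact h) i (i + 1) rfl)

lemma exact_δ_map (i : ℕ) : Function.Exact (δ T h i) (map T f (i + 1)) :=
  (ShortComplex.ab_exact_iff_function_exact _).1
    (Ext.covariant_sequence_exact₁' (ModuleCat.of R T) (shortExact h) i (i + 1) rfl)

include h in
lemma exact_comap_comap (i : ℕ) : Function.Exact (comap M g i) (comap M f i) :=
  (ShortComplex.ab_exact_iff_function_exact _).1
    (Ext.contravariant_sequence_exact₂' (shortExact h) (ModuleCat.of R M) i)

lemma exact_comap_coδ (i : ℕ) : Function.Exact (comap M f i) (coδ M h i) :=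
  (ShortComplex.ab_exact_iff_function_exact _).1
    (Ext.contravariant_sequence_exact₁' (shortExact h) (ModuleCat.of R M) i (i + 1)
      (add_comm 1 i))

lemma exact_coδ_comap (i : ℕ) : Function.Exact (coδ M h i) (comap M g (i + 1)) :=
  (ShortComplex.ab_exact_iff_function_exact _).1
    (Ext.contravariant_sequence_exact₃' (shortExact h) (ModuleCat.of R M) i (i + 1)
      (add_comm 1 i))

lemma δ_comap (φ : T →ₗ[R] M) (i : ℕ) (x : ExtM R M C i) :
    δ T h i (comap C φ i x) = comap A φ (i + 1) (δ M h i x) :=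
  Ext.comp_assoc _ _ _ (zero_add i) rfl (by lia)

lemma δ_bijective (hB : ∀ i, Subsingleton (ExtM R T B i)) (i : ℕ) :
    Function.Bijective (δ T h i) := by
  refine ⟨(injective_iff_map_eq_zero _).2 fun x hx => ?_,
    fun x => (exact_δ_map T h i x).1 ((hB (i + 1)).elim _ _)⟩
  obtain ⟨y, rfl⟩ := (exact_map_δ T h i x).1 hx
  rw [(hB i).elim y 0, map_zero]

end LongExact

end ExtM

/-- A class of `R`-modules that contains the finitely generated modules and the middle term of
every exact sequence `X → Y → Z` whose outer terms it contains; that is, a Serre class containing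
the finitely generated modules. Membership is a predicate on unbundled modules. -/
structure IsSerreClass (R : Type u) [CommRing R]
    (P : ∀ (X : Type u) [AddCommGroup X] [Module R X], Prop) : Prop where
  of_finite : ∀ (X : Type u) [AddCommGroup X] [Module R X], Module.Finite R X → P X
  of_exact : ∀ {X Y Z : Type u} [AddCommGroup X] [Module R X] [AddCommGroup Y] [Module R Y]
    [AddCommGroup Z] [Module R Z] (f : X →ₗ[R] Y) (g : Y →ₗ[R] Z), Function.Exact f g →
    P X → P Z → P Y

lemma isSerreClass_finite (R : Type u) [CommRing R] [IsNoetherianRing R] :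
    IsSerreClass R (fun X _ _ => Module.Finite R X) where
  of_finite _ _ _ h := h
  of_exact {X Y Z} _ _ _ _ _ _ f g h hX hZ := by
    have hker : Module.Finite R (LinearMap.ker g) := by
      rw [LinearMap.exact_iff.mp h]
      infer_instance
    have : Module.Finite R (Y ⧸ LinearMap.ker g) :=
      Module.Finite.equiv g.quotKerEquivRange.symm
    exact Module.Finite.of_submodule_quotient (LinearMap.ker g)

namespace IsSerreClass

variable {R : Type u} [CommRing R] {P : ∀ (X : Type u) [AddCommGroup X] [Module R X], Prop}
  (hP : IsSerreClass R P)

include hP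

section Basic

variable {X Y Z : Type u} [AddCommGroup X] [Module R X] [AddCommGroup Y] [Module R Y]
    [AddCommGroup Z] [Module R Z]

lemma of_subsingleton [Subsingleton X] : P X := hP.of_finite X inferInstance

lemma of_injective (f : X →ₗ[R] Y) (hf : Function.Injective f) (hY : P Y) : P X :=
  hP.of_exact (0 : PUnit.{u + 1} →ₗ[R] X) f
    ((f.exact_zero_iff_injective _).2 hf) hP.of_subsingleton hY

lemma of_surjective (f : X →ₗ[R] Y) (hf : Function.Surjective f) (hX : P X) : P Y :=
  hP.of_exact f (0 : Y →ₗ[R] PUnit.{u + 1})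
    ((f.exact_zero_iff_surjective _).2 hf) hX hP.of_subsingleton

lemma of_equiv (e : X ≃ₗ[R] Y) (hX : P X) : P Y := hP.of_surjective e.toLinearMap e.surjective hX

lemma of_ker_of_eq_zero {f : X →ₗ[R] Y} (hf : f = 0) (hker : P (LinearMap.ker f)) : P X :=
  hP.of_equiv ((LinearEquiv.ofEq _ _ (LinearMap.ker_eq_top.2 hf)).trans Submodule.topEquiv) hker

lemma ker_of_exact (f : X →ₗ[R] Y) (g : Y →ₗ[R] Z) (h : Function.Exact f g) (hX : P X) :
    P (LinearMap.ker g) :=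
  hP.of_surjective (f.codRestrict _ fun x => h.apply_apply_eq_zero x)
    (fun ⟨y, hy⟩ => by
      obtain ⟨x, rfl⟩ := (h y).1 hy
      exact ⟨x, rfl⟩) hX

lemma ker_comp (f : X →ₗ[R] Y) (g : Y →ₗ[R] Z) (hf : P (LinearMap.ker f))
    (hg : P (LinearMap.ker g)) : P (LinearMap.ker (g ∘ₗ f)) := by
  refine hP.of_exact (Submodule.inclusion (LinearMap.ker_le_ker_comp f g))
    ((f ∘ₗ (LinearMap.ker (g ∘ₗ f)).subtype).codRestrict (LinearMap.ker g) fun x => x.2) ?_ hf hg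
  rintro ⟨x, hx⟩
  constructor
  · intro h
    exact ⟨⟨x, congrArg Subtype.val h⟩, rfl⟩
  · rintro ⟨⟨y, hy⟩, h⟩
    obtain rfl : y = x := congrArg Subtype.val h
    exact Subtype.ext hy

lemma coker_of_exact (f : X →ₗ[R] Y) (g : Y →ₗ[R] Z) (h : Function.Exact f g) (hZ : P Z) :
    P (Y ⧸ LinearMap.range f) := by
  refine hP.of_injective ((LinearMap.range f).liftQ g ?_) ?_ hZ
  · rw [← LinearMap.exact_iff.mp h]
  · rw [← LinearMap.ker_eq_bot, Submodule.ker_liftQ_eq_bot _ _ _ (LinearMap.exact_iff.mp h).le]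

lemma coker_comp (f : X →ₗ[R] Y) (g : Y →ₗ[R] Z) (hf : P (Y ⧸ LinearMap.range f))
    (hg : P (Z ⧸ LinearMap.range g)) : P (Z ⧸ LinearMap.range (g ∘ₗ f)) := by
  refine hP.of_exact ((LinearMap.range f).mapQ (LinearMap.range (g ∘ₗ f)) g ?_)
    (Submodule.factor (LinearMap.range_comp_le_range f g)) ?_ hf hg
  · rintro _ ⟨x, rfl⟩
    exact ⟨x, rfl⟩
  · rw [LinearMap.exact_iff, Submodule.factor, Submodule.ker_mapQ, Submodule.range_mapQ,
      Submodule.comap_id]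

end Basic

section LongExact

variable {A B C : Type u} [AddCommGroup A] [Module R A] [AddCommGroup B] [Module R B]
  [AddCommGroup C] [Module R C]
variable (T M : Type u) [AddCommGroup T] [Module R T] [AddCommGroup M] [Module R M]
variable {f : A →ₗ[R] B} {g : B →ₗ[R] C} (h : IsShortExact f g)

include h

lemma covariant_mem₁ (i : ℕ) (hC : ∀ j, j + 1 = i → P (ExtM R T C j)) (hB : P (ExtM R T B i)) :
    P (ExtM R T A i) := by
  cases i with
  | zero => exact hP.of_injective _ (ExtM.map_zero_injective T h.injective) hB
  | succ i => exact hP.of_exact _ _ (ExtM.exact_δ_map T h i) (hC i rfl) hB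

lemma covariant_mem₂ (i : ℕ) (hA : P (ExtM R T A i)) (hC : P (ExtM R T C i)) :
    P (ExtM R T B i) :=
  hP.of_exact _ _ (ExtM.exact_map_map T h i) hA hC

lemma covariant_mem₃ (i : ℕ) (hB : P (ExtM R T B i)) (hA : P (ExtM R T A (i + 1))) :
    P (ExtM R T C i) :=
  hP.of_exact _ _ (ExtM.exact_map_δ T h i) hB hA

lemma contravariant_mem₂ (i : ℕ) (hA : P (ExtM R A M i)) (hC : P (ExtM R C M i)) :
    P (ExtM R B M i) :=
  hP.of_exact _ _ (ExtM.exact_comap_comap M h i) hC hA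

lemma contravariant_mem₃ (i : ℕ) (hA : ∀ j, j + 1 = i → P (ExtM R A M j))
    (hB : P (ExtM R B M i)) : P (ExtM R C M i) := by
  cases i with
  | zero => exact hP.of_injective _ (ExtM.comap_zero_injective M h.surjective) hB
  | succ i => exact hP.of_exact _ _ (ExtM.exact_coδ_comap M h i) (hA i rfl) hB

lemma ker_map_left_mem (i : ℕ) (hC : ∀ j, j + 1 = i → P (ExtM R T C j)) :
    P (LinearMap.ker (ExtM.map T f i)) := by
  cases i with
  | zero =>
    rw [LinearMap.ker_eq_bot.2 (ExtM.map_zero_injective T h.injective)]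
    exact hP.of_subsingleton
  | succ i => exact hP.ker_of_exact _ _ (ExtM.exact_δ_map T h i) (hC i rfl)

lemma ker_map_right_mem (i : ℕ) (hA : P (ExtM R T A i)) : P (LinearMap.ker (ExtM.map T g i)) :=
  hP.ker_of_exact _ _ (ExtM.exact_map_map T h i) hA

lemma ker_comap_left_mem (i : ℕ) (hC : P (ExtM R C M i)) :
    P (LinearMap.ker (ExtM.comap M f i)) :=
  hP.ker_of_exact _ _ (ExtM.exact_comap_comap M h i) hC

lemma ker_comap_right_mem (i : ℕ) (hA : ∀ j, j + 1 = i → P (ExtM R A M j)) :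
    P (LinearMap.ker (ExtM.comap M g i)) := by
  cases i with
  | zero =>
    rw [LinearMap.ker_eq_bot.2 (ExtM.comap_zero_injective M h.surjective)]
    exact hP.of_subsingleton
  | succ i => exact hP.ker_of_exact _ _ (ExtM.exact_coδ_comap M h i) (hA i rfl)

lemma coker_comap_left_mem (i : ℕ) (hC : P (ExtM R C M (i + 1))) :
    P (ExtM R A M i ⧸ LinearMap.range (ExtM.comap M f i)) :=
  hP.coker_of_exact _ _ (ExtM.exact_comap_coδ M h i) hC

lemma coker_comap_right_mem (i : ℕ) (hA : P (ExtM R A M i)) :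
    P (ExtM R B M i ⧸ LinearMap.range (ExtM.comap M g i)) :=
  hP.coker_of_exact _ _ (ExtM.exact_comap_comap M h i) hA

end LongExact

end IsSerreClass

section KilledModules

variable {R : Type u} [CommRing R] {M : Type u} [AddCommGroup M] [Module R M]

lemma mem_annihilator_ker_lsmul (y : R) :
    y ∈ Module.annihilator R (LinearMap.ker (LinearMap.lsmul R M y)) :=
  Module.mem_annihilator.2 fun m => Subtype.ext m.2

lemma mem_annihilator_quotient_range_lsmul (y : R) :
    y ∈ Module.annihilator R (M ⧸ LinearMap.range (LinearMap.lsmul R M y)) := by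
  refine Module.mem_annihilator.2 ((Submodule.mkQ_surjective _).forall.2 fun m => ?_)
  exact (Submodule.Quotient.mk_eq_zero _).2 ⟨m, rfl⟩

lemma annihilator_le_annihilator_submodule (N : Submodule R M) :
    Module.annihilator R M ≤ Module.annihilator R N :=
  N.subtype.annihilator_le_of_injective N.injective_subtype

lemma annihilator_le_annihilator_quotient (N : Submodule R M) :
    Module.annihilator R M ≤ Module.annihilator R (M ⧸ N) :=
  N.mkQ.annihilator_le_of_surjective N.mkQ_surjective

lemma lsmul_eq_zero_of_mem_annihilator {y : R} (hy : y ∈ Module.annihilator R M) :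
    LinearMap.lsmul R M y = 0 :=
  LinearMap.ext (Module.mem_annihilator.1 hy)

lemma subtype_comp_rangeRestrict_lsmul (y : R) :
    (LinearMap.range (LinearMap.lsmul R M y)).subtype ∘ₗ (LinearMap.lsmul R M y).rangeRestrict =
      LinearMap.lsmul R M y := rfl

variable (M)

/-- The identification `Hom_R(R/𝔞, M) = 0 :_M 𝔞` given by evaluation at `1`. -/
noncomputable def homQuotientEquivTorsionBySet (𝔞 : Ideal R) :
    ((R ⧸ 𝔞) →ₗ[R] M) ≃ₗ[R] Submodule.torsionBySet R M (𝔞 : Set R) :=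
  LinearEquiv.ofBijective
    ((LinearMap.applyₗ (1 : R ⧸ 𝔞)).codRestrict _ fun g =>
      (Submodule.mem_torsionBySet_iff _ _).2 fun a => by
        have : (a : R) • (1 : R ⧸ 𝔞) = 0 :=
          Module.mem_annihilator.1 (Ideal.annihilator_quotient.ge a.2) 1
        rw [LinearMap.applyₗ_apply_apply, ← map_smul, this, map_zero]) <| by
    refine ⟨fun g g' h => ?_, fun ⟨m, hm⟩ => ⟨𝔞.liftQ (LinearMap.toSpanSingleton R M m)
      fun a ha => (Submodule.mem_torsionBySet_iff _ _).1 hm ⟨a, ha⟩, Subtype.ext (one_smul R m)⟩⟩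
    have h1 : g 1 = g' 1 := congrArg Subtype.val h
    ext
    exact h1

/-- The identification `Ext^0_R(R/𝔞, M) = 0 :_M 𝔞`. -/
noncomputable def extZeroEquivTorsionBySet (𝔞 : Ideal R) :
    ExtM R (R ⧸ 𝔞) M 0 ≃ₗ[R] Submodule.torsionBySet R M (𝔞 : Set R) :=
  (ExtM.zeroEquiv _ _).trans (homQuotientEquivTorsionBySet M 𝔞)

end KilledModules

namespace IsSerreClass

variable {R : Type u} [CommRing R] {P : ∀ (X : Type u) [AddCommGroup X] [Module R X], Prop}
  (hP : IsSerreClass R P) (T M : Type u) [AddCommGroup T] [Module R T]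
  [AddCommGroup M] [Module R M]

include hP

lemma ext_mem_of_ker_lsmul_of_coker_lsmul {y : R} (hy : y ∈ Module.annihilator R T) (i : ℕ)
    (hker : P (ExtM R T (LinearMap.ker (LinearMap.lsmul R M y)) i))
    (hcoker : ∀ j, j + 1 = i → P (ExtM R T (M ⧸ LinearMap.range (LinearMap.lsmul R M y)) j)) :
    P (ExtM R T M i) := by
  have hmul : ExtM.map T (LinearMap.range (LinearMap.lsmul R M y)).subtype i ∘ₗ
      ExtM.map T (LinearMap.lsmul R M y).rangeRestrict i = 0 := by
    rw [← ExtM.map_comp, subtype_comp_rangeRestrict_lsmul, ExtM.map_lsmul, ← ExtM.comap_lsmul,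
      lsmul_eq_zero_of_mem_annihilator hy, ExtM.comap_zero_hom]
  refine hP.of_ker_of_eq_zero hmul (hP.ker_comp _ _ ?_ ?_)
  · exact hP.ker_map_right_mem T (isShortExact_ker_subtype_rangeRestrict _) i hker
  · exact hP.ker_map_left_mem T (isShortExact_subtype_mkQ _) i hcoker

lemma ext_mem_of_lt_of_ker_lsmul_of_coker_lsmul {y : R} (hy : y ∈ Module.annihilator R T)
    {m : ℕ}
    (hker : (∀ i < m, i < 2 → P (ExtM R T (LinearMap.ker (LinearMap.lsmul R M y)) i)) →
      ∀ i, P (ExtM R T (LinearMap.ker (LinearMap.lsmul R M y)) i))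
    (hcoker : (∀ i, i + 1 < m → P (ExtM R T (M ⧸ LinearMap.range (LinearMap.lsmul R M y)) i)) →
      ∀ i, P (ExtM R T (M ⧸ LinearMap.range (LinearMap.lsmul R M y)) i))
    (hM : ∀ i < m, P (ExtM R T M i)) (i : ℕ) : P (ExtM R T M i) := by
  have hS := isShortExact_ker_subtype_rangeRestrict (LinearMap.lsmul R M y)
  have hS' := isShortExact_subtype_mkQ (LinearMap.range (LinearMap.lsmul R M y))
  have ext_ker : ∀ i, P (ExtM R T (LinearMap.ker (LinearMap.lsmul R M y)) i) := by
    refine hker fun j hj hj2 => hP.covariant_mem₁ T hS j ?_ (hM j hj)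
    rintro k rfl
    obtain rfl : k = 0 := by lia
    exact hP.covariant_mem₁ T hS' 0 (by lia) (hM 0 (by lia))
  have ext_range : ∀ j < m, P (ExtM R T (LinearMap.range (LinearMap.lsmul R M y)) j) :=
    fun j hj => hP.covariant_mem₃ T hS j (hM j hj) (ext_ker _)
  have ext_coker := hcoker fun j hj =>
    hP.covariant_mem₃ T hS' j (hM j (by lia)) (ext_range _ hj)
  exact hP.ext_mem_of_ker_lsmul_of_coker_lsmul T M hy i (ext_ker i) fun j _ => ext_coker j

omit hP in
lemma comap_rangeRestrict_comp_comap_subtype_lsmul (y : R) (i : ℕ) :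
    ExtM.comap M (LinearMap.lsmul R T y).rangeRestrict i ∘ₗ
      ExtM.comap M (LinearMap.range (LinearMap.lsmul R T y)).subtype i =
    LinearMap.lsmul R (ExtM R T M i) y := by
  rw [← ExtM.comap_comp, subtype_comp_rangeRestrict_lsmul, ExtM.comap_lsmul]

lemma ker_lsmul_ext_mem (y : R) (i : ℕ)
    (hcoker : P (ExtM R (T ⧸ LinearMap.range (LinearMap.lsmul R T y)) M i))
    (hker : ∀ j, j + 1 = i → P (ExtM R (LinearMap.ker (LinearMap.lsmul R T y)) M j)) :
    P (LinearMap.ker (LinearMap.lsmul R (ExtM R T M i) y)) := by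
  rw [← comap_rangeRestrict_comp_comap_subtype_lsmul]
  exact hP.ker_comp _ _ (hP.ker_comap_left_mem M (isShortExact_subtype_mkQ _) i hcoker)
    (hP.ker_comap_right_mem M (isShortExact_ker_subtype_rangeRestrict _) i hker)

lemma coker_lsmul_ext_mem (y : R) (i : ℕ)
    (hcoker : P (ExtM R (T ⧸ LinearMap.range (LinearMap.lsmul R T y)) M (i + 1)))
    (hker : P (ExtM R (LinearMap.ker (LinearMap.lsmul R T y)) M i)) :
    P (ExtM R T M i ⧸ LinearMap.range (LinearMap.lsmul R (ExtM R T M i) y)) := by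
  rw [← comap_rangeRestrict_comp_comap_subtype_lsmul]
  exact hP.coker_comp _ _ (hP.coker_comap_left_mem M (isShortExact_subtype_mkQ _) i hcoker)
    (hP.coker_comap_right_mem M (isShortExact_ker_subtype_rangeRestrict _) i hker)

variable {M} [IsNoetherianRing R]

lemma ext_mem_of_le_radical_annihilator {𝔞 : Ideal R} [hT : Module.Finite R T]
    (h𝔞T : 𝔞 ≤ (Module.annihilator R T).radical) (i : ℕ)
    (h : ∀ j ≤ i, P (ExtM R (R ⧸ 𝔞) M j)) : P (ExtM R T M i) := by
  induction i using Nat.strong_induction_on generalizing T with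
  | _ i ih =>
  revert h𝔞T
  induction hT using IsNoetherianRing.induction_on_isQuotientEquivQuotientPrime R with
  | subsingleton N =>
    intro _
    have := ExtM.subsingleton_of_subsingleton (R := R) N M i
    exact hP.of_subsingleton
  | quotient N p e =>
    intro hN
    have hp : 𝔞 ≤ p.1 := by
      rwa [e.annihilator_eq, Ideal.annihilator_quotient, p.2.radical] at hN
    let q : R ⧸ 𝔞 →ₗ[R] R ⧸ p.1 := Submodule.factor hp
    have hker : 𝔞 ≤ (Module.annihilator R (LinearMap.ker q)).radical :=
      (Ideal.annihilator_quotient.ge.trans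
        (annihilator_le_annihilator_submodule (M := R ⧸ 𝔞) _)).trans Ideal.le_radical
    refine hP.of_equiv (ExtM.congr e.symm (LinearEquiv.refl R M) i) ?_
    refine hP.contravariant_mem₃ M (isShortExact_ker_subtype (Submodule.factor_surjective hp)) i
      (fun j hj => ?_) (h i le_rfl)
    exact ih j (by lia) _ hker fun k hk => h k (by lia)
  | exact N₁ N₂ N₃ f g hf hg hfg h₁ h₃ =>
    intro hN
    exact hP.contravariant_mem₂ M ⟨hf, hg, hfg⟩ i
      (h₁ (hN.trans (Ideal.radical_mono (f.annihilator_le_of_injective hf))))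
      (h₃ (hN.trans (Ideal.radical_mono (g.annihilator_le_of_surjective hg))))

lemma ext_quotient_mem_of_le_radical {𝔞 𝔟 : Ideal R} (h𝔞𝔟 : 𝔞 ≤ 𝔟.radical) (i : ℕ)
    (h : ∀ j ≤ i, P (ExtM R (R ⧸ 𝔞) M j)) : P (ExtM R (R ⧸ 𝔟) M i) :=
  hP.ext_mem_of_le_radical_annihilator _ (by rwa [Ideal.annihilator_quotient]) i h

lemma ker_coker_lsmul_ext_quotient_mem {𝔞 : Ideal R} {y : R}
    (h : ∀ i, P (ExtM R (R ⧸ (𝔞 ⊔ Ideal.span {y})) M i)) (i : ℕ) :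
    P (LinearMap.ker (LinearMap.lsmul R (ExtM R (R ⧸ 𝔞) M i) y)) ∧
      P (ExtM R (R ⧸ 𝔞) M i ⧸ LinearMap.range (LinearMap.lsmul R (ExtM R (R ⧸ 𝔞) M i) y)) := by
  have hann : 𝔞 ≤ Module.annihilator R (R ⧸ 𝔞) := Ideal.annihilator_quotient.ge
  have hker : 𝔞 ⊔ Ideal.span {y} ≤
      Module.annihilator R (LinearMap.ker (LinearMap.lsmul R (R ⧸ 𝔞) y)) :=
    sup_le (hann.trans (annihilator_le_annihilator_submodule _))
      ((Ideal.span_singleton_le_iff_mem _).2 (mem_annihilator_ker_lsmul y))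
  have hcoker : 𝔞 ⊔ Ideal.span {y} ≤
      Module.annihilator R ((R ⧸ 𝔞) ⧸ LinearMap.range (LinearMap.lsmul R (R ⧸ 𝔞) y)) :=
    sup_le (hann.trans (annihilator_le_annihilator_quotient _))
      ((Ideal.span_singleton_le_iff_mem _).2 (mem_annihilator_quotient_range_lsmul y))
  have ext_ker := fun j => hP.ext_mem_of_le_radical_annihilator _
    (hker.trans Ideal.le_radical) j fun k _ => h k
  have ext_coker := fun j => hP.ext_mem_of_le_radical_annihilator _
    (hcoker.trans Ideal.le_radical) j fun k _ => h k
  exact ⟨hP.ker_lsmul_ext_mem _ M y i (ext_coker i) fun j _ => ext_ker j,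
    hP.coker_lsmul_ext_mem _ M y i (ext_coker (i + 1)) (ext_ker i)⟩

lemma ext_quotient_mem_of_ext_quotient_sup_mem {J : Ideal R} (hJ : J ≤ Module.annihilator R M)
    (𝔞 : Ideal R) (h : ∀ i, P (ExtM R (R ⧸ (𝔞 ⊔ J)) M i)) (i : ℕ) : P (ExtM R (R ⧸ 𝔞) M i) := by
  induction J, (isNoetherianRing_iff_ideal_fg R).1 ‹_› J using Submodule.fg_induction
    generalizing 𝔞 i with
  | singleton x =>
    refine hP.of_ker_of_eq_zero ?_ (hP.ker_coker_lsmul_ext_quotient_mem h i).1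
    rw [← ExtM.map_lsmul,
      lsmul_eq_zero_of_mem_annihilator (hJ (Ideal.mem_span_singleton_self x)), ExtM.map_zero_hom]
  | sup J₁ J₂ _ _ ih₁ ih₂ =>
    rw [sup_le_iff] at hJ
    refine ih₁ hJ.1 𝔞 (ih₂ hJ.2 _ ?_) i
    rwa [sup_assoc]

end IsSerreClass

section ExtBound

variable {R : Type u} [CommRing R]

/-- For `𝔞`-torsion `M`, finite generation of `Ext^i(R/𝔞, M)` for `i ≤ n` implies it for all `i`.
Dimension shifting reduces the comparison of Hom-finiteness with cofiniteness of local cohomology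
to the case `n = 2` of this property. -/
def ExtBound (R : Type u) [CommRing R] (n : ℕ) (𝔞 : Ideal R) : Prop :=
  ∀ (M : Type u) [AddCommGroup M] [Module R M], IsTorsionIdeal 𝔞 M →
    (∀ i ≤ n, Module.Finite R (ExtM R (R ⧸ 𝔞) M i)) → ∀ i, Module.Finite R (ExtM R (R ⧸ 𝔞) M i)

variable [IsNoetherianRing R] {M : Type u} [AddCommGroup M] [Module R M]

lemma finite_ext_quotient_of_finite_ext_zero {I : Ideal R} (hI : I ≤ Module.annihilator R M)
    (h : Module.Finite R (ExtM R (R ⧸ I) M 0)) (i : ℕ) :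
    Module.Finite R (ExtM R (R ⧸ I) M i) := by
  have htop : Submodule.torsionBySet R M (I : Set R) = ⊤ :=
    (Module.isTorsionBySet_iff_torsionBySet_eq_top _).1
      ((Module.isTorsionBySet_iff_subset_annihilator R M).2 hI)
  have : Module.Finite R M := Module.Finite.equiv
    ((extZeroEquivTorsionBySet M I).trans ((LinearEquiv.ofEq _ _ htop).trans Submodule.topEquiv))
  exact ExtM.finite _ _ i

lemma finite_ext_quotient_span_pair (x y : R)
    (h : ∀ i ≤ 2, Module.Finite R (ExtM R (R ⧸ Ideal.span {x, y}) M i)) (i : ℕ) :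
    Module.Finite R (ExtM R (R ⧸ Ideal.span {x, y}) M i) := by
  have hP := isSerreClass_finite R
  have hx : x ∈ Module.annihilator R (R ⧸ Ideal.span {x, y}) :=
    Ideal.annihilator_quotient.ge (Ideal.subset_span (by simp))
  have hy : y ∈ Module.annihilator R (R ⧸ Ideal.span {x, y}) :=
    Ideal.annihilator_quotient.ge (Ideal.subset_span (by simp))
  have killed_by_xy : ∀ (L : Type u) [AddCommGroup L] [Module R L],
      x ∈ Module.annihilator R L → y ∈ Module.annihilator R L →
      Module.Finite R (ExtM R (R ⧸ Ideal.span {x, y}) L 0) →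
      ∀ i, Module.Finite R (ExtM R (R ⧸ Ideal.span {x, y}) L i) := fun L _ _ hLx hLy hL =>
    finite_ext_quotient_of_finite_ext_zero
      (Ideal.span_le.2 (Set.insert_subset hLx (Set.singleton_subset_iff.2 hLy))) hL
  have killed_by_x : ∀ (N : Type u) [AddCommGroup N] [Module R N],
      x ∈ Module.annihilator R N →
      (∀ i < 2, Module.Finite R (ExtM R (R ⧸ Ideal.span {x, y}) N i)) →
      ∀ i, Module.Finite R (ExtM R (R ⧸ Ideal.span {x, y}) N i) := fun N _ _ hN =>
    hP.ext_mem_of_lt_of_ker_lsmul_of_coker_lsmul _ N hy (m := 2)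
      (fun h => killed_by_xy _ (annihilator_le_annihilator_submodule _ hN)
        (mem_annihilator_ker_lsmul y) (h 0 (by lia) (by lia)))
      (fun h => killed_by_xy _ (annihilator_le_annihilator_quotient _ hN)
        (mem_annihilator_quotient_range_lsmul y) (h 0 (by lia)))
  exact hP.ext_mem_of_lt_of_ker_lsmul_of_coker_lsmul _ M hx (m := 3)
    (fun h => killed_by_x _ (mem_annihilator_ker_lsmul x) fun j hj => h j (by lia) hj)
    (fun h => killed_by_x _ (mem_annihilator_quotient_range_lsmul x) fun j hj => h j (by lia))
    (fun j hj => h j (by lia)) i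

lemma extBound_of_radical_eq_span_pair {𝔞 : Ideal R} (x y : R)
    (h : (Ideal.span {x, y}).radical = 𝔞.radical) : ExtBound R 2 𝔞 := by
  have hP := isSerreClass_finite R
  have h₁ : 𝔞 ≤ (Ideal.span {x, y}).radical := Ideal.le_radical.trans h.ge
  have h₂ : Ideal.span {x, y} ≤ 𝔞.radical := Ideal.le_radical.trans h.le
  intro M _ _ _ hM i
  refine hP.ext_quotient_mem_of_le_radical h₂ i fun j _ => ?_
  exact finite_ext_quotient_span_pair x y
    (fun k hk => hP.ext_quotient_mem_of_le_radical h₁ k fun l hl => hM l (hl.trans hk)) j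

end ExtBound

namespace IsTorsionIdeal

variable {R : Type u} [CommRing R] {𝔞 𝔟 : Ideal R} {M : Type u} [AddCommGroup M] [Module R M]

lemma mono (h𝔟𝔞 : 𝔟 ≤ 𝔞) (h : IsTorsionIdeal 𝔞 M) : IsTorsionIdeal 𝔟 M := fun m =>
  (h m).imp fun n hn a ha => hn a (Ideal.pow_right_mono h𝔟𝔞 n ha)

lemma submodule (h : IsTorsionIdeal 𝔞 M) (N : Submodule R M) : IsTorsionIdeal 𝔞 N := fun m =>
  (h m).imp fun _ hn a ha => Subtype.ext (hn a ha)

lemma quotient (h : IsTorsionIdeal 𝔞 M) (N : Submodule R M) : IsTorsionIdeal 𝔞 (M ⧸ N) :=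
  (Submodule.mkQ_surjective _).forall.2 fun m =>
    (h m).imp fun _ hn a ha => by rw [← map_smul, hn a ha, map_zero]

end IsTorsionIdeal

section Artinian

lemma exists_forall_ge_le_of_antitone {α : Type*} [PartialOrder α] [WellFoundedLT α]
    {G : ℕ → ℕ → α} (hG : ∀ k, Antitone fun n => G n k) (hG' : ∀ n, Antitone (G n)) :
    ∃ n, ∀ m ≥ n, ∀ k, G n k ≤ G m k := by
  have stabilizes : ∀ g : ℕ → α, Antitone g → ∃ n, ∀ m ≥ n, g n = g m := fun g hg =>
    WellFoundedGT.monotone_chain_condition (α := αᵒᵈ) ⟨g, hg⟩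
  obtain ⟨d, hd⟩ := stabilizes (fun j => G j j) fun i j hij => (hG' j hij).trans (hG i hij)
  choose c hc using fun k => stabilizes _ (hG k)
  refine ⟨d + (Finset.range d).sup c, fun m hm k => ?_⟩
  by_cases hk : k < d
  · have hck : c k ≤ (Finset.range d).sup c := Finset.le_sup (Finset.mem_range.2 hk)
    rw [← hc k _ (hck.trans (Nat.le_add_left _ _)), hc k m (by lia)]
  · calc G (d + (Finset.range d).sup c) k ≤ G d d := (hG k (by lia)).trans (hG' d (by lia))
      _ = G (max m k) (max m k) := hd _ (by lia)
      _ ≤ G m k := (hG' _ (le_max_right m k)).trans (hG k (le_max_left m k))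

variable {A : Type u} [CommRing A] {U : Type u} [AddCommGroup U] [Module A U]

/-- The `k`-th layer `x ^ k (N ∩ ker x ^ (k + 1))` of a submodule `N` along the filtration of `U`
by the kernels of the powers of `x`, as a submodule of `ker x`. -/
def kernelLayer (x : A) (N : Submodule A U) (k : ℕ) :
    Submodule A (LinearMap.ker (LinearMap.lsmul A U x)) :=
  ((N ⊓ LinearMap.ker (LinearMap.lsmul A U (x ^ (k + 1)))).map
    (LinearMap.lsmul A U (x ^ k))).submoduleOf _

lemma mem_kernelLayer {x : A} {N : Submodule A U} {k : ℕ}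
    {z : LinearMap.ker (LinearMap.lsmul A U x)} :
    z ∈ kernelLayer x N k ↔ ∃ u ∈ N, x ^ (k + 1) • u = 0 ∧ x ^ k • u = z := by
  simp only [kernelLayer, Submodule.submoduleOf, Submodule.mem_comap, Submodule.mem_map,
    Submodule.mem_inf, LinearMap.mem_ker, LinearMap.lsmul_apply, Submodule.subtype_apply, and_assoc]

lemma kernelLayer_mono (x : A) (k : ℕ) : Monotone fun N : Submodule A U => kernelLayer x N k := by
  intro N N' hN z hz
  obtain ⟨u, hu, hzu⟩ := mem_kernelLayer.1 hz
  exact mem_kernelLayer.2 ⟨u, hN hu, hzu⟩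

lemma antitone_kernelLayer (x : A) (N : Submodule A U) : Antitone (kernelLayer x N) := by
  refine antitone_nat_of_succ_le fun k z hz => ?_
  obtain ⟨u, hu, hxu, hzu⟩ := mem_kernelLayer.1 hz
  refine mem_kernelLayer.2 ⟨x • u, N.smul_mem _ hu, ?_, ?_⟩
  · rwa [smul_smul, ← pow_succ]
  · rwa [smul_smul, ← pow_succ]

lemma le_of_kernelLayer_le {x : A} (hx : ∀ u : U, ∃ n : ℕ, x ^ n • u = 0) {N N' : Submodule A U}
    (hN : N' ≤ N) (h : ∀ k, kernelLayer x N k ≤ kernelLayer x N' k) : N ≤ N' := by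
  intro u hu
  obtain ⟨n, hn⟩ := hx u
  induction n generalizing u with
  | zero => simp_all
  | succ k ih =>
    have hxu : x ^ k • u ∈ LinearMap.ker (LinearMap.lsmul A U x) := by
      rwa [LinearMap.mem_ker, LinearMap.lsmul_apply, smul_smul, ← pow_succ']
    obtain ⟨v, hv, -, hvu⟩ :=
      mem_kernelLayer.1 (h k (mem_kernelLayer.2 ⟨u, hu, hn, rfl⟩ : ⟨x ^ k • u, hxu⟩ ∈ _))
    have huv : u - v ∈ N' := ih (sub_mem hu (hN hv)) (by rw [smul_sub, hvu, sub_self])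
    simpa using add_mem huv hv

lemma isArtinian_of_isArtinian_ker_lsmul {x : A} (hx : ∀ u : U, ∃ n : ℕ, x ^ n • u = 0)
    [IsArtinian A (LinearMap.ker (LinearMap.lsmul A U x))] : IsArtinian A U := by
  rw [← monotone_stabilizes_iff_artinian]
  intro f
  have hf : Antitone fun n => OrderDual.ofDual (f n) := f.monotone
  obtain ⟨n, hn⟩ := exists_forall_ge_le_of_antitone
    (G := fun n => kernelLayer x (OrderDual.ofDual (f n)))
    (fun k => (kernelLayer_mono x k).comp_antitone hf) fun n => antitone_kernelLayer x _
  exact ⟨n, fun m hm => le_antisymm (f.monotone hm) (le_of_kernelLayer_le hx (hf hm) (hn m hm))⟩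

lemma isArtinian_of_isArtinian_torsionBySet {I : Ideal A} (hI : I.FG) (hU : IsTorsionIdeal I U)
    (h : IsArtinian A (Submodule.torsionBySet A U (I : Set A))) : IsArtinian A U := by
  induction I, hI using Submodule.fg_induction generalizing U with
  | singleton x =>
    rw [Submodule.torsionBySet_span_singleton_eq] at h
    have : IsArtinian A (LinearMap.ker (LinearMap.lsmul A U x)) := h
    refine isArtinian_of_isArtinian_ker_lsmul (x := x) fun u => (hU u).imp fun n hn => ?_
    exact hn _ (Ideal.pow_mem_pow (Ideal.mem_span_singleton_self x) n)
  | sup J₁ J₂ _ _ ih₁ ih₂ =>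
    refine ih₁ (hU.mono le_sup_left) (ih₂ ((hU.submodule _).mono le_sup_right) ?_)
    let W := Submodule.torsionBySet A (Submodule.torsionBySet A U (J₁ : Set A)) (J₂ : Set A)
    have hW : ∀ w : W, w.1.1 ∈ Submodule.torsionBySet A U ((J₁ ⊔ J₂ : Ideal A) : Set A) := by
      rintro ⟨⟨u, hu₁⟩, hu₂⟩
      rw [Submodule.mem_torsionBySet_iff]
      rintro ⟨a, ha⟩
      obtain ⟨a₁, ha₁, a₂, ha₂, rfl⟩ := Submodule.mem_sup.1 ha
      have h₁ : a₁ • u = 0 := (Submodule.mem_torsionBySet_iff _ _).1 hu₁ ⟨a₁, ha₁⟩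
      have h₂ : a₂ • u = 0 :=
        congrArg Subtype.val ((Submodule.mem_torsionBySet_iff _ _).1 hu₂ ⟨a₂, ha₂⟩)
      rw [add_smul, h₁, h₂, add_zero]
    refine isArtinian_of_injective (LinearMap.codRestrict _ (Submodule.subtype _ ∘ₗ W.subtype) hW)
      ((LinearMap.injective_codRestrict_iff hW).2 ?_)
    exact (Submodule.injective_subtype _).comp W.injective_subtype

end Artinian

section Secondary

variable {A : Type u} [CommRing A]

/-- A module is secondary if it is nonzero and every ring element acts on it either nilpotently
or surjectively. -/
def IsSecondary (A V : Type u) [CommRing A] [AddCommGroup V] [Module A V] : Prop :=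
  Nontrivial V ∧
    ∀ x : A, x ∈ (Module.annihilator A V).radical ∨ Function.Surjective (LinearMap.lsmul A V x)

lemma lsmul_pow (V : Type u) [AddCommGroup V] [Module A V] (x : A) (n : ℕ) :
    LinearMap.lsmul A V (x ^ n) = LinearMap.lsmul A V x ^ n :=
  map_pow (Algebra.lsmul A A V) x n

lemma IsSecondary.isPrime_radical_annihilator {V : Type u} [AddCommGroup V] [Module A V]
    (hV : IsSecondary A V) : (Module.annihilator A V).radical.IsPrime where
  ne_top' h := by
    rw [Ideal.radical_eq_top, Module.annihilator_eq_top_iff] at h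
    exact not_nontrivial_iff_subsingleton.2 h hV.1
  mem_or_mem' := by
    rintro x y ⟨n, hn⟩
    refine (hV.2 x).imp_right fun hx => ⟨n, Module.mem_annihilator.2 fun v => ?_⟩
    have hxn : Function.Surjective (LinearMap.lsmul A V (x ^ n)) := by
      rw [lsmul_pow, Module.End.coe_pow]
      exact hx.iterate n
    obtain ⟨w, rfl⟩ := hxn v
    rw [LinearMap.lsmul_apply, smul_smul, ← mul_pow, mul_comm]
    exact Module.mem_annihilator.1 hn w

variable {U : Type u} [AddCommGroup U] [Module A U]

lemma isSecondary_of_supIrred [IsArtinian A U] {V : Submodule A U} (hV : SupIrred V) :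
    IsSecondary A V := by
  refine ⟨(Submodule.nontrivial_iff_ne_bot).2 hV.ne_bot, fun x => ?_⟩
  obtain ⟨n, hn, hcodisj⟩ := ((Filter.eventually_ge_atTop 1).and
    (LinearMap.lsmul A V x).eventually_codisjoint_ker_pow_range_pow).exists
  rw [← lsmul_pow] at hcodisj
  have map_eq_iff : ∀ W : Submodule A V, W.map V.subtype = V ↔ W = ⊤ := fun W => by
    rw [← (Submodule.map_injective_of_injective V.injective_subtype).eq_iff,
      Submodule.map_subtype_top]
  have hsup : (LinearMap.ker (LinearMap.lsmul A V (x ^ n))).map V.subtype ⊔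
      (LinearMap.range (LinearMap.lsmul A V (x ^ n))).map V.subtype = V := by
    rw [← Submodule.map_sup, map_eq_iff, hcodisj.eq_top]
  refine (hV.2 hsup).imp (fun hker => ⟨n, ?_⟩) fun hrange => ?_
  · rw [map_eq_iff, LinearMap.ker_eq_top] at hker
    exact Module.mem_annihilator.2 (LinearMap.congr_fun hker)
  · rw [map_eq_iff, LinearMap.range_eq_top, lsmul_pow, Module.End.coe_pow] at hrange
    obtain ⟨k, rfl⟩ := Nat.exists_eq_add_of_le' hn
    rw [Function.iterate_succ'] at hrange
    exact hrange.of_comp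

lemma finite_quotient_range_lsmul_of_le_sup {F V : Submodule A U} {x : A} (hF : F.FG) (hFV : F ≤ V)
    (h : V ≤ F ⊔ V.map (LinearMap.lsmul A U x)) :
    Module.Finite A (V ⧸ LinearMap.range (LinearMap.lsmul A V x)) := by
  have : Module.Finite A F := Module.Finite.iff_fg.2 hF
  refine Module.Finite.of_surjective ((Submodule.mkQ _) ∘ₗ Submodule.inclusion hFV)
    ((Submodule.mkQ_surjective _).forall.2 fun ⟨v, hv⟩ => ?_)
  obtain ⟨f, hf, _, ⟨w, hw, rfl⟩, hsum⟩ := Submodule.mem_sup.1 (h hv)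
  refine ⟨⟨f, hf⟩, (Submodule.Quotient.eq _).2 ⟨-⟨w, hw⟩, Subtype.ext ?_⟩⟩
  simp [← hsum]

variable [IsNoetherianRing A]

lemma fg_of_le_radical_annihilator {I : Ideal A}
    (h : Module.Finite A (Submodule.torsionBySet A U (I : Set A))) {V : Submodule A U}
    (hV : I ≤ (Module.annihilator A V).radical) : V.FG := by
  have hP := isSerreClass_finite A
  have : Module.Finite A (Submodule.torsionBySet A U (Module.annihilator A V : Set A)) := by
    refine hP.of_equiv (extZeroEquivTorsionBySet U _) (hP.ext_quotient_mem_of_le_radical hV 0 ?_)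
    intro j hj
    obtain rfl := Nat.le_zero.1 hj
    exact hP.of_equiv (extZeroEquivTorsionBySet U I).symm h
  have hle : V ≤ Submodule.torsionBySet A U (Module.annihilator A V : Set A) := fun v hv =>
    (Submodule.mem_torsionBySet_iff _ _).2 fun a =>
      congrArg Subtype.val (Module.mem_annihilator.1 a.2 ⟨v, hv⟩)
  exact Module.Finite.iff_fg.1 (Module.Finite.of_injective _ (Submodule.inclusion_injective hle))

/-- Write `V` as a sum of secondary submodules: those whose associated prime contains `I` are
finitely generated, the others are divisible by every element outside that prime. -/
lemma exists_finset_primes_of_isArtinian [IsArtinian A U] {I : Ideal A}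
    (h : Module.Finite A (Submodule.torsionBySet A U (I : Set A))) (V : Submodule A U) :
    ∃ Ps : Finset (Ideal A), (∀ P ∈ Ps, P.IsPrime ∧ ¬ I ≤ P) ∧ ∀ x, (∀ P ∈ Ps, x ∉ P) →
      Module.Finite A (V ⧸ LinearMap.range (LinearMap.lsmul A V x)) := by
  classical
  obtain ⟨s, rfl, hs⟩ := exists_supIrred_decomposition V
  let rad := fun W : Submodule A U => (Module.annihilator A W).radical
  refine ⟨(s.filter fun W => ¬ I ≤ rad W).image rad, fun P hP => ?_, fun x hx => ?_⟩
  · obtain ⟨W, hW, rfl⟩ := Finset.mem_image.1 hP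
    rw [Finset.mem_filter] at hW
    exact ⟨(isSecondary_of_supIrred (hs hW.1)).isPrime_radical_annihilator, hW.2⟩
  · refine finite_quotient_range_lsmul_of_le_sup (F := (s.filter fun W => I ≤ rad W).sup id)
      (Submodule.fg_finset_sup _ _ fun W hW => ?_) (Finset.sup_mono (Finset.filter_subset _ _))
      (Finset.sup_le fun W hW => ?_)
    · exact fg_of_le_radical_annihilator h (Finset.mem_filter.1 hW).2
    · by_cases hIW : I ≤ rad W
      · exact le_sup_of_le_left (Finset.le_sup (f := id) (Finset.mem_filter.2 ⟨hW, hIW⟩))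
      · have hxW : x ∉ rad W := hx _ (Finset.mem_image_of_mem _ (Finset.mem_filter.2 ⟨hW, hIW⟩))
        refine le_sup_of_le_right fun w hw => ?_
        obtain ⟨v, hv⟩ := ((isSecondary_of_supIrred (hs hW)).2 x).resolve_left hxW ⟨w, hw⟩
        exact ⟨v, Finset.le_sup (f := id) hW v.2, congrArg Subtype.val hv⟩

end Secondary

section UpToTorsion

variable {R : Type u} [CommRing R] {M : Type u} [AddCommGroup M] [Module R M]

/-- `M` is finitely generated up to `S`-torsion: `M / F` is `S`-torsion for some finitely generated
submodule `F`. -/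
def FiniteUpToTorsion (S : Submonoid R) (M : Type u) [AddCommGroup M] [Module R M] : Prop :=
  ∃ F : Submodule R M, F.FG ∧ ∀ b : M, ∃ s ∈ S, s • b ∈ F

lemma exists_mem_forall_smul_eq_zero {S : Submonoid R} {F : Submodule R M} (hF : F.FG)
    (h : ∀ m ∈ F, ∃ s ∈ S, s • m = 0) : ∃ s ∈ S, ∀ m ∈ F, s • m = 0 := by
  classical
  obtain ⟨t, rfl⟩ := hF
  choose! s hs hsm using fun m (hm : m ∈ t) => h m (Submodule.subset_span hm)
  refine ⟨∏ m ∈ t, s m, Submonoid.prod_mem _ hs, ?_⟩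
  suffices Submodule.span R t ≤ LinearMap.ker (LinearMap.lsmul R M (∏ m ∈ t, s m)) from
    fun m hm => this hm
  refine Submodule.span_le.2 fun m hm => ?_
  rw [SetLike.mem_coe, LinearMap.mem_ker, LinearMap.lsmul_apply, ← Finset.prod_erase_mul _ _ hm,
    mul_smul, hsm m hm, smul_zero]

end UpToTorsion

section Localization

variable {R : Type u} [CommRing R] (S : Submonoid R) {A : Type u} [CommRing A] [Algebra R A]
  [IsLocalization S A] {M U : Type u} [AddCommGroup M] [Module R M] [AddCommGroup U] [Module R U]
  [Module A U] [IsScalarTower R A U] (f : M →ₗ[R] U) [IsLocalizedModule S f]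

include f in
lemma exists_smul_mem_of_mem_localized' {W : Submodule R M} {b : M}
    (h : f b ∈ W.localized' A S f) : ∃ s ∈ S, s • b ∈ W := by
  obtain ⟨m, hm, s, hs⟩ := (Submodule.mem_localized' A S f W _).1 h
  rw [IsLocalizedModule.mk'_eq_iff, Submonoid.smul_def, ← map_smul] at hs
  obtain ⟨c, hc⟩ := (IsLocalizedModule.eq_iff_exists S f).1 hs
  refine ⟨c * s, (c * s).2, ?_⟩
  rw [mul_smul, ← Submonoid.smul_def c, ← hc]
  exact W.smul_mem _ hm

include f in
lemma finiteUpToTorsion_iff_finite : FiniteUpToTorsion S M ↔ Module.Finite A U := by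
  classical
  refine ⟨fun ⟨F, hF, hMF⟩ => ?_, fun ⟨t, ht⟩ => ?_⟩
  · have : Module.Finite R F := Module.Finite.iff_fg.2 hF
    have localized_top : F.localized' A S f = ⊤ := by
      refine Submodule.eq_top_iff'.2 fun u => ?_
      obtain ⟨⟨m, s⟩, rfl⟩ := IsLocalizedModule.mk'_surjective S f u
      obtain ⟨c, hc, hcm⟩ := hMF m
      exact ⟨c • m, hcm, ⟨c, hc⟩ * s, IsLocalizedModule.mk'_cancel_left (f := f) m ⟨c, hc⟩ s⟩
    have := Module.Finite.of_isLocalizedModule S (Rₚ := A) (F.toLocalized' A S f)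
    exact ⟨localized_top ▸ Module.Finite.iff_fg.1 this⟩
  · choose g hg using fun u => IsLocalizedModule.mk'_surjective S f u
    have localized_top :
        ⊤ ≤ (Submodule.span R (t.image fun u => (g u).1 : Set M)).localized' A S f := by
      rw [← ht, Submodule.span_le]
      exact fun u hu => ⟨(g u).1, Submodule.subset_span (Finset.mem_coe.2
        (Finset.mem_image_of_mem _ hu)), (g u).2, hg u⟩
    exact ⟨_, ⟨_, rfl⟩, fun b =>
      exists_smul_mem_of_mem_localized' S (A := A) f (localized_top Submodule.mem_top)⟩

omit [IsLocalization S A] in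
include S f in
lemma IsTorsionIdeal.of_isLocalizedModule {𝔞 : Ideal R} (hM : IsTorsionIdeal 𝔞 M) :
    IsTorsionIdeal (𝔞.map (algebraMap R A)) U := by
  intro u
  obtain ⟨⟨m, s⟩, rfl⟩ := IsLocalizedModule.mk'_surjective S f u
  obtain ⟨n, hn⟩ := hM m
  have map_le : (𝔞 ^ n).map (algebraMap R A) ≤
      Ideal.torsionOf A U (IsLocalizedModule.mk' f m s) := by
    refine Ideal.map_le_iff_le_comap.2 fun b hb => ?_
    rw [Ideal.mem_comap, Ideal.mem_torsionOf_iff, algebraMap_smul, ← IsLocalizedModule.mk'_smul,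
      hn b hb, IsLocalizedModule.mk'_zero]
  exact ⟨n, fun a ha => map_le (Ideal.map_pow (algebraMap R A) 𝔞 n ▸ ha)⟩

lemma localized'_torsionBySet {𝔞 : Ideal R} (h𝔞 : 𝔞.FG) :
    (Submodule.torsionBySet R M (𝔞 : Set R)).localized' A S f =
      Submodule.torsionBySet A U (𝔞.map (algebraMap R A) : Set A) := by
  ext u
  obtain ⟨⟨m, s⟩, rfl⟩ := IsLocalizedModule.mk'_surjective S f u
  rw [Function.uncurry_apply_pair, Submodule.mem_localized']
  constructor
  · rintro ⟨m', hm', s', hms⟩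
    have map_le : 𝔞.map (algebraMap R A) ≤
        Ideal.torsionOf A U (IsLocalizedModule.mk' f m s) := by
      refine Ideal.map_le_iff_le_comap.2 fun b hb => ?_
      rw [Ideal.mem_comap, Ideal.mem_torsionOf_iff, algebraMap_smul, ← hms,
        ← IsLocalizedModule.mk'_smul, (Submodule.mem_torsionBySet_iff _ _).1 hm' ⟨b, hb⟩,
        IsLocalizedModule.mk'_zero]
    exact (Submodule.mem_torsionBySet_iff _ _).2 fun a => map_le a.2
  · intro hu
    obtain ⟨c, hc, hcm⟩ :
        ∃ c ∈ S, ∀ z ∈ Submodule.map (LinearMap.toSpanSingleton R M m) 𝔞, c • z = 0 := by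
      refine exists_mem_forall_smul_eq_zero (Submodule.FG.map _ h𝔞) ?_
      rintro _ ⟨a, ha, rfl⟩
      have hau := (Submodule.mem_torsionBySet_iff _ _).1 hu
        ⟨algebraMap R A a, Ideal.mem_map_of_mem _ ha⟩
      rw [algebraMap_smul, ← IsLocalizedModule.mk'_smul, IsLocalizedModule.mk'_eq_zero'] at hau
      exact hau.elim fun c hc => ⟨c, c.2, hc⟩
    refine ⟨c • m, (Submodule.mem_torsionBySet_iff _ _).2 fun a => ?_, ⟨c, hc⟩ * s,
      IsLocalizedModule.mk'_cancel_left (f := f) m ⟨c, hc⟩ s⟩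
    rw [smul_comm]
    exact hcm _ ⟨a, a.2, rfl⟩

lemma localized'_range_lsmul (x : R) :
    (LinearMap.range (LinearMap.lsmul R M x)).localized' A S f =
      LinearMap.range (LinearMap.lsmul A U (algebraMap R A x)) := by
  ext u
  rw [Submodule.mem_localized']
  constructor
  · rintro ⟨_, ⟨m, rfl⟩, s, rfl⟩
    refine ⟨IsLocalizedModule.mk' f m s, ?_⟩
    rw [LinearMap.lsmul_apply, LinearMap.lsmul_apply, algebraMap_smul, IsLocalizedModule.mk'_smul]
  · rintro ⟨v, rfl⟩
    obtain ⟨⟨m, s⟩, rfl⟩ := IsLocalizedModule.mk'_surjective S f v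
    refine ⟨_, ⟨m, rfl⟩, s, ?_⟩
    rw [LinearMap.lsmul_apply, LinearMap.lsmul_apply, algebraMap_smul, IsLocalizedModule.mk'_smul,
      Function.uncurry_apply_pair]

include f in
lemma finiteUpToTorsion_quotient_range_lsmul_iff (x : R) :
    FiniteUpToTorsion S (M ⧸ LinearMap.range (LinearMap.lsmul R M x)) ↔
      Module.Finite A (U ⧸ LinearMap.range (LinearMap.lsmul A U (algebraMap R A x))) := by
  rw [finiteUpToTorsion_iff_finite S (A := A)
    ((LinearMap.range (LinearMap.lsmul R M x)).toLocalizedQuotient' A S f)]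
  exact Module.Finite.equiv_iff (Submodule.quotEquivOfEq _ _ (localized'_range_lsmul S f x))

end Localization

section Superficial

variable {R : Type u} [CommRing R] {A : Type u} [CommRing A] [Algebra R A] [IsNoetherianRing A]
  {M U : Type u} [AddCommGroup M] [Module R M] [AddCommGroup U] [Module A U]

lemma exists_mem_finite_quotient_range_lsmul [IsArtinian A U] {𝔞 : Ideal R}
    (h : Module.Finite A (Submodule.torsionBySet A U (𝔞.map (algebraMap R A) : Set A)))
    (V : Submodule A U) : ∃ x ∈ 𝔞,
      Module.Finite A (V ⧸ LinearMap.range (LinearMap.lsmul A V (algebraMap R A x))) := by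
  obtain ⟨Ps, hPs, finite_of_forall_notMem⟩ := exists_finset_primes_of_isArtinian h V
  obtain ⟨x, hx, hxP⟩ : ∃ x ∈ 𝔞, ∀ P ∈ Ps, algebraMap R A x ∉ P := by
    by_contra! h_covered
    obtain ⟨P, hP, h𝔞P⟩ := (Ideal.subset_union_prime (s := Ps) (I := 𝔞)
      (f := fun P => P.comap (algebraMap R A)) ⊥ ⊥ fun P hP _ _ => (hPs P hP).1.comap _).1
        fun x hx => Set.mem_iUnion₂.2 (by simpa using h_covered x hx)
    exact (hPs P hP).2 (Ideal.map_le_iff_le_comap.2 h𝔞P)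
  exact ⟨x, hx, finite_of_forall_notMem _ hxP⟩

variable (S : Submonoid R) [IsLocalization S A] [Module R U] [IsScalarTower R A U]
  (f : M →ₗ[R] U) [IsLocalizedModule S f] {𝔞 : Ideal R}

include f in
/-- The element `x` of the step is superficial for the localization `V` of `N`: either `V` is
killed by `x`, or the part of `N` killed by `x` has a smaller localization. -/
lemma submodule_induction_of_isArtinian [IsArtinian A U]
    (h : Module.Finite A (Submodule.torsionBySet A U (𝔞.map (algebraMap R A) : Set A)))
    {motive : Submodule R M → Prop}
    (step : ∀ N : Submodule R M, ∀ x ∈ 𝔞,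
      FiniteUpToTorsion S (N ⧸ LinearMap.range (LinearMap.lsmul R N x)) →
      (motive ((LinearMap.ker (LinearMap.lsmul R N x)).map N.subtype) ∨ FiniteUpToTorsion S N) →
      motive N) (N : Submodule R M) : motive N := by
  induction hV : N.localized' A S f using IsArtinian.induction generalizing N with
  | _ V ih
  subst hV
  obtain ⟨x, hx, finite_quotient⟩ := exists_mem_finite_quotient_range_lsmul h (N.localized' A S f)
  refine step N x hx
    ((finiteUpToTorsion_quotient_range_lsmul_iff S (N.toLocalized' A S f) x).2 finite_quotient) ?_
  have localized_ker_le :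
      ((LinearMap.ker (LinearMap.lsmul R N x)).map N.subtype).localized' A S f ≤
        N.localized' A S f :=
    (Submodule.localized'gi A S f).gc.monotone_l (Submodule.map_subtype_le N _)
  refine localized_ker_le.lt_or_eq.imp (fun hlt => ih _ hlt _ rfl) fun heq => ?_
  have range_eq_bot :
      LinearMap.range (LinearMap.lsmul A (N.localized' A S f) (algebraMap R A x)) = ⊥ := by
    refine LinearMap.range_eq_bot.2 (LinearMap.ext fun v => Subtype.ext ?_)
    obtain ⟨_, ⟨n, hn, rfl⟩, s, hs⟩ := (Submodule.mem_localized' A S f _ _).1 (heq.ge v.2)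
    have hxn : x • (n : M) = 0 := congrArg Subtype.val hn
    rw [LinearMap.lsmul_apply, Submodule.coe_smul, algebraMap_smul, ← hs,
      ← IsLocalizedModule.mk'_smul, Submodule.subtype_apply, hxn, IsLocalizedModule.mk'_zero,
      LinearMap.zero_apply, Submodule.coe_zero]
  rw [finiteUpToTorsion_iff_finite S (A := A) (N.toLocalized' A S f)]
  exact (Module.Finite.equiv_iff (Submodule.quotEquivOfEqBot _ range_eq_bot)).1 finite_quotient

variable {P : ∀ (X : Type u) [AddCommGroup X] [Module R X], Prop} (hP : IsSerreClass R P)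

include hP in
lemma IsSerreClass.ext_quotient_mem_of_finiteUpToTorsion [IsNoetherianRing R] {S : Submonoid R}
    {m : ℕ} (base : ∀ (C : Type u) [AddCommGroup C] [Module R C], IsTorsionIdeal 𝔞 C →
      (∀ c : C, ∃ s ∈ S, s • c = 0) → (∀ i, i + 1 < m → P (ExtM R (R ⧸ 𝔞) C i)) →
      ∀ i, P (ExtM R (R ⧸ 𝔞) C i))
    (hM : IsTorsionIdeal 𝔞 M) (hSM : FiniteUpToTorsion S M)
    (h : ∀ i, i + 1 < m → P (ExtM R (R ⧸ 𝔞) M i)) (i : ℕ) : P (ExtM R (R ⧸ 𝔞) M i) := by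
  obtain ⟨F, hF, hMF⟩ := hSM
  have : Module.Finite R F := Module.Finite.iff_fg.2 hF
  have ext_F : ∀ j, P (ExtM R (R ⧸ 𝔞) F j) := fun j => hP.of_finite _ (ExtM.finite _ _ j)
  have hS := isShortExact_subtype_mkQ F
  refine hP.covariant_mem₂ _ hS i (ext_F i) (base _ (hM.quotient F)
    ((Submodule.mkQ_surjective _).forall.2 fun b => ?_)
    (fun j hj => hP.covariant_mem₃ _ hS j (h j hj) (ext_F (j + 1))) i)
  obtain ⟨s, hs, hsb⟩ := hMF b
  exact ⟨s, hs, by rw [← map_smul]; exact (Submodule.Quotient.mk_eq_zero F).2 hsb⟩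

include hP f in
/-- Multiplication by a superficial element reduces the finiteness of `Ext` to `S`-torsion modules,
at the cost of one degree in the hypothesis. -/
lemma IsSerreClass.ext_quotient_mem_of_isArtinian_torsionBySet [IsNoetherianRing R] {m : ℕ}
    (hm : m ≤ 2) (base : ∀ (C : Type u) [AddCommGroup C] [Module R C], IsTorsionIdeal 𝔞 C →
      (∀ c : C, ∃ s ∈ S, s • c = 0) → (∀ i, i + 1 < m → P (ExtM R (R ⧸ 𝔞) C i)) →
      ∀ i, P (ExtM R (R ⧸ 𝔞) C i))
    (hM : IsTorsionIdeal 𝔞 M)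
    (hart : IsArtinian A (Submodule.torsionBySet A U (𝔞.map (algebraMap R A) : Set A)))
    (hfin : Module.Finite A (Submodule.torsionBySet A U (𝔞.map (algebraMap R A) : Set A)))
    (h : ∀ i < m, P (ExtM R (R ⧸ 𝔞) M i)) (i : ℕ) : P (ExtM R (R ⧸ 𝔞) M i) := by
  have : IsArtinian A U := isArtinian_of_isArtinian_torsionBySet (IsNoetherian.noetherian _)
    (hM.of_isLocalizedModule S f) hart
  suffices ∀ N : Submodule R M, (∀ i < m, P (ExtM R (R ⧸ 𝔞) N i)) →
      ∀ i, P (ExtM R (R ⧸ 𝔞) N i) from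
    hP.of_equiv (ExtM.congr (LinearEquiv.refl R (R ⧸ 𝔞)) Submodule.topEquiv i) (this ⊤ (fun j hj =>
      hP.of_equiv (ExtM.congr (LinearEquiv.refl R (R ⧸ 𝔞)) Submodule.topEquiv.symm j) (h j hj)) i)
  refine submodule_induction_of_isArtinian S f hfin ?_
  rintro N x hx hxN (ker_mem | hN) hExt
  · have e := fun j => ExtM.congr (LinearEquiv.refl R (R ⧸ 𝔞))
      (Submodule.equivSubtypeMap N (LinearMap.ker (LinearMap.lsmul R N x))) j
    exact hP.ext_mem_of_lt_of_ker_lsmul_of_coker_lsmul _ _ (Ideal.annihilator_quotient.ge hx)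
      (fun hker j => hP.of_equiv (e j).symm
        (ker_mem (fun k hk => hP.of_equiv (e k) (hker k hk (by lia))) j))
      (hP.ext_quotient_mem_of_finiteUpToTorsion base ((hM.submodule N).quotient _) hxN) hExt
  · exact hP.ext_quotient_mem_of_finiteUpToTorsion base (hM.submodule N) hN
      fun j hj => hExt j (by lia)

end Superficial

section Dimension

variable {R : Type u} [CommRing R]

/-- `dim R/𝔞 ≤ n`, phrased through chains of primes. -/
def DimLE : ℕ → Ideal R → Prop
  | 0, 𝔞 => ∀ p : Ideal R, p.IsPrime → 𝔞 ≤ p → p.IsMaximal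
  | n + 1, 𝔞 => ∀ p q : Ideal R, p.IsPrime → q.IsPrime → 𝔞 ≤ p → p < q → DimLE n q

/-- The elements outside all minimal primes of `𝔞` that are not maximal: those `y` for which
`dim R/(𝔞, y) < dim R/𝔞`, unless `dim R/𝔞 = 0`. -/
def minimalPrimesCompl (𝔞 : Ideal R) : Submonoid R where
  carrier := {s | ∀ p ∈ 𝔞.minimalPrimes, ¬ p.IsMaximal → s ∉ p}
  one_mem' p hp _ := (Ideal.ne_top_iff_one p).1 hp.1.1.ne_top
  mul_mem' hs ht p hp hpm hst := (hp.1.1.mem_or_mem hst).elim (hs p hp hpm) (ht p hp hpm)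

lemma DimLE.sup_span_singleton {n : ℕ} {𝔞 : Ideal R} (h : DimLE (n + 1) 𝔞) {y : R}
    (hy : y ∈ minimalPrimesCompl 𝔞) : DimLE n (𝔞 ⊔ Ideal.span {y}) := by
  have isMaximal_or_dimLE : ∀ p : Ideal R, p.IsPrime → 𝔞 ⊔ Ideal.span {y} ≤ p →
      p.IsMaximal ∨ DimLE n p := by
    intro p hp hyp
    obtain ⟨p₀, hp₀, hp₀p⟩ := Ideal.exists_minimalPrimes_le (le_sup_left.trans hyp)
    rcases hp₀p.lt_or_eq with hlt | rfl
    · exact Or.inr (h p₀ p hp₀.1.1 hp hp₀.1.2 hlt)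
    · by_contra! hcon
      exact hy p₀ hp₀ hcon.1 (hyp (Ideal.mem_sup_right (Ideal.mem_span_singleton_self y)))
  cases n with
  | zero =>
    intro p hp hyp
    exact (isMaximal_or_dimLE p hp hyp).elim id fun hdim => hdim p hp le_rfl
  | succ n =>
    intro p q hp hq hyp hpq
    rcases isMaximal_or_dimLE p hp hyp with hmax | hdim
    · exact absurd (hmax.eq_of_le hq.ne_top hpq.le) hpq.ne
    · exact hdim p q hp hq le_rfl hpq

variable [IsNoetherianRing R]

lemma isArtinianRing_quotient_of_dimLE {𝔞 : Ideal R} (h : DimLE 0 𝔞) :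
    IsArtinianRing (R ⧸ 𝔞) := by
  rw [isArtinianRing_iff_isNoetherianRing_krullDimLE_zero]
  refine ⟨inferInstance, Ring.krullDimLE_zero_iff.2 fun q hq => ?_⟩
  have comap_isMaximal : (q.comap (Ideal.Quotient.mk 𝔞)).IsMaximal :=
    h _ (hq.comap _) (Ideal.mk_ker.ge.trans (Ideal.comap_mono bot_le))
  exact Ideal.isMaximal_of_isIntegral_of_isMaximal_comap' _
    (RingHom.isIntegral_of_surjective _ Ideal.Quotient.mk_surjective) q comap_isMaximal

lemma exists_le_of_disjoint_minimalPrimesCompl {𝔞 𝔟 q : Ideal R}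
    (hq : Disjoint (minimalPrimesCompl 𝔞 ⊓ minimalPrimesCompl 𝔟 : Set R) q) :
    ∃ p ∈ 𝔞.minimalPrimes ∪ 𝔟.minimalPrimes, ¬ p.IsMaximal ∧ q ≤ p := by
  have finite_nonmaximal : {p ∈ 𝔞.minimalPrimes ∪ 𝔟.minimalPrimes | ¬ p.IsMaximal}.Finite :=
    ((Ideal.finite_minimalPrimes_of_isNoetherianRing R 𝔞).union
      (Ideal.finite_minimalPrimes_of_isNoetherianRing R 𝔟)).subset fun _ hp => hp.1
  obtain ⟨p, ⟨hp, hpm⟩, hqp⟩ := (Ideal.subset_union_prime_finite finite_nonmaximal (f := id) ⊥ ⊥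
    (fun p hp _ _ => hp.1.elim (fun h => h.1.1) fun h => h.1.1) (I := q)).1 fun x hx => by
      by_contra hcon
      have notMem : ∀ p ∈ 𝔞.minimalPrimes ∪ 𝔟.minimalPrimes, ¬ p.IsMaximal → x ∉ p :=
        fun p hp hpm hxp => hcon (Set.mem_iUnion₂.2 ⟨p, ⟨hp, hpm⟩, hxp⟩)
      exact Set.disjoint_left.1 hq
        ⟨fun p hp => notMem p (Or.inl hp), fun p hp => notMem p (Or.inr hp)⟩ hx
  exact ⟨p, hp, hpm, hqp⟩

lemma dimLE_zero_map_algebraMap (𝔞 : Ideal R) (A : Type u) [CommRing A] [Algebra R A]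
    [IsLocalization (minimalPrimesCompl 𝔞) A] : DimLE 0 (𝔞.map (algebraMap R A)) := by
  intro Q hQ h𝔞Q
  obtain ⟨Q', hQ', hle⟩ := Q.exists_le_maximal hQ.ne_top
  have under_prime := fun (J : Ideal A) (hJ : J.IsPrime) =>
    (IsLocalization.isPrime_iff_isPrime_disjoint (minimalPrimesCompl 𝔞) A J).1 hJ
  obtain ⟨p, hp, -, hQ'p⟩ := exists_le_of_disjoint_minimalPrimesCompl (𝔞 := 𝔞) (𝔟 := 𝔞)
    (by simpa only [inf_idem] using (under_prime Q' hQ'.isPrime).2)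
  rw [Set.union_self] at hp
  have under_le : Q.under R ≤ Q'.under R := Ideal.comap_mono hle
  have le_under : p ≤ Q.under R :=
    hp.2 ⟨(under_prime Q hQ).1, Ideal.map_le_iff_le_comap.1 h𝔞Q⟩ (under_le.trans hQ'p)
  have under_eq : Q.under R = Q'.under R := le_antisymm under_le (hQ'p.trans le_under)
  have map_under := IsLocalization.map_under (minimalPrimesCompl 𝔞) A
  rw [← map_under Q, under_eq, map_under Q']
  exact hQ'

end Dimension

section DimensionOne

variable {R : Type u} [CommRing R] {𝔞 : Ideal R} {M : Type u} [AddCommGroup M] [Module R M]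

lemma isArtinian_of_le_annihilator {𝔟 : Ideal R} [IsArtinianRing (R ⧸ 𝔟)] [Module.Finite R M]
    (h : 𝔟 ≤ Module.annihilator R M) : IsArtinian R M := by
  have htors : Module.IsTorsionBySet R M (𝔟 : Set R) :=
    (Module.isTorsionBySet_iff_subset_annihilator R M).2 h
  let _ := htors.module
  have : IsScalarTower R (R ⧸ 𝔟) M := htors.isScalarTower
  have : Module.Finite (R ⧸ 𝔟) M := Module.Finite.of_restrictScalars_finite R _ _
  have : IsArtinian (R ⧸ 𝔟) M := inferInstance
  exact isArtinian_of_surjective_algebraMap (R := R ⧸ 𝔟) Ideal.Quotient.mk_surjective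

lemma le_annihilator_torsionBySet (𝔞 : Ideal R) (M : Type u) [AddCommGroup M] [Module R M] :
    𝔞 ≤ Module.annihilator R (Submodule.torsionBySet R M (𝔞 : Set R)) :=
  (Module.isTorsionBySet_iff_subset_annihilator _ _).1 (Submodule.torsionBySet_isTorsionBySet _)

lemma finite_torsionBySet_of_finiteUpToTorsion [IsNoetherianRing R] (S : Submonoid R) {A : Type u}
    [CommRing A] [Algebra R A] [IsLocalization S A] {U : Type u} [AddCommGroup U] [Module R U]
    [Module A U] [IsScalarTower R A U] (f : M →ₗ[R] U) [IsLocalizedModule S f]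
    (h : FiniteUpToTorsion S (Submodule.torsionBySet R M (𝔞 : Set R))) :
    Module.Finite A (Submodule.torsionBySet A U (𝔞.map (algebraMap R A) : Set A)) := by
  rw [finiteUpToTorsion_iff_finite S (A := A)
    ((Submodule.torsionBySet R M (𝔞 : Set R)).toLocalized' A S f)] at h
  exact (Module.Finite.equiv_iff
    (LinearEquiv.ofEq _ _ (localized'_torsionBySet S f (IsNoetherian.noetherian 𝔞)))).1 h

variable [IsNoetherianRing R]

lemma finite_ext_quotient_of_isArtinian_torsionBySet (hM : IsTorsionIdeal 𝔞 M)
    (hart : IsArtinian R (Submodule.torsionBySet R M (𝔞 : Set R)))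
    (hfin : Module.Finite R (Submodule.torsionBySet R M (𝔞 : Set R))) (i : ℕ) :
    Module.Finite R (ExtM R (R ⧸ 𝔞) M i) := by
  have : IsLocalization (⊥ : Submonoid R) R := IsLocalization.of_le_isUnit bot_le
  have := isLocalizedModule_id (⊥ : Submonoid R) M R
  have map_eq : 𝔞.map (algebraMap R R) = 𝔞 := Ideal.map_id 𝔞
  refine (isSerreClass_finite R).ext_quotient_mem_of_isArtinian_torsionBySet (A := R)
    (⊥ : Submonoid R) (LinearMap.id : M →ₗ[R] M) (m := 1) one_le_two (fun C _ _ _ hC _ j => ?_) hM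
    (by rwa [map_eq]) (by rwa [map_eq]) (fun j hj => ?_) i
  · have : Subsingleton C := subsingleton_of_forall_eq 0 fun c => by simpa using hC c
    exact ExtM.finite (R ⧸ 𝔞) C j
  · obtain rfl : j = 0 := by lia
    exact Module.Finite.equiv (extZeroEquivTorsionBySet M 𝔞).symm

lemma IsSerreClass.ext_quotient_mem_of_minimalPrimesCompl
    {P : ∀ (X : Type u) [AddCommGroup X] [Module R X], Prop} (hP : IsSerreClass R P)
    (finiteUpToTorsion_of_mem : ∀ (X : Type u) [AddCommGroup X] [Module R X], P X →
      FiniteUpToTorsion (minimalPrimesCompl 𝔞) X)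
    (base : ∀ (C : Type u) [AddCommGroup C] [Module R C], IsTorsionIdeal 𝔞 C →
      (∀ c : C, ∃ s ∈ minimalPrimesCompl 𝔞, s • c = 0) →
      P (Submodule.torsionBySet R C (𝔞 : Set R)) → ∀ i, P (ExtM R (R ⧸ 𝔞) C i))
    (hM : IsTorsionIdeal 𝔞 M) (h : ∀ i < 2, P (ExtM R (R ⧸ 𝔞) M i)) (i : ℕ) :
    P (ExtM R (R ⧸ 𝔞) M i) := by
  let A := Localization (minimalPrimesCompl 𝔞)
  let f := LocalizedModule.mkLinearMap (minimalPrimesCompl 𝔞) M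
  have : IsNoetherianRing A := IsLocalization.isNoetherianRing (minimalPrimesCompl 𝔞) A ‹_›
  have hfin := finite_torsionBySet_of_finiteUpToTorsion (minimalPrimesCompl 𝔞) (A := A) f
    (finiteUpToTorsion_of_mem _ (hP.of_equiv (extZeroEquivTorsionBySet M 𝔞) (h 0 two_pos)))
  have := isArtinianRing_quotient_of_dimLE (dimLE_zero_map_algebraMap 𝔞 A)
  exact hP.ext_quotient_mem_of_isArtinian_torsionBySet (A := A) (minimalPrimesCompl 𝔞) f le_rfl
    (fun C _ _ hC hSC hC0 => base C hC hSC
      (hP.of_equiv (extZeroEquivTorsionBySet C 𝔞) (hC0 0 one_lt_two)))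
    hM (isArtinian_of_le_annihilator (le_annihilator_torsionBySet _ _)) hfin h i

lemma extBound_of_dimLE_one (h𝔞 : DimLE 1 𝔞) : ExtBound R 1 𝔞 := by
  intro M _ _ hM h
  refine (isSerreClass_finite R).ext_quotient_mem_of_minimalPrimesCompl
    (fun X _ _ hX => ⟨⊤, hX.1, fun _ => ⟨1, one_mem _, trivial⟩⟩) ?_ hM
    (fun i hi => h i (by lia))
  intro C _ _ hC hSC hfin
  obtain ⟨s, hs, hsC⟩ :=
    exists_mem_forall_smul_eq_zero (Module.Finite.iff_fg.1 hfin) fun c _ => hSC c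
  have := isArtinianRing_quotient_of_dimLE (h𝔞.sup_span_singleton hs)
  refine finite_ext_quotient_of_isArtinian_torsionBySet hC
    (isArtinian_of_le_annihilator (𝔟 := 𝔞 ⊔ Ideal.span {s})
      (sup_le (le_annihilator_torsionBySet 𝔞 C) ?_)) hfin
  rw [Ideal.span_singleton_le_iff_mem, Module.mem_annihilator]
  exact fun c => Subtype.ext (hsC c c.2)

omit [IsNoetherianRing R] in
lemma IsTorsionIdeal.sup_of_le_annihilator {J : Ideal R} (h : IsTorsionIdeal 𝔞 M)
    (hJ : J ≤ Module.annihilator R M) : IsTorsionIdeal (𝔞 ⊔ J) M := by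
  intro m
  obtain ⟨n, hn⟩ := h m
  have pow_le : (𝔞 ⊔ J) ^ n ≤ 𝔞 ^ n ⊔ J := by
    rw [sup_comm (𝔞 ^ n), ← Ideal.comap_map_quotientMk J (𝔞 ^ n), ← Ideal.map_le_iff_le_comap,
      Ideal.map_pow, Ideal.map_sup, Ideal.map_quotient_self, sup_bot_eq, Ideal.map_pow]
  have le_torsionOf : 𝔞 ^ n ⊔ J ≤ Ideal.torsionOf R M m :=
    sup_le hn fun a ha => Module.mem_annihilator.1 (hJ ha) m
  exact ⟨n, fun a ha => le_torsionOf (pow_le ha)⟩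

lemma finite_ker_coker_lsmul_ext_quotient {y : R} (hy : DimLE 1 (𝔞 ⊔ Ideal.span {y}))
    (hM : IsTorsionIdeal 𝔞 M) (h : ∀ i ≤ 2, Module.Finite R (ExtM R (R ⧸ 𝔞) M i)) (i : ℕ) :
    Module.Finite R (LinearMap.ker (LinearMap.lsmul R (ExtM R (R ⧸ 𝔞) M i) y)) ∧
      Module.Finite R (ExtM R (R ⧸ 𝔞) M i ⧸
        LinearMap.range (LinearMap.lsmul R (ExtM R (R ⧸ 𝔞) M i) y)) := by
  have hP := isSerreClass_finite R
  have killed_by_y : ∀ (N : Type u) [AddCommGroup N] [Module R N], IsTorsionIdeal 𝔞 N →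
      y ∈ Module.annihilator R N →
      (∀ i ≤ 1, Module.Finite R (ExtM R (R ⧸ (𝔞 ⊔ Ideal.span {y})) N i)) →
      ∀ i, Module.Finite R (ExtM R (R ⧸ (𝔞 ⊔ Ideal.span {y})) N i) := fun N _ _ hN hyN =>
    extBound_of_dimLE_one hy N
      (hN.sup_of_le_annihilator ((Ideal.span_singleton_le_iff_mem _).2 hyN))
  refine hP.ker_coker_lsmul_ext_quotient_mem (hP.ext_mem_of_lt_of_ker_lsmul_of_coker_lsmul _ _
    (y := y) (m := 3) ?_ (fun hE => ?_) (fun hE => ?_) fun j hj => ?_) i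
  · exact Ideal.annihilator_quotient.ge (Ideal.mem_sup_right (Ideal.mem_span_singleton_self y))
  · exact killed_by_y _ (hM.submodule _) (mem_annihilator_ker_lsmul y)
      fun j hj => hE j (by lia) (by lia)
  · exact killed_by_y _ (hM.quotient _) (mem_annihilator_quotient_range_lsmul y)
      fun j hj => hE j (by lia)
  · exact hP.ext_quotient_mem_of_le_radical (le_sup_left.trans Ideal.le_radical) j
      fun k hk => h k (by lia)

end DimensionOne

section FiniteUpToPowers

variable {R : Type u} [CommRing R] {M : Type u} [AddCommGroup M] [Module R M] {S : Submonoid R}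

lemma FiniteUpToTorsion.mono {S' : Submonoid R} (hS : ∀ s ∈ S, ∃ s' ∈ S', s ∣ s')
    (h : FiniteUpToTorsion S M) : FiniteUpToTorsion S' M := by
  obtain ⟨F, hF, hMF⟩ := h
  refine ⟨F, hF, fun b => ?_⟩
  obtain ⟨s, hs, hsb⟩ := hMF b
  obtain ⟨_, hs', r, rfl⟩ := hS s hs
  exact ⟨s * r, hs', by rw [mul_comm, mul_smul]; exact F.smul_mem r hsb⟩

lemma exists_fg_map_eq_inf_range [IsNoetherianRing R] {N : Type u} [AddCommGroup N] [Module R N]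
    (g : M →ₗ[R] N) {G : Submodule R N} (hG : G.FG) :
    ∃ H : Submodule R M, H.FG ∧ H.map g = G ⊓ LinearMap.range g := by
  classical
  obtain ⟨t, ht⟩ := Submodule.FG.of_le hG (inf_le_left : G ⊓ LinearMap.range g ≤ G)
  have t_subset : (t : Set N) ⊆ g '' Set.univ := fun w hw => by
    rw [Set.image_univ]
    exact (ht.le (Submodule.subset_span hw)).2
  obtain ⟨u, -, hu⟩ := Finset.subset_set_image_iff.1 t_subset
  refine ⟨Submodule.span R u, ⟨u, rfl⟩, ?_⟩
  rw [Submodule.map_span, ← Finset.coe_image, hu, ht]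

variable [IsNoetherianRing R]

lemma isSerreClass_finiteUpToTorsion (S : Submonoid R) :
    IsSerreClass R (fun X _ _ => FiniteUpToTorsion S X) where
  of_finite X _ _ h := ⟨⊤, h.1, fun _ => ⟨1, one_mem _, trivial⟩⟩
  of_exact {X Y Z} _ _ _ _ _ _ f g hfg := by
    rintro ⟨F, hF, hXF⟩ ⟨G, hG, hZG⟩
    obtain ⟨H, hH, hHG⟩ := exists_fg_map_eq_inf_range g hG
    refine ⟨F.map f ⊔ H, (hF.map f).sup hH, fun v => ?_⟩
    obtain ⟨s, hs, hsv⟩ := hZG (g v)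
    obtain ⟨w, hw, hwv⟩ := hHG.ge ⟨hsv, s • v, map_smul _ _ _⟩
    obtain ⟨x, hx⟩ := (hfg (s • v - w)).1 (by rw [map_sub, hwv, map_smul, sub_self])
    obtain ⟨t, ht, htx⟩ := hXF x
    refine ⟨t * s, mul_mem ht hs, ?_⟩
    rw [mul_smul, ← sub_add_cancel (s • v) w, smul_add, ← hx, ← map_smul]
    exact Submodule.add_mem_sup ⟨_, htx, rfl⟩ (H.smul_mem _ hw)

/-- `M` is finitely generated up to the power torsion of one element of `S`. -/
def FiniteUpToPowers (S : Submonoid R) (M : Type u) [AddCommGroup M] [Module R M] : Prop :=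
  ∃ y ∈ S, FiniteUpToTorsion (Submonoid.powers y) M

lemma isSerreClass_finiteUpToPowers (S : Submonoid R) :
    IsSerreClass R (fun X _ _ => FiniteUpToPowers S X) where
  of_finite X _ _ h := ⟨1, one_mem _, (isSerreClass_finiteUpToTorsion _).of_finite X h⟩
  of_exact {X Y Z} _ _ _ _ _ _ f g hfg := by
    rintro ⟨y, hy, hX⟩ ⟨z, hz, hZ⟩
    refine ⟨y * z, mul_mem hy hz, (isSerreClass_finiteUpToTorsion _).of_exact f g hfg
      (hX.mono ?_) (hZ.mono ?_)⟩
    · rintro _ ⟨n, rfl⟩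
      exact ⟨_, ⟨n, rfl⟩, pow_dvd_pow_of_dvd (dvd_mul_right y z) n⟩
    · rintro _ ⟨n, rfl⟩
      exact ⟨_, ⟨n, rfl⟩, pow_dvd_pow_of_dvd (dvd_mul_left z y) n⟩

omit [IsNoetherianRing R] in
lemma exists_smul_eq_zero_of_torsionBySet {𝔞 : Ideal R} (h𝔞 : 𝔞.FG) (hM : IsTorsionIdeal 𝔞 M)
    (h : ∀ z ∈ Submodule.torsionBySet R M (𝔞 : Set R), ∃ s ∈ S, s • z = 0) (m : M) :
    ∃ s ∈ S, s • m = 0 := by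
  obtain ⟨k, hk⟩ := hM m
  induction k generalizing m with
  | zero => exact ⟨1, one_mem _, by simpa using hk 1 (by simp)⟩
  | succ k ih =>
    obtain ⟨s, hs, hs𝔞⟩ : ∃ s ∈ S,
        ∀ z ∈ Submodule.map (LinearMap.toSpanSingleton R M m) 𝔞, s • z = 0 := by
      refine exists_mem_forall_smul_eq_zero (Submodule.FG.map _ h𝔞) ?_
      rintro _ ⟨a, ha, rfl⟩
      refine ih _ fun b hb => ?_
      rw [LinearMap.toSpanSingleton_apply, smul_smul]
      exact hk _ (pow_succ 𝔞 k ▸ Ideal.mul_mem_mul hb ha)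
    obtain ⟨t, ht, hts⟩ := h (s • m) ((Submodule.mem_torsionBySet_iff _ _).2 fun a => by
      rw [smul_comm]
      exact hs𝔞 _ ⟨a, a.2, rfl⟩)
    exact ⟨t * s, mul_mem ht hs, by rw [mul_smul, hts]⟩

lemma exists_smul_ext_eq_zero (hM : ∀ m : M, ∃ s ∈ S, s • m = 0) {T : Type u} [AddCommGroup T]
    [Module R T] [Module.Finite R T] (i : ℕ) (e : ExtM R T M i) : ∃ s ∈ S, s • e = 0 := by
  induction i generalizing T with
  | zero =>
    obtain ⟨s, hs, hse⟩ := exists_mem_forall_smul_eq_zero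
      (Module.Finite.iff_fg.1 (Module.Finite.range (ExtM.zeroEquiv T M e))) fun m _ => hM m
    refine ⟨s, hs, (ExtM.zeroEquiv T M).injective ?_⟩
    rw [map_smul, map_zero]
    exact LinearMap.ext fun t => hse _ ⟨t, rfl⟩
  | succ i ih =>
    obtain ⟨n, p, hp⟩ := Module.Finite.exists_fin' R T
    have := ExtM.subsingleton_of_free (R := R) (Fin n → R) M i
    obtain ⟨e', rfl⟩ := (ExtM.exact_coδ_comap M (isShortExact_ker_subtype hp) i e).1
      (Subsingleton.elim _ _)
    obtain ⟨s, hs, hse⟩ := ih e'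
    exact ⟨s, hs, by rw [← map_smul, hse, map_zero]⟩

lemma finiteUpToPowers_ext_quotient {𝔞 : Ideal R} (hM : IsTorsionIdeal 𝔞 M)
    (h : ∀ i < 2, Module.Finite R (ExtM R (R ⧸ 𝔞) M i)) (i : ℕ) :
    FiniteUpToPowers (minimalPrimesCompl 𝔞) (ExtM R (R ⧸ 𝔞) M i) := by
  have hP := isSerreClass_finiteUpToPowers (minimalPrimesCompl 𝔞)
  refine hP.ext_quotient_mem_of_minimalPrimesCompl ?_ ?_ hM (fun j hj => hP.of_finite _ (h j hj)) i
  · rintro X _ _ ⟨y, hy, hX⟩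
    exact hX.mono fun s hs => ⟨s, Submonoid.powers_le.2 hy hs, dvd_rfl⟩
  rintro C _ _ hC hSC ⟨y, hy, F, hF, hyF⟩ j
  obtain ⟨s, hs, hsF⟩ := exists_mem_forall_smul_eq_zero hF fun z _ =>
    (hSC z).imp fun s hs => ⟨hs.1, Subtype.ext hs.2⟩
  have power_torsion : ∀ c : C, ∃ t ∈ Submonoid.powers (s * y), t • c = 0 := by
    refine exists_smul_eq_zero_of_torsionBySet (IsNoetherian.noetherian 𝔞) hC fun z hz => ?_
    obtain ⟨_, ⟨n, rfl⟩, hn⟩ := hyF ⟨z, hz⟩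
    refine ⟨_, ⟨n + 1, rfl⟩, ?_⟩
    have hsn : s • y ^ n • z = 0 := congrArg Subtype.val (hsF _ hn)
    calc (s * y) ^ (n + 1) • z = (s ^ n * y) • s • y ^ n • z := by
          rw [smul_smul, smul_smul]; congr 1; ring
      _ = 0 := by rw [hsn, smul_zero]
  exact ⟨s * y, mul_mem hs hy, ⊥, Submodule.fg_bot, exists_smul_ext_eq_zero power_torsion j⟩

end FiniteUpToPowers

section Completion

variable {S : Type*} [CommRing S]

lemma isPrecomplete_fin_fun (I : Ideal S) [IsPrecomplete I S] (n : ℕ) :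
    IsPrecomplete I (Fin n → S) := by
  refine AdicCompletion.of_surjective_iff.1 fun x => ?_
  choose a ha using fun i => AdicCompletion.of_surjective I S (AdicCompletion.piEquivFin I n x i)
  refine ⟨a, (AdicCompletion.piEquivFin I n).injective (funext fun i => ?_)⟩
  rw [← ha i, AdicCompletion.piEquivFin_apply]
  simp only [AdicCompletion.pi, LinearMap.pi_apply, AdicCompletion.map_of, LinearMap.proj_apply]

lemma isHausdorff_of_injective (I : Ideal S) {M N : Type*} [AddCommGroup M] [Module S M]
    [AddCommGroup N] [Module S N] [IsHausdorff I N] {f : M →ₗ[S] N}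
    (hf : Function.Injective f) : IsHausdorff I M where
  haus' m hm := hf <| by
    rw [map_zero]
    refine IsHausdorff.haus ‹_› _ fun n => ?_
    rw [← map_zero f]
    refine ((hm n).map f).mono ?_
    rw [Submodule.map_smul'']
    exact smul_mono_right _ le_top

lemma finite_of_finite_quotient_smul_top (I : Ideal S) [IsPrecomplete I S] {N : Type*}
    [AddCommGroup N] [Module S N] [IsHausdorff I N]
    [Module.Finite S (N ⧸ (I • ⊤ : Submodule S N))] : Module.Finite S N := by
  obtain ⟨n, p, hp⟩ := Module.Finite.exists_fin' S (N ⧸ (I • ⊤ : Submodule S N))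
  obtain ⟨q, hq⟩ := Module.projective_lifting_property (Submodule.mkQ _) p
    (Submodule.mkQ_surjective _)
  have := isPrecomplete_fin_fun I n
  exact .of_surjective q (surjective_of_mkQ_comp_surjective (I := I) (hq ▸ hp))

lemma isNoetherianRing_of_isAdicComplete (y : S) [IsAdicComplete (Ideal.span {y}) S]
    [IsNoetherianRing (S ⧸ Ideal.span {y})] : IsNoetherianRing S := by
  have : IsNoetherian S (S ⧸ Ideal.span {y}) :=
    (LinearMap.isNoetherian_iff_of_bijective (σ := Ideal.Quotient.mk (Ideal.span {y}))
      { AddMonoidHom.id _ with map_smul' := fun _ _ => rfl } Function.bijective_id).2 ‹_›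
  refine IsNoetherianRing.of_prime fun P hP => ?_
  by_cases hy : y ∈ P
  · refine Submodule.fg_of_fg_map_of_fg_inf_ker (Ideal.span {y}).mkQ
      (IsNoetherian.noetherian _) ?_
    rw [Submodule.ker_mkQ, inf_eq_right.2 ((Ideal.span_singleton_le_iff_mem P).2 hy)]
    exact Submodule.fg_span_singleton y
  · have := isHausdorff_of_injective (Ideal.span {y}) P.injective_subtype
    let f : P →ₗ[S] S ⧸ Ideal.span {y} := (Ideal.span {y}).mkQ ∘ₗ P.subtype
    have hf : LinearMap.ker f ≤ Ideal.span {y} • ⊤ := by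
      intro p hp
      obtain ⟨c, hc⟩ := Ideal.mem_span_singleton.1 ((Submodule.Quotient.mk_eq_zero _).1 hp)
      have hcP : c ∈ P := (hP.mem_or_mem (hc ▸ p.2 : y * c ∈ P)).resolve_left hy
      rw [show p = y • ⟨c, hcP⟩ from Subtype.ext hc]
      exact Submodule.smul_mem_smul (Ideal.mem_span_singleton_self y) trivial
    have : Module.Finite S (P ⧸ LinearMap.ker f) := .equiv f.quotKerEquivRange.symm
    have : Module.Finite S (P ⧸ (Ideal.span {y} • ⊤ : Submodule S P)) :=
      .of_surjective _ (Submodule.factor_surjective hf)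
    exact Module.Finite.iff_fg.1 (finite_of_finite_quotient_smul_top (Ideal.span {y}))

lemma smodEq_span_singleton_pow_iff {y a b : S} {n : ℕ} :
    a ≡ b [SMOD (Ideal.span {y} ^ n • ⊤ : Submodule S S)] ↔ y ^ n ∣ a - b := by
  rw [SModEq.sub_mem, Ideal.span_singleton_pow, smul_eq_mul, Ideal.mul_top,
    Ideal.mem_span_singleton]

lemma exists_limit_of_pow_dvd (y : S) [IsPrecomplete (Ideal.span {y}) S] (a : ℕ → S)
    (h : ∀ k, y ^ k ∣ a (k + 1) - a k) : ∃ l, ∀ k, y ^ k ∣ a k - l := by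
  obtain ⟨l, hl⟩ := IsPrecomplete.prec (I := Ideal.span {y}) (M := S) inferInstance
    (f := a) fun {m n} hmn => smodEq_span_singleton_pow_iff.2 <| by
      induction n, hmn using Nat.le_induction with
      | base => simp
      | succ n hmn ih =>
        rw [show a m - a (n + 1) = (a m - a n) - (a (n + 1) - a n) by ring]
        exact dvd_sub ih ((pow_dvd_pow y hmn).trans (h n))
  exact ⟨l, fun k => smodEq_span_singleton_pow_iff.1 (hl k)⟩

end Completion

section PrincipalCompletion

variable {R : Type u} [CommRing R] (y : R)

lemma map_algebraMap_span_singleton {S : Type*} [CommRing S] [Algebra R S] :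
    (Ideal.span {y}).map (algebraMap R S) = Ideal.span {algebraMap R S y} := by
  rw [Ideal.map_span, Set.image_singleton]

instance isAdicComplete_adicCompletion_span_singleton :
    IsAdicComplete (Ideal.span {algebraMap R (AdicCompletion (Ideal.span {y}) R) y})
      (AdicCompletion (Ideal.span {y}) R) := by
  rw [← map_algebraMap_span_singleton]
  exact AdicCompletion.isAdicComplete_self _ (Submodule.fg_span_singleton y)

lemma ker_evalOneₐ_span_singleton :
    RingHom.ker (AdicCompletion.evalOneₐ (Ideal.span {y})) =
      Ideal.span {algebraMap R (AdicCompletion (Ideal.span {y}) R) y} :=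
  (AdicCompletion.ker_evalOneₐ_eq_map _ (Submodule.fg_span_singleton y)).trans
    (map_algebraMap_span_singleton y)

instance isNoetherianRing_adicCompletion_span_singleton [IsNoetherianRing R] :
    IsNoetherianRing (AdicCompletion (Ideal.span {y}) R) := by
  have := isNoetherianRing_of_ringEquiv (R ⧸ Ideal.span {y})
    ((Ideal.quotEquivOfEq (ker_evalOneₐ_span_singleton y).symm).trans
      (RingHom.quotientKerEquivOfSurjective
        (AdicCompletion.evalOneₐ_surjective (Ideal.span {y})))).symm
  exact isNoetherianRing_of_isAdicComplete (algebraMap R (AdicCompletion (Ideal.span {y}) R) y)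

end PrincipalCompletion

section BaseChange

open TensorProduct

lemma nonempty_linearEquiv_of_exact {R A B C A' B' C' : Type*} [CommRing R]
    [AddCommGroup A] [Module R A] [AddCommGroup B] [Module R B] [AddCommGroup C] [Module R C]
    [AddCommGroup A'] [Module R A'] [AddCommGroup B'] [Module R B'] [AddCommGroup C'] [Module R C']
    {f : A →ₗ[R] B} {g : B →ₗ[R] C} {f' : A' →ₗ[R] B'} {g' : B' →ₗ[R] C'}
    (h : Function.Exact f g) (hg : Function.Surjective g) (h' : Function.Exact f' g')
    (hg' : Function.Surjective g') (e : A ≃ₗ[R] A') (e' : B ≃ₗ[R] B')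
    (comm : ∀ x, e' (f x) = f' (e x)) : Nonempty (C ≃ₗ[R] C') := by
  have hrange : Submodule.map e'.toLinearMap (LinearMap.range f) = LinearMap.range f' := by
    rw [← LinearMap.range_comp, show e'.toLinearMap ∘ₗ f = f' ∘ₗ e from LinearMap.ext comm,
      LinearEquiv.range_comp]
  exact ⟨(h.linearEquivOfSurjective hg).symm ≪≫ₗ Submodule.Quotient.equiv _ _ e' hrange ≪≫ₗ
    h'.linearEquivOfSurjective hg'⟩

lemma IsShortExact.baseChange {R A B D : Type*} [CommRing R] [AddCommGroup A] [Module R A]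
    [AddCommGroup B] [Module R B] [AddCommGroup D] [Module R D] {f : A →ₗ[R] B} {g : B →ₗ[R] D}
    (h : IsShortExact f g) (C : Type*) [CommRing C] [Algebra R C] [Module.Flat R C] :
    IsShortExact (f.baseChange C) (g.baseChange C) where
  injective := Module.Flat.lTensor_preserves_injective_linearMap f h.injective
  surjective := LinearMap.lTensor_surjective C h.surjective
  exact := lTensor_exact C h.exact h.surjective

lemma ExtM.coδ_surjective {R A B D : Type u} [CommRing R] [AddCommGroup A] [Module R A]
    [AddCommGroup B] [Module R B] [Module.Free R B] [AddCommGroup D] [Module R D]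
    {f : A →ₗ[R] B} {g : B →ₗ[R] D} (h : IsShortExact f g) (M : Type u) [AddCommGroup M]
    [Module R M] (i : ℕ) : Function.Surjective (ExtM.coδ M h i) := fun x =>
  have := ExtM.subsingleton_of_free (R := R) B M i
  (ExtM.exact_coδ_comap M h i x).1 (Subsingleton.elim _ _)

lemma nonempty_tensor_quotient_equiv {R : Type*} [CommRing R] (C : Type*) [CommRing C]
    [Algebra R C] (𝔞 : Ideal R) :
    Nonempty (C ⊗[R] (R ⧸ 𝔞) ≃ₗ[C] C ⧸ 𝔞.map (algebraMap R C)) := by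
  refine ⟨((Algebra.TensorProduct.tensorQuotientEquiv C R C 𝔞).trans
    (Ideal.quotientEquivAlg _ _ (Algebra.TensorProduct.rid R C C) ?_)).toLinearEquiv⟩
  change _ = Ideal.map (Algebra.TensorProduct.rid R C C).toAlgHom.toRingHom
    (Ideal.map (Algebra.TensorProduct.includeRight (R := R) (A := C) (B := R)).toRingHom 𝔞)
  rw [Ideal.map_map]
  congr 1
  ext r
  simp [Algebra.algebraMap_eq_smul_one]

namespace ExtM

variable {R : Type u} [CommRing R] [IsNoetherianRing R] (C : Type u) [CommRing C] [Algebra R C]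
  [Module.Flat R C] (T : Type u) [AddCommGroup T] [Module R T] [Module.Finite R T]
  (M : Type u) [AddCommGroup M] [Module R M]

/-- Flat base change for `Hom` out of a finitely generated module, as an isomorphism on `Ext^0`;
it starts the induction giving flat base change for `Ext`. -/
noncomputable def baseChangeZero :
    C ⊗[R] ExtM R T M 0 ≃ₗ[C] ExtM C (C ⊗[R] T) (C ⊗[R] M) 0 :=
  have : Module.FinitePresentation R T := Module.finitePresentation_of_finite R T
  (zeroEquiv T M).baseChange R C _ _ ≪≫ₗ
    (Module.FinitePresentation.isBaseChange_map R T M C).equiv ≪≫ₗ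
    (zeroEquiv (C ⊗[R] T) (C ⊗[R] M)).symm

lemma baseChangeZero_comap {T T' : Type u} [AddCommGroup T] [Module R T] [Module.Finite R T]
    [AddCommGroup T'] [Module R T'] [Module.Finite R T'] (f : T →ₗ[R] T')
    (x : C ⊗[R] ExtM R T' M 0) :
    baseChangeZero C T M ((comap M f 0).baseChange C x) =
      comap (C ⊗[R] M) (f.baseChange C) 0 (baseChangeZero C T' M x) := by
  induction x using TensorProduct.induction_on with
  | zero => simp only [_root_.map_zero]
  | add x y hx hy => simp only [_root_.map_add, hx, hy]
  | tmul c x =>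
    apply (zeroEquiv _ _).injective
    rw [zeroEquiv_comap]
    simp only [baseChangeZero, LinearEquiv.trans_apply, LinearEquiv.apply_symm_apply,
      LinearEquiv.baseChange_tmul, LinearMap.baseChange_tmul, IsBaseChange.equiv_tmul,
      zeroEquiv_comap, LinearMap.baseChangeHom_apply, LinearMap.baseChange_comp,
      LinearMap.smul_comp]

lemma nonempty_baseChange_equiv (i : ℕ) :
    Nonempty (C ⊗[R] ExtM R T M i ≃ₗ[C] ExtM C (C ⊗[R] T) (C ⊗[R] M) i) := by
  induction i generalizing T with
  | zero => exact ⟨baseChangeZero C T M⟩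
  | succ i ih =>
    obtain ⟨n, p, hp⟩ := Module.Finite.exists_fin' R T
    let K := LinearMap.ker p
    have h : IsShortExact K.subtype p := isShortExact_ker_subtype hp
    suffices ∃ (eF : C ⊗[R] ExtM R (Fin n → R) M i ≃ₗ[C] ExtM C (C ⊗[R] (Fin n → R)) (C ⊗[R] M) i)
        (eK : C ⊗[R] ExtM R K M i ≃ₗ[C] ExtM C (C ⊗[R] K) (C ⊗[R] M) i),
        ∀ x, eK ((comap M K.subtype i).baseChange C x) =
          comap (C ⊗[R] M) (K.subtype.baseChange C) i (eF x) by
      obtain ⟨eF, eK, comm⟩ := this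
      exact nonempty_linearEquiv_of_exact (f := (comap M K.subtype i).baseChange C)
        (g := (coδ M h i).baseChange C)
        (lTensor_exact C (exact_comap_coδ M h i) (coδ_surjective h M i))
        (LinearMap.lTensor_surjective C (coδ_surjective h M i))
        (exact_comap_coδ _ (h.baseChange C) i) (coδ_surjective (h.baseChange C) _ i) eF eK comm
    cases i with
    | zero => exact ⟨baseChangeZero C _ M, baseChangeZero C K M, baseChangeZero_comap C M K.subtype⟩
    | succ i =>
      obtain ⟨eF⟩ := ih (Fin n → R)
      obtain ⟨eK⟩ := ih K
      have := subsingleton_of_free (R := C) (C ⊗[R] (Fin n → R)) (C ⊗[R] M) i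
      have := eF.injective.subsingleton
      exact ⟨eF, eK, fun x => by rw [Subsingleton.elim x 0]; simp only [_root_.map_zero]⟩

lemma nonempty_baseChange_quotient_equiv (𝔞 : Ideal R) (i : ℕ) :
    Nonempty (C ⊗[R] ExtM R (R ⧸ 𝔞) M i ≃ₗ[C]
      ExtM C (C ⧸ 𝔞.map (algebraMap R C)) (C ⊗[R] M) i) := by
  obtain ⟨e⟩ := nonempty_tensor_quotient_equiv C 𝔞
  obtain ⟨e'⟩ := nonempty_baseChange_equiv (R := R) C (R ⧸ 𝔞) M i
  exact ⟨e' ≪≫ₗ congr e (.refl C _) i⟩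

end ExtM

end BaseChange

section QuotientsByFinite

variable {R : Type u} [CommRing R] {P : ∀ (X : Type u) [AddCommGroup X] [Module R X], Prop}
  (hP : IsSerreClass R P) {E X : Type u} [AddCommGroup E] [Module R E] [AddCommGroup X]
  [Module R X] {π : E →ₗ[R] X} (hπ : Function.Surjective π) (y : R)

include hP hπ

lemma IsSerreClass.ker_lsmul_mem_of_surjective (hker : P (LinearMap.ker π))
    (hE : P (LinearMap.ker (LinearMap.lsmul R E y))) :
    P (LinearMap.ker (LinearMap.lsmul R X y)) := by
  have comm : π ∘ₗ LinearMap.lsmul R E y = LinearMap.lsmul R X y ∘ₗ π :=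
    LinearMap.ext fun e => map_smul π y e
  have hcomp := hP.ker_comp (LinearMap.lsmul R E y) π hE hker
  rw [comm] at hcomp
  refine hP.of_surjective (π.restrict (q := LinearMap.ker (LinearMap.lsmul R X y))
    fun e he => he) (fun x => ?_) hcomp
  obtain ⟨e, he⟩ := hπ x
  exact ⟨⟨e, by rw [LinearMap.mem_ker, LinearMap.comp_apply, he]; exact x.2⟩, Subtype.ext he⟩

lemma IsSerreClass.coker_lsmul_mem_of_surjective
    (hE : P (E ⧸ LinearMap.range (LinearMap.lsmul R E y))) :
    P (X ⧸ LinearMap.range (LinearMap.lsmul R X y)) := by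
  have hle : LinearMap.range (LinearMap.lsmul R E y) ≤
      (LinearMap.range (LinearMap.lsmul R X y)).comap π := by
    rintro _ ⟨e, rfl⟩
    exact ⟨π e, (map_smul π y e).symm⟩
  refine hP.of_surjective (Submodule.mapQ _ _ π hle) (.of_comp (g := Submodule.mkQ _) ?_) hE
  exact (Submodule.mkQ_surjective _).comp hπ

end QuotientsByFinite

section Divisible

variable {S X ι : Type*} [CommRing S] [AddCommGroup X] [Module S X]

lemma subsingleton_of_injective_lsmul {y : S} (hinj : Function.Injective (LinearMap.lsmul S X y))
    (htor : ∀ x : X, ∃ n : ℕ, y ^ n • x = 0) : Subsingleton X := by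
  refine subsingleton_of_forall_eq 0 fun x => ?_
  obtain ⟨n, hn⟩ := htor x
  induction n with
  | zero => rwa [pow_zero, one_smul] at hn
  | succ n ih =>
    rw [pow_succ', mul_smul] at hn
    exact ih ((LinearMap.map_eq_zero_iff _ hinj).1 hn)

lemma det_smul_eq_zero_of_sum_smul_eq_zero [Fintype ι] [DecidableEq ι] (A : Matrix ι ι S)
    {v : ι → X} (h : ∀ j, ∑ k, A j k • v k = 0) (k : ι) : A.det • v k = 0 := by
  calc A.det • v k = ∑ l, (A.adjugate * A) k l • v l := by
        simp [Matrix.adjugate_mul, Matrix.one_apply, ite_smul]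
    _ = ∑ j, A.adjugate k j • ∑ l, A j l • v l := by
        simp only [Matrix.mul_apply, Finset.sum_smul, Finset.smul_sum, mul_smul]
        exact Finset.sum_comm
    _ = 0 := by simp only [h, smul_zero, Finset.sum_const_zero]

lemma dvd_det_smul_one_sub_smul_sub_pow [Fintype ι] [DecidableEq ι] (y z : S) (L : Matrix ι ι S) :
    y ∣ (z • (1 : Matrix ι ι S) - y • L).det - z ^ Fintype.card ι := by
  have hmod : (Ideal.Quotient.mk (Ideal.span {y})).mapMatrix (z • (1 : Matrix ι ι S) - y • L) =
      (Ideal.Quotient.mk (Ideal.span {y})).mapMatrix (z • (1 : Matrix ι ι S)) := by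
    ext j k
    exact Ideal.Quotient.eq.2 (Ideal.mem_span_singleton.2 ⟨-L j k, by simp⟩)
  rw [← Ideal.mem_span_singleton, ← Ideal.Quotient.eq, RingHom.map_det, hmod, ← RingHom.map_det,
    Matrix.det_smul, Matrix.det_one, mul_one]

variable {y z : S} {t : ℕ → ι → X} (hts : ∀ s j, y • t (s + 1) j = t s j)

include hts

lemma pow_smul_eq_of_smul_succ_eq (s : ℕ) (j : ι) : y ^ s • t s j = t 0 j := by
  induction s with
  | zero => rw [pow_zero, one_smul]
  | succ s ih => rw [pow_succ, mul_smul, hts, ih]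

variable [Fintype ι]
  (ht₀ : Submodule.span S (Set.range (t 0)) = LinearMap.ker (LinearMap.lsmul S X y))

include ht₀

lemma exists_matrix_succ {s : ℕ} {c : Matrix ι ι S}
    (hc : ∀ j, z • t s j = y • ∑ k, c j k • t s k) :
    ∃ c' : Matrix ι ι S, (∀ j k, y ^ s ∣ c' j k - c j k) ∧
      ∀ j, z • t (s + 1) j = y • ∑ k, c' j k • t (s + 1) k := by
  have error_mem_ker : ∀ j, z • t (s + 1) j - y • ∑ k, c j k • t (s + 1) k ∈
      LinearMap.ker (LinearMap.lsmul S X y) := fun j => by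
    have smul_sum : y • ∑ k, c j k • t (s + 1) k = ∑ k, c j k • t s k := by
      simp only [Finset.smul_sum, smul_comm y, hts]
    rw [LinearMap.mem_ker, LinearMap.lsmul_apply, smul_sub, smul_comm y z, hts, hc, smul_sum,
      sub_self]
  simp only [← ht₀, Submodule.mem_span_range_iff_exists_fun] at error_mem_ker
  choose d hd using error_mem_ker
  refine ⟨c + y ^ s • Matrix.of d, fun j k => ⟨d j k, by simp⟩, fun j => ?_⟩
  rw [sub_eq_iff_eq_add'.1 (hd j).symm, Finset.smul_sum, Finset.smul_sum,
    ← Finset.sum_add_distrib]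
  refine Finset.sum_congr rfl fun k _ => ?_
  rw [← pow_smul_eq_of_smul_succ_eq hts (s + 1) k, Matrix.add_apply, Matrix.smul_apply,
    Matrix.of_apply, smul_eq_mul]
  module

lemma exists_matrix_seq (hz : ∀ j, z • t 0 j = 0) :
    ∃ c : ℕ → Matrix ι ι S, (∀ s j k, y ^ s ∣ c (s + 1) j k - c s j k) ∧
      ∀ s j, z • t s j = y • ∑ k, c s j k • t s k := by
  choose! next hdvd hnext using fun s c => exists_matrix_succ (z := z) hts ht₀ (s := s) (c := c)
  let c : ℕ → Matrix ι ι S := fun s => Nat.rec 0 next s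
  have hc : ∀ s j, z • t s j = y • ∑ k, c s j k • t s k := fun s => by
    induction s with
    | zero => intro j; simp [c, hz]
    | succ s ih => exact hnext s (c s) ih
  exact ⟨c, fun s => hdvd s (c s) (hc s), hc⟩

lemma exists_matrix_forall_smul_eq [IsPrecomplete (Ideal.span {y}) S] (hz : ∀ j, z • t 0 j = 0) :
    ∃ L : Matrix ι ι S, ∀ s j, z • t s j = y • ∑ k, L j k • t s k := by
  obtain ⟨c, hdvd, hc⟩ := exists_matrix_seq hts ht₀ hz
  choose L hL using fun j k => exists_limit_of_pow_dvd y (fun s => c s j k) fun s => hdvd s j k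
  refine ⟨Matrix.of L, fun s j => ?_⟩
  rw [hc s j, Finset.smul_sum, Finset.smul_sum]
  refine Finset.sum_congr rfl fun k _ => sub_eq_zero.1 ?_
  have hkill : y ^ (s + 1) • t s k = 0 := by
    have : t 0 k ∈ LinearMap.ker (LinearMap.lsmul S X y) := ht₀ ▸ Submodule.subset_span ⟨k, rfl⟩
    rw [pow_succ', mul_smul, pow_smul_eq_of_smul_succ_eq hts]
    exact this
  obtain ⟨b, hb⟩ := hL j k s
  calc y • c s j k • t s k - y • Matrix.of L j k • t s k
      = (y * (c s j k - L j k)) • t s k := by rw [Matrix.of_apply]; module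
    _ = b • y ^ (s + 1) • t s k := by rw [hb]; module
    _ = 0 := by rw [hkill, smul_zero]

end Divisible

section Completion

variable {S X : Type*} [CommRing S] [AddCommGroup X] [Module S X]

lemma exists_seq_smul_succ_eq {ι : Type*} {y : S}
    (hdiv : Function.Surjective (LinearMap.lsmul S X y)) (t₀ : ι → X) :
    ∃ t : ℕ → ι → X, t 0 = t₀ ∧ ∀ s j, y • t (s + 1) j = t s j := by
  choose r hr using hdiv
  refine ⟨fun s j => r^[s] (t₀ j), rfl, fun s j => ?_⟩
  exact (congrArg (y • ·) (Function.iterate_succ_apply' r s (t₀ j))).trans (hr _)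

/-
The determinant `w` of `z - yL` annihilates all iterated `y`-preimages of the generators of the
kernel, so these span a finitely generated module on which `y` is surjective, hence injective.
-/
lemma ker_lsmul_eq_bot_of_finite_ker_lsmul [IsNoetherianRing S] {y z : S}
    [IsPrecomplete (Ideal.span {y}) S] (hdiv : Function.Surjective (LinearMap.lsmul S X y))
    [Module.Finite S (LinearMap.ker (LinearMap.lsmul S X y))]
    (hz : LinearMap.ker (LinearMap.lsmul S X y) ≤ LinearMap.ker (LinearMap.lsmul S X z))
    (H : ∀ w n, y ∣ w - z ^ n → Module.Finite S (LinearMap.ker (LinearMap.lsmul S X w))) :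
    LinearMap.ker (LinearMap.lsmul S X y) = ⊥ := by
  obtain ⟨m, t₀, ht₀⟩ := Submodule.fg_iff_exists_fin_generating_family.1
    (Module.Finite.iff_fg.1 ‹Module.Finite S (LinearMap.ker (LinearMap.lsmul S X y))›)
  obtain ⟨t, rfl, hts⟩ := exists_seq_smul_succ_eq hdiv t₀
  obtain ⟨L, hL⟩ := exists_matrix_forall_smul_eq hts ht₀ (z := z)
    fun j => hz (ht₀ ▸ Submodule.subset_span ⟨j, rfl⟩)
  set A : Matrix (Fin m) (Fin m) S := z • 1 - y • L with hA
  have hsum (s : ℕ) (j : Fin m) : ∑ k, A j k • t s k = 0 := by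
    simp [hA, sub_smul, hL, Matrix.one_apply, ite_smul, mul_smul, Finset.smul_sum]
  have hdet (s : ℕ) (j : Fin m) : A.det • t s j = 0 :=
    det_smul_eq_zero_of_sum_smul_eq_zero A (hsum s) j
  let V : Submodule S X := Submodule.span S (Set.range fun p : ℕ × Fin m => t p.1 p.2)
  have hV : V ≤ LinearMap.ker (LinearMap.lsmul S X A.det) :=
    Submodule.span_le.2 (by rintro _ ⟨p, rfl⟩; exact hdet p.1 p.2)
  have : Module.Finite S (LinearMap.ker (LinearMap.lsmul S X A.det)) :=
    H _ _ (dvd_det_smul_one_sub_smul_sub_pow y z L)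
  have : Module.Finite S V := Module.Finite.of_injective _ (Submodule.inclusion_injective hV)
  have hdivV : V ≤ V.map (LinearMap.lsmul S X y) := Submodule.span_le.2 <| by
    rintro _ ⟨⟨s, j⟩, rfl⟩
    exact ⟨t (s + 1) j, Submodule.subset_span ⟨(s + 1, j), rfl⟩, hts s j⟩
  have hsurj : Function.Surjective (LinearMap.lsmul S V y) := fun v => by
    obtain ⟨v', hv', hvv'⟩ := hdivV v.2
    exact ⟨⟨v', hv'⟩, Subtype.ext hvv'⟩
  have hinj := OrzechProperty.injective_of_surjective_endomorphism _ hsurj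
  refine (Submodule.eq_bot_iff _).2 fun x hx => ?_
  have hxV : x ∈ V := by
    rw [← ht₀] at hx
    exact Submodule.span_mono (by rintro _ ⟨j, rfl⟩; exact ⟨(0, j), rfl⟩) hx
  exact congrArg Subtype.val (hinj (a₁ := ⟨x, hxV⟩) (a₂ := 0)
    (Subtype.ext (by simpa using hx)))

end Completion

section Descent

open TensorProduct

variable {R : Type u} [CommRing R] (C : Type u) [CommRing C] [Algebra R C]
  {X : Type u} [AddCommGroup X] [Module R X]

lemma baseChange_lsmul (y : R) : (LinearMap.lsmul R X y).baseChange C =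
    LinearMap.lsmul C (C ⊗[R] X) (algebraMap R C y) := by
  ext x
  simp

lemma surjective_lsmul_baseChange {y : R} (hdiv : Function.Surjective (LinearMap.lsmul R X y)) :
    Function.Surjective (LinearMap.lsmul C (C ⊗[R] X) (algebraMap R C y)) := by
  rw [← baseChange_lsmul]
  exact LinearMap.lTensor_surjective C hdiv

lemma eq_zero_of_one_tmul_eq_zero {𝔟 : Ideal R} (e : C →ₐ[R] R ⧸ 𝔟)
    (hX : 𝔟 ≤ Module.annihilator R X) {x : X} (hx : (1 : C) ⊗ₜ[R] x = 0) : x = 0 := by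
  let act : (R ⧸ 𝔟) →ₗ[R] X →ₗ[R] X := 𝔟.liftQ (LinearMap.lsmul R X) fun b hb =>
    LinearMap.ext fun x => Module.mem_annihilator.1 (hX hb) x
  calc x = TensorProduct.lift (act ∘ₗ e.toLinearMap) ((1 : C) ⊗ₜ[R] x) := by
        rw [TensorProduct.lift.tmul, LinearMap.comp_apply, AlgHom.toLinearMap_apply, map_one]
        exact (one_smul R x).symm
    _ = 0 := by rw [hx, map_zero]

variable [Module.Flat R C]

lemma exact_baseChange_ker_lsmul (y : R) :
    Function.Exact ((LinearMap.ker (LinearMap.lsmul R X y)).subtype.baseChange C)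
      (LinearMap.lsmul C (C ⊗[R] X) (algebraMap R C y)) := by
  rw [← baseChange_lsmul]
  exact Module.Flat.lTensor_exact C (LinearMap.exact_subtype_ker_map _)

lemma finite_ker_lsmul_baseChange [IsNoetherianRing C] (y : R)
    [Module.Finite R (LinearMap.ker (LinearMap.lsmul R X y))] :
    Module.Finite C (LinearMap.ker (LinearMap.lsmul C (C ⊗[R] X) (algebraMap R C y))) :=
  (isSerreClass_finite C).ker_of_exact _ _ (exact_baseChange_ker_lsmul C y) inferInstance

lemma ker_lsmul_baseChange_le {y z : R}
    (hz : LinearMap.ker (LinearMap.lsmul R X y) ≤ LinearMap.ker (LinearMap.lsmul R X z)) :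
    LinearMap.ker (LinearMap.lsmul C (C ⊗[R] X) (algebraMap R C y)) ≤
      LinearMap.ker (LinearMap.lsmul C (C ⊗[R] X) (algebraMap R C z)) := by
  have hzero : LinearMap.lsmul R X z ∘ₗ (LinearMap.ker (LinearMap.lsmul R X y)).subtype = 0 :=
    LinearMap.ext fun x => hz x.2
  rw [(exact_baseChange_ker_lsmul C y).linearMap_ker_eq, LinearMap.range_le_ker_iff,
    ← baseChange_lsmul, ← LinearMap.baseChange_comp, hzero, LinearMap.baseChange_zero]

lemma ker_lsmul_eq_bot_of_baseChange {y : R} (e : C →ₐ[R] R ⧸ Ideal.span {y})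
    (h : LinearMap.ker (LinearMap.lsmul C (C ⊗[R] X) (algebraMap R C y)) = ⊥) :
    LinearMap.ker (LinearMap.lsmul R X y) = ⊥ := by
  have hK : Ideal.span {y} ≤ Module.annihilator R (LinearMap.ker (LinearMap.lsmul R X y)) :=
    (Ideal.span_singleton_le_iff_mem _).2 (mem_annihilator_ker_lsmul y)
  have hinj := Module.Flat.lTensor_preserves_injective_linearMap (M := C)
    (LinearMap.ker (LinearMap.lsmul R X y)).subtype Subtype.val_injective
  refine (Submodule.eq_bot_iff _).2 fun x hx => ?_
  have hone : (1 : C) ⊗ₜ[R] (⟨x, hx⟩ : LinearMap.ker (LinearMap.lsmul R X y)) = 0 := by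
    refine (LinearMap.map_eq_zero_iff _ hinj).1 ((Submodule.eq_bot_iff _).1 h _ ?_)
    exact (exact_baseChange_ker_lsmul C y).apply_apply_eq_zero _
  exact congrArg Subtype.val (eq_zero_of_one_tmul_eq_zero C e hK hone)

end Descent

section DimensionOfCompletion

lemma dimLE_one_of_mem_jacobson {S : Type*} [CommRing S] [IsNoetherianRing S] {c : S}
    (hc : c ∈ Ideal.jacobson (⊥ : Ideal S)) {𝔟 : Ideal S} (h𝔟 : DimLE 0 (𝔟 ⊔ Ideal.span {c})) :
    DimLE 1 𝔟 := by
  intro p q hp _ h𝔟p hpq r hr hqr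
  by_contra hrmax
  obtain ⟨n, hn, hrn⟩ := Ideal.exists_le_maximal r hr.ne_top
  have hrn' : r < n := lt_of_le_of_ne hrn fun h => hrmax (h ▸ hn)
  have hcn : c ∈ n := (Submodule.mem_sInf.1 hc) n ⟨bot_le, hn⟩
  obtain ⟨Q, hcQ, hpQ, hQn⟩ := PrimeSpectrum.exist_mem_one_of_mem_two
    (p₀ := ⟨p, hp⟩) (p₁ := ⟨r, hr⟩) (p₂ := ⟨n, hn.isPrime⟩) (x := c) (hpq.trans_le hqr) hrn' hcn
  have hQmax : Q.asIdeal.IsMaximal := h𝔟 Q.asIdeal Q.2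
    (sup_le (h𝔟p.trans (le_of_lt hpQ)) ((Ideal.span_singleton_le_iff_mem _).2 hcQ))
  exact hn.ne_top (hQmax.1.2 n hQn)

lemma isMaximal_of_isMaximal_comap_of_surjective {R S : Type*} [CommRing R] [CommRing S]
    (f : R →+* S) {Q : Ideal S} [Q.IsPrime]
    (hf : Function.Surjective ((Ideal.Quotient.mk Q).comp f)) (hQ : (Q.comap f).IsMaximal) :
    Q.IsMaximal := by
  rw [← Ideal.bot_quotient_isMaximal_iff]
  refine Ideal.isMaximal_of_isIntegral_of_isMaximal_comap' _ (RingHom.isIntegral_of_surjective _ hf)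
    ⊥ ?_
  rwa [← Ideal.comap_comap, ← RingHom.ker_eq_comap_bot, Ideal.mk_ker]

variable {R : Type*} [CommRing R] {y : R}

lemma isMaximal_of_isMaximal_comap_adicCompletion
    {Q : Ideal (AdicCompletion (Ideal.span {y}) R)} [Q.IsPrime] (hyQ : algebraMap R _ y ∈ Q)
    (hQ : (Q.comap (algebraMap R _)).IsMaximal) : Q.IsMaximal := by
  refine isMaximal_of_isMaximal_comap_of_surjective (algebraMap R _) ?_ hQ
  refine Ideal.Quotient.mk_surjective.forall.2 fun c => ?_
  obtain ⟨r, hr⟩ := Ideal.Quotient.mk_surjective (AdicCompletion.evalOneₐ (Ideal.span {y}) c)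
  refine ⟨r, Ideal.Quotient.eq.2 ?_⟩
  have hker : algebraMap R _ r - c ∈ RingHom.ker (AdicCompletion.evalOneₐ (Ideal.span {y})) := by
    rw [RingHom.mem_ker, map_sub, AlgHom.commutes, ← hr, Ideal.Quotient.algebraMap_eq, sub_self]
  rw [ker_evalOneₐ_span_singleton] at hker
  exact (Ideal.span_singleton_le_iff_mem _).2 hyQ hker

lemma dimLE_one_map_adicCompletion_sup [IsNoetherianRing R] {𝔞 : Ideal R} {z : R}
    (hd : DimLE 0 (𝔞 ⊔ Ideal.span {z} ⊔ Ideal.span {y}))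
    {w : AdicCompletion (Ideal.span {y}) R} {n : ℕ}
    (hw : algebraMap R _ y ∣ w - algebraMap R _ z ^ n) :
    DimLE 1 (𝔞.map (algebraMap R _) ⊔ Ideal.span {w}) := by
  have hjac := IsAdicComplete.le_jacobson_bot
    (Ideal.span {algebraMap R (AdicCompletion (Ideal.span {y}) R) y})
    (Ideal.mem_span_singleton_self _)
  refine dimLE_one_of_mem_jacobson hjac fun Q hQ hle => ?_
  simp only [sup_le_iff, Ideal.span_singleton_le_iff_mem, Ideal.map_le_iff_le_comap] at hle
  obtain ⟨⟨h𝔞Q, hwQ⟩, hyQ⟩ := hle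
  have hzQ : algebraMap R _ z ∈ Q :=
    hQ.mem_of_pow_mem n ((Submodule.sub_mem_iff_right Q hwQ).1 (Q.mem_of_dvd hw hyQ))
  refine isMaximal_of_isMaximal_comap_adicCompletion hyQ (hd _ (hQ.comap _) ?_)
  simp only [sup_le_iff, Ideal.span_singleton_le_iff_mem]
  exact ⟨⟨h𝔞Q, hzQ⟩, hyQ⟩

end DimensionOfCompletion

section DimTwo

open TensorProduct

lemma IsTorsionIdeal.baseChange {R : Type u} [CommRing R] (C : Type u) [CommRing C] [Algebra R C]
    {𝔞 : Ideal R} {M : Type u} [AddCommGroup M] [Module R M] (h : IsTorsionIdeal 𝔞 M) :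
    IsTorsionIdeal (𝔞.map (algebraMap R C)) (C ⊗[R] M) := by
  intro m
  induction m with
  | zero => exact ⟨0, fun a _ => smul_zero _⟩
  | add m m' hm hm' =>
    obtain ⟨k, hk⟩ := hm
    obtain ⟨l, hl⟩ := hm'
    exact ⟨k + l, fun a ha => by
      rw [smul_add, hk a (Ideal.pow_le_pow_right (Nat.le_add_right _ _) ha),
        hl a (Ideal.pow_le_pow_right (Nat.le_add_left _ _) ha), add_zero]⟩
  | tmul c m =>
    obtain ⟨n, hn⟩ := h m
    have hle : (𝔞 ^ n).map (algebraMap R C) ≤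
        LinearMap.ker (LinearMap.toSpanSingleton C (C ⊗[R] M) (c ⊗ₜ[R] m)) := by
      refine Ideal.map_le_iff_le_comap.2 fun r hr => ?_
      change algebraMap R C r • c ⊗ₜ[R] m = 0
      rw [algebraMap_smul, ← TensorProduct.tmul_smul, hn r hr, TensorProduct.tmul_zero]
    rw [Ideal.map_pow] at hle
    exact ⟨n, fun a ha => hle ha⟩

lemma exists_isMaximal_not_le_smul {R X : Type*} [CommRing R] [AddCommGroup X] [Module R X]
    {Z : Submodule R X} (hZ : Z.FG) (hZ₀ : Z ≠ ⊥) : ∃ 𝔪 : Ideal R, 𝔪.IsMaximal ∧ ¬Z ≤ 𝔪 • Z := by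
  have hann : Module.annihilator R Z ≠ ⊤ := by
    rwa [Ne, Module.annihilator_eq_top_iff, Submodule.subsingleton_iff_eq_bot]
  obtain ⟨𝔪, h𝔪, hle⟩ := Ideal.exists_le_maximal _ hann
  refine ⟨𝔪, h𝔪, fun hZ𝔪 => h𝔪.ne_top ((Ideal.eq_top_iff_one _).2 ?_)⟩
  obtain ⟨r, hr, hrZ⟩ := Submodule.exists_sub_one_mem_and_smul_eq_zero_of_fg_of_le_smul 𝔪 Z hZ hZ𝔪
  have hr𝔪 : r ∈ 𝔪 := hle (Module.mem_annihilator.2 fun z => Subtype.ext (hrZ z z.2))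
  exact (Submodule.sub_mem_iff_right 𝔪 hr𝔪).1 hr

variable {R : Type u} [CommRing R] [IsNoetherianRing R]

lemma exists_mem_minimalPrimesCompl {𝔪 : Ideal R} (h𝔪 : 𝔪.IsMaximal) (𝔞 𝔟 : Ideal R) :
    ∃ y ∈ 𝔪, y ∈ minimalPrimesCompl 𝔞 ∧ y ∈ minimalPrimesCompl 𝔟 := by
  by_contra! hno
  obtain ⟨p, hp, hpmax, h𝔪p⟩ := exists_le_of_disjoint_minimalPrimesCompl (𝔞 := 𝔞) (𝔟 := 𝔟) (q := 𝔪)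
    (Set.disjoint_left.2 fun y hy hy𝔪 => hno y hy𝔪 hy.1 hy.2)
  have hp : p.IsPrime := hp.elim (·.1.1) (·.1.1)
  exact hpmax (h𝔪.eq_of_le hp.ne_top h𝔪p ▸ h𝔪)

variable {𝔞 : Ideal R} {M : Type u} [AddCommGroup M] [Module R M] (hM : IsTorsionIdeal 𝔞 M)
  (h : ∀ i ≤ 2, Module.Finite R (ExtM R (R ⧸ 𝔞) M i)) {i : ℕ}
  {X : Type u} [AddCommGroup X] [Module R X] {π : ExtM R (R ⧸ 𝔞) M i →ₗ[R] X}
  (hπ : Function.Surjective π) (hker : Module.Finite R (LinearMap.ker π))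

include hM h hπ hker

lemma finite_ker_lsmul_baseChange_quotient_ext (C : Type u) [CommRing C] [IsNoetherianRing C]
    [Algebra R C] [Module.Flat R C] {w : C}
    (hd : DimLE 1 (𝔞.map (algebraMap R C) ⊔ Ideal.span {w})) :
    Module.Finite C (LinearMap.ker (LinearMap.lsmul C (C ⊗[R] X) w)) := by
  have finite_ext : ∀ j ≤ 2, Module.Finite C
      (ExtM C (C ⧸ 𝔞.map (algebraMap R C)) (C ⊗[R] M) j) := fun j hj => by
    have := h j hj
    obtain ⟨ε⟩ := ExtM.nonempty_baseChange_quotient_equiv (R := R) C M 𝔞 j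
    exact Module.Finite.equiv ε
  obtain ⟨ε⟩ := ExtM.nonempty_baseChange_quotient_equiv (R := R) C M 𝔞 i
  have hSerre := isSerreClass_finite C
  have hkerπ : Module.Finite C (LinearMap.ker (π.baseChange C)) :=
    hSerre.ker_of_exact ((LinearMap.ker π).subtype.baseChange C) _
      (Module.Flat.lTensor_exact C (LinearMap.exact_subtype_ker_map π)) inferInstance
  have hkerε : Module.Finite C (LinearMap.ker ε.symm.toLinearMap) := by
    rw [LinearEquiv.ker]
    infer_instance
  exact hSerre.ker_lsmul_mem_of_surjective
    (π := π.baseChange C ∘ₗ ε.symm.toLinearMap)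
    ((LinearMap.lTensor_surjective C hπ).comp ε.symm.surjective) w
    (hSerre.ker_comp _ _ hkerε hkerπ)
    (finite_ker_coker_lsmul_ext_quotient hd (hM.baseChange C) finite_ext i).1

lemma ker_lsmul_quotient_ext_eq_bot {y z : R} {k : ℕ}
    (hd : DimLE 0 (𝔞 ⊔ Ideal.span {z} ⊔ Ideal.span {y}))
    (hdiv : Function.Surjective (LinearMap.lsmul R X y))
    (hfin : Module.Finite R (LinearMap.ker (LinearMap.lsmul R X y)))
    (hz : LinearMap.ker (LinearMap.lsmul R X y) ≤ LinearMap.ker (LinearMap.lsmul R X (z ^ k))) :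
    LinearMap.ker (LinearMap.lsmul R X y) = ⊥ := by
  let C := AdicCompletion (Ideal.span {y}) R
  refine ker_lsmul_eq_bot_of_baseChange C (AdicCompletion.evalOneₐ (Ideal.span {y})) ?_
  have := finite_ker_lsmul_baseChange C (X := X) y
  refine ker_lsmul_eq_bot_of_finite_ker_lsmul (surjective_lsmul_baseChange C hdiv)
    (ker_lsmul_baseChange_le C hz) fun w n hw => ?_
  rw [map_pow, ← pow_mul] at hw
  exact finite_ker_lsmul_baseChange_quotient_ext hM h hπ hker C
    (dimLE_one_map_adicCompletion_sup hd hw)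

omit hker in
lemma surjective_lsmul_quotient_ext {y z : R} (hd : DimLE 1 (𝔞 ⊔ Ideal.span {y}))
    (htor : ∀ x : X, ∃ n : ℕ, z ^ n • x = 0)
    (hdiv : Function.Surjective (LinearMap.lsmul R X z)) :
    Function.Surjective (LinearMap.lsmul R X y) := by
  have : Module.Finite R (X ⧸ LinearMap.range (LinearMap.lsmul R X y)) :=
    (isSerreClass_finite R).coker_lsmul_mem_of_surjective hπ y
      (finite_ker_coker_lsmul_ext_quotient hd hM h i).2
  rw [← LinearMap.range_eq_top, ← Submodule.Quotient.subsingleton_iff]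
  refine subsingleton_of_injective_lsmul (y := z)
    (OrzechProperty.injective_of_surjective_endomorphism _ ?_) ?_
  · refine (Submodule.mkQ_surjective _).forall.2 fun x => ?_
    obtain ⟨x', rfl⟩ := hdiv x
    exact ⟨Submodule.mkQ _ x', rfl⟩
  · refine (Submodule.mkQ_surjective _).forall.2 fun x => ?_
    obtain ⟨n, hn⟩ := htor x
    exact ⟨n, by rw [← map_smul, hn, map_zero]⟩

/-
An element `y` that acts bijectively on `X` and lies in a maximal ideal `𝔪` gives
`ker z = y ker z ⊆ 𝔪 ker z`, contradicting Nakayama's lemma for a suitable choice of `𝔪`.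
-/
lemma subsingleton_quotient_ext (hd : DimLE 2 𝔞) {z : R} (hz : z ∈ minimalPrimesCompl 𝔞)
    (htor : ∀ x : X, ∃ n : ℕ, z ^ n • x = 0)
    (hdiv : Function.Surjective (LinearMap.lsmul R X z)) : Subsingleton X := by
  have finite_ker {y : R} (hy : y ∈ minimalPrimesCompl 𝔞) :
      Module.Finite R (LinearMap.ker (LinearMap.lsmul R X y)) :=
    (isSerreClass_finite R).ker_lsmul_mem_of_surjective hπ y hker
      (finite_ker_coker_lsmul_ext_quotient (hd.sup_span_singleton hy) hM h i).1
  refine subsingleton_of_injective_lsmul (LinearMap.ker_eq_bot.1 ?_) htor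
  by_contra hker_ne
  obtain ⟨𝔪, h𝔪, hnot⟩ :=
    exists_isMaximal_not_le_smul (Module.Finite.iff_fg.1 (finite_ker hz)) hker_ne
  obtain ⟨y, hy𝔪, hy, hy'⟩ := exists_mem_minimalPrimesCompl h𝔪 𝔞 (𝔞 ⊔ Ideal.span {z})
  have hydiv := surjective_lsmul_quotient_ext hM h hπ (hd.sup_span_singleton hy) htor hdiv
  obtain ⟨_, ⟨k, rfl⟩, hk⟩ := exists_mem_forall_smul_eq_zero (S := Submonoid.powers z)
    (Module.Finite.iff_fg.1 (finite_ker hy)) fun x _ =>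
      let ⟨n, hn⟩ := htor x; ⟨_, ⟨n, rfl⟩, hn⟩
  have hbot := ker_lsmul_quotient_ext_eq_bot hM h hπ hker
    ((hd.sup_span_singleton hz).sup_span_singleton hy') hydiv (finite_ker hy) hk
  refine hnot fun v hv => ?_
  obtain ⟨v', rfl⟩ := hydiv v
  refine Submodule.smul_mem_smul hy𝔪 ?_
  refine (LinearMap.map_eq_zero_iff _ (LinearMap.ker_eq_bot.1 hbot)).1 ?_
  exact (smul_comm y z v').trans hv

omit hM h hπ hker in
lemma extBound_of_dimLE_two (hd : DimLE 2 𝔞) : ExtBound R 2 𝔞 := by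
  intro M _ _ hM h i
  obtain ⟨z, hz, F, hF, hFtor⟩ := finiteUpToPowers_ext_quotient hM (fun j hj => h j hj.le) i
  obtain ⟨G, hG, hGmap⟩ := exists_fg_map_eq_inf_range
    (LinearMap.range (LinearMap.lsmul R (ExtM R (R ⧸ 𝔞) M i) z)).mkQ
    (finite_ker_coker_lsmul_ext_quotient (hd.sup_span_singleton hz) hM h i).2.fg_top
  rw [Submodule.range_mkQ, inf_top_eq, Submodule.map_mkQ_eq_top] at hGmap
  have hFG : (F ⊔ G).FG := hF.sup hG
  suffices Subsingleton (ExtM R (R ⧸ 𝔞) M i ⧸ (F ⊔ G)) from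
    ⟨Submodule.Quotient.subsingleton_iff.1 this ▸ hFG⟩
  refine subsingleton_quotient_ext hM h (F ⊔ G).mkQ_surjective
    (by rwa [Submodule.ker_mkQ, Module.Finite.iff_fg]) hd hz ?_ ?_
  · refine (Submodule.mkQ_surjective _).forall.2 fun x => ?_
    obtain ⟨_, ⟨n, rfl⟩, hn⟩ := hFtor x
    exact ⟨n, (Submodule.Quotient.mk_eq_zero _).2 (le_sup_left (a := F) hn)⟩
  · refine (Submodule.mkQ_surjective _).forall.2 fun x => ?_
    obtain ⟨_, ⟨x', rfl⟩, g, hg, rfl⟩ := Submodule.mem_sup.1 (hGmap.ge (Submodule.mem_top (x := x)))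
    have hg₀ : (F ⊔ G).mkQ g = 0 :=
      (Submodule.Quotient.mk_eq_zero _).2 (le_sup_right (a := F) hg)
    exact ⟨(F ⊔ G).mkQ x', by rw [map_add, hg₀, add_zero]; rfl⟩

end DimTwo

section PrimaryComponent

variable {R : Type u} [CommRing R] {𝔞 : Ideal R} {M : Type u} [AddCommGroup M] [Module R M]

lemma mem_primaryComponent_iff {x : M} :
    x ∈ 𝔞.primaryComponent M ↔ ∃ n : ℕ, ∀ a ∈ 𝔞 ^ n, a • x = 0 := by
  simp only [Ideal.primaryComponent_mem, Submodule.mem_torsionBySet_iff, SetLike.coe_sort_coe,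
    Subtype.forall]

variable (𝔞 M) in
lemma isTorsionIdeal_primaryComponent : IsTorsionIdeal 𝔞 (𝔞.primaryComponent M) := fun x =>
  (mem_primaryComponent_iff.1 x.2).imp fun _ hn a ha => Subtype.ext (hn a ha)

lemma IsTorsionIdeal.exists_pow_le_annihilator [Module.Finite R M] (h : IsTorsionIdeal 𝔞 M) :
    ∃ n : ℕ, 𝔞 ^ n ≤ Module.annihilator R M := by
  suffices ∀ N : Submodule R M, N.FG → ∃ n : ℕ, 𝔞 ^ n ≤ N.annihilator by
    obtain ⟨n, hn⟩ := this ⊤ Module.Finite.fg_top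
    exact ⟨n, by rwa [Submodule.annihilator_top] at hn⟩
  intro N hN
  induction N, hN using Submodule.fg_induction with
  | singleton x =>
    exact (h x).imp fun n hn a ha => (Submodule.mem_annihilator_span_singleton _ _).2 (hn a ha)
  | sup N₁ N₂ _ _ h₁ h₂ =>
    obtain ⟨k, hk⟩ := h₁
    obtain ⟨l, hl⟩ := h₂
    exact ⟨max k l, Submodule.annihilator_sup N₁ N₂ ▸
      le_inf ((Ideal.pow_le_pow_right (le_max_left k l)).trans hk)
        ((Ideal.pow_le_pow_right (le_max_right k l)).trans hl)⟩

end PrimaryComponent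

section KrullDimension

variable {R : Type u} [CommRing R] {𝔞 : Ideal R}

lemma dimLE_of_forall_ltSeries {n : ℕ}
    (h : ∀ s : LTSeries (PrimeSpectrum R), 𝔞 ≤ s.head.asIdeal → s.length ≤ n) : DimLE n 𝔞 := by
  induction n generalizing 𝔞 with
  | zero =>
    intro p hp h𝔞p
    obtain ⟨𝔪, h𝔪, hp𝔪⟩ := Ideal.exists_le_maximal p hp.ne_top
    rcases hp𝔪.eq_or_lt with rfl | hlt
    · exact h𝔪
    · let s : LTSeries (PrimeSpectrum R) := RelSeries.singleton _ ⟨𝔪, h𝔪.isPrime⟩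
      exact absurd (h (s.cons ⟨p, hp⟩ hlt) h𝔞p) (Nat.not_succ_le_zero _)
  | succ n ih =>
    intro p q hp _ h𝔞p hpq
    refine ih fun s hs => ?_
    have := h (s.cons ⟨p, hp⟩ (hpq.trans_le hs)) h𝔞p
    rw [RelSeries.cons_length] at this
    exact Nat.le_of_succ_le_succ this

lemma dimLE_of_ringKrullDim_quotient_le {n : ℕ} (h : ringKrullDim (R ⧸ 𝔞) ≤ n) :
    DimLE n 𝔞 := by
  rw [ringKrullDim_quotient] at h
  refine dimLE_of_forall_ltSeries fun s hs => ?_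
  let s' : LTSeries (PrimeSpectrum.zeroLocus (R := R) 𝔞) :=
    ⟨s.length, fun i => ⟨s i, hs.trans (s.head_le i)⟩, s.step⟩
  exact_mod_cast (Order.LTSeries.length_le_krullDim s').trans h

lemma not_primaryComponent_le_of_mem_minimalPrimes [IsNoetherianRing R] {p : Ideal R}
    (hp : p ∈ minimalPrimes R) (h𝔞p : 𝔞 ≤ p) : ¬ 𝔞.primaryComponent R ≤ p := by
  classical
  have := hp.1.1
  have hfin : (minimalPrimes R).Finite := minimalPrimes.finite_of_isNoetherianRing R
  let 𝔟 : Ideal R := (hfin.toFinset.erase p).inf id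
  have h𝔟 : ¬ 𝔟 ≤ p := by
    rw [Ideal.IsPrime.inf_le' this]
    rintro ⟨q, hq, hqp⟩
    obtain ⟨hne, hq⟩ := Finset.mem_erase.1 hq
    exact hne (hqp.antisymm (hp.2 (hfin.mem_toFinset.1 hq).1 hqp))
  have mul_le : 𝔟 * 𝔞 ≤ nilradical R := by
    rw [nilradical, ← Ideal.sInf_minimalPrimes]
    refine le_sInf fun q hq => ?_
    rcases eq_or_ne q p with rfl | hne
    · exact Ideal.mul_le_right.trans h𝔞p
    · exact Ideal.mul_le_left.trans
        (Finset.inf_le (Finset.mem_erase.2 ⟨hne, hfin.mem_toFinset.2 hq⟩))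
  obtain ⟨n, hn⟩ := (Ideal.FG.isNilpotent_iff_le_nilradical (𝔟 * 𝔞).fg_of_isNoetherianRing).2 mul_le
  intro hle
  refine h𝔟 (Ideal.IsPrime.le_of_pow_le (n := n) fun b hb => hle ?_)
  refine mem_primaryComponent_iff.2 ⟨n, fun a ha => ?_⟩
  rw [smul_eq_mul, mul_comm, ← Ideal.mem_bot, ← Ideal.zero_eq_bot, ← hn, mul_pow]
  exact Ideal.mul_mem_mul hb ha

lemma dimLE_sup_primaryComponent [IsNoetherianRing R] (𝔞 : Ideal R) {n : ℕ}
    (h : ringKrullDim R ≤ (n + 1 : ℕ)) : DimLE n (𝔞 ⊔ 𝔞.primaryComponent R) := by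
  refine dimLE_of_forall_ltSeries fun s hs => ?_
  have not_minimal : s.head.asIdeal ∉ minimalPrimes R := fun hmin =>
    not_primaryComponent_le_of_mem_minimalPrimes hmin (le_sup_left.trans hs)
      (le_sup_right.trans hs)
  obtain ⟨q, hq, hqs⟩ := Ideal.exists_minimalPrimes_le (bot_le : ⊥ ≤ s.head.asIdeal)
  have hlt : q < s.head.asIdeal := hqs.lt_of_ne fun heq => not_minimal (heq ▸ hq)
  have := (Order.LTSeries.length_le_krullDim (s.cons ⟨q, hq.1.1⟩ hlt)).trans h
  rw [RelSeries.cons_length, Nat.cast_le] at this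
  exact Nat.le_of_succ_le_succ this

end KrullDimension

section ExtBoundTwo

variable {R : Type u} [CommRing R] [IsNoetherianRing R]

lemma finite_quotient_torsionBySet (J : Ideal R) (M : Type u) [AddCommGroup M] [Module R M]
    [Module.Finite R (J →ₗ[R] M)] :
    Module.Finite R (M ⧸ Submodule.torsionBySet R M (J : Set R)) := by
  let ev : M →ₗ[R] J →ₗ[R] M := (LinearMap.lsmul R M).flip.compl₂ J.subtype
  have ker_ev : LinearMap.ker ev = Submodule.torsionBySet R M (J : Set R) := by
    ext m
    exact LinearMap.ext_iff.trans (Submodule.mem_torsionBySet_iff _ _).symm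
  exact ker_ev ▸ Module.Finite.equiv ev.quotKerEquivRange.symm

lemma extBound_of_sup_primaryComponent {n : ℕ} {𝔞 : Ideal R}
    (hB : ExtBound R n (𝔞 ⊔ 𝔞.primaryComponent R)) : ExtBound R n 𝔞 := by
  have hP := isSerreClass_finite R
  intro M _ _ hM h
  set J : Ideal R := 𝔞.primaryComponent R
  let N := Submodule.torsionBySet R M (J : Set R)
  have hJN : J ≤ Module.annihilator R N := le_annihilator_torsionBySet J M
  have : Module.Finite R (M ⧸ N) := by
    obtain ⟨k, hk⟩ := (isTorsionIdeal_primaryComponent 𝔞 R).exists_pow_le_annihilator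
    have : Module.Finite R (ExtM R J M 0) := hP.ext_mem_of_le_radical_annihilator _
      (fun a ha => ⟨k, hk (Ideal.pow_mem_pow ha k)⟩) 0 fun j hj => h j (hj.trans n.zero_le)
    have : Module.Finite R (J →ₗ[R] M) := Module.Finite.equiv (ExtM.zeroEquiv J M)
    exact finite_quotient_torsionBySet J M
  have ext_quotient : ∀ i, Module.Finite R (ExtM R (R ⧸ 𝔞) (M ⧸ N) i) := ExtM.finite _ _
  have hse := isShortExact_subtype_mkQ N
  have ext_N_of_le : ∀ i ≤ n, Module.Finite R (ExtM R (R ⧸ 𝔞) N i) := fun i hi =>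
    hP.covariant_mem₁ _ hse i (fun j _ => ext_quotient j) (h i hi)
  have ext_sup_N := hB N ((hM.submodule N).sup_of_le_annihilator hJN) fun i hi =>
    hP.ext_quotient_mem_of_le_radical (le_sup_left.trans Ideal.le_radical) i
      fun j hj => ext_N_of_le j (hj.trans hi)
  exact fun i => hP.covariant_mem₂ _ hse i
    (hP.ext_quotient_mem_of_ext_quotient_sup_mem hJN 𝔞 ext_sup_N i) (ext_quotient i)

omit [IsNoetherianRing R] in
lemma exists_span_pair_eq_span_range {n : ℕ} (hn : n ≤ 2) (f : Fin n → R) :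
    ∃ x y, Ideal.span {x, y} = Ideal.span (Set.range f) := by
  interval_cases n
  · exact ⟨0, 0, by simp⟩
  · exact ⟨f 0, 0, by simp [Ideal.span_insert, Set.range_unique]⟩
  · exact ⟨f 0, f 1, congrArg Ideal.span <| by
      ext; simp [Fin.exists_fin_two, eq_comm]⟩

lemma exists_radical_span_pair_eq {𝔞 : Ideal R} (h : arithRank 𝔞 ≤ 2) :
    ∃ x y, (Ideal.span {x, y}).radical = 𝔞.radical := by
  have nonempty : {n : ℕ | ∃ f : Fin n → R,
      (Ideal.span (Set.range f)).radical = 𝔞.radical}.Nonempty := by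
    obtain ⟨n, f, hf⟩ := Submodule.fg_iff_exists_fin_generating_family.1 𝔞.fg_of_isNoetherianRing
    exact ⟨n, f, congrArg Ideal.radical hf⟩
  obtain ⟨f, hf⟩ := Nat.sInf_mem nonempty
  obtain ⟨x, y, hxy⟩ := exists_span_pair_eq_span_range h f
  exact ⟨x, y, hxy ▸ hf⟩

lemma extBound_two {𝔞 : Ideal R}
    (hcase : ringKrullDim R ≤ 3 ∨ ringKrullDim (R ⧸ 𝔞) ≤ 2 ∨ arithRank 𝔞 ≤ 2) :
    ExtBound R 2 𝔞 := by
  rcases hcase with hR | hquot | hara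
  · exact extBound_of_sup_primaryComponent
      (extBound_of_dimLE_two (dimLE_sup_primaryComponent 𝔞 hR))
  · exact extBound_of_dimLE_two (dimLE_of_ringKrullDim_quotient_le hquot)
  · obtain ⟨x, y, h⟩ := exists_radical_span_pair_eq hara
    exact extBound_of_radical_eq_span_pair x y h

end ExtBoundTwo

section OpHomology

variable {R : Type u} [CommRing R]
  (L : HomologicalComplex (ModuleCat.{u} R)ᵒᵖ (ComplexShape.down ℕ)) (n : ℕ)

lemma homologyι_unop_surjective : Function.Surjective (L.homologyι n).unop.hom := by
  rw [← ModuleCat.epi_iff_surjective]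
  infer_instance

lemma pOpcycles_unop_injective : Function.Injective (L.pOpcycles n).unop.hom := by
  rw [← ModuleCat.mono_iff_injective]
  infer_instance

lemma exact_pOpcycles_unop_d_unop :
    Function.Exact (L.pOpcycles n).unop.hom (L.d (n + 1) n).unop.hom :=
  let S := ShortComplex.mk (L.d (n + 1) n) (L.pOpcycles n) (L.d_pOpcycles _ _)
  have hS : S.Exact := S.exact_of_g_is_cokernel (L.opcyclesIsCokernel (n + 1) n (by simp))
  (ShortComplex.ShortExact.moduleCat_exact_iff_function_exact _).1 hS.unop

lemma homologyι_unop_eq_zero_iff (z : (L.opcycles n).unop) :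
    (L.homologyι n).unop.hom z = 0 ↔
      ∃ y, (L.d n ((ComplexShape.down ℕ).next n)).unop.hom y = (L.pOpcycles n).unop.hom z := by
  set j := (ComplexShape.down ℕ).next n with hj
  let S := ShortComplex.mk (L.homologyι n) (L.fromOpcycles n j) (L.homologyι_comp_fromOpcycles _ _)
  have hS : S.Exact := S.exact_of_f_is_kernel (L.homologyIsKernel n j hj.symm)
  have fromOpcycles_comp : (L.fromOpcycles n j).unop ≫ (L.pOpcycles n).unop = (L.d n j).unop := by
    rw [← unop_comp, L.p_fromOpcycles]
  refine ((ShortComplex.ShortExact.moduleCat_exact_iff_function_exact _).1 hS.unop z).trans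
    (exists_congr fun y => ?_)
  rw [← fromOpcycles_comp]
  exact (pOpcycles_unop_injective L n).eq_iff.symm

end OpHomology

section ExtComparison

variable {R : Type u} [CommRing R] {N M : ModuleCat.{u} R} (P : ProjectiveResolution N)

/-- The complex `Hom(P, M)`, as a chain complex in the opposite category; its homology is the
derived functor `extObj N M`. -/
noncomputable def opHomComplex (M : ModuleCat.{u} R) :
    HomologicalComplex (ModuleCat.{u} R)ᵒᵖ (ComplexShape.down ℕ) :=
  ((((linearYoneda R (ModuleCat.{u} R)).obj M).rightOp.mapHomologicalComplex _).obj P.complex)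

/-- The inclusion of the `n`-cocycles of `Hom(P, M)` into `Hom(P_n, M)`. Cocycles are the opcycles
of `opHomComplex`, read in the opposite category. -/
noncomputable def cochainOfCocycle (n : ℕ) :
    ((opHomComplex P M).opcycles n).unop →ₗ[R] (P.complex.X n ⟶ M) :=
  ((opHomComplex P M).pOpcycles n).unop.hom

lemma d_comp_eq_zero_iff_mem_range_cochainOfCocycle (n : ℕ) (f : P.complex.X n ⟶ M) :
    P.complex.d (n + 1) n ≫ f = 0 ↔ f ∈ Set.range (cochainOfCocycle P n) :=
  exact_pOpcycles_unop_d_unop (opHomComplex P M) n f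

lemma d_comp_cochainOfCocycle (n : ℕ) (z : ((opHomComplex P M).opcycles n).unop) :
    P.complex.d (n + 1) n ≫ cochainOfCocycle P n z = 0 :=
  (d_comp_eq_zero_iff_mem_range_cochainOfCocycle P n _).2 ⟨z, rfl⟩

lemma smul_extMk {n : ℕ} (f : P.complex.X n ⟶ M) (m : ℕ) (hm : n + 1 = m)
    (hf : P.complex.d m n ≫ f = 0) (r : R) :
    P.extMk (r • f) m hm (by simp [hf]) = r • P.extMk f m hm hf := by
  have h := P.extMk_comp_mk₀ f m hm hf (r • 𝟙 M)
  simp only [Linear.comp_smul, Category.comp_id] at h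
  rw [← h, Abelian.Ext.mk₀_smul, Abelian.Ext.comp_smul, Abelian.Ext.comp_mk₀_id]

lemma extMk_eq_zero_iff_of_zero (f : P.complex.X 0 ⟶ M) (m : ℕ) (hm : 0 + 1 = m)
    (hf : P.complex.d m 0 ≫ f = 0) : P.extMk f m hm hf = 0 ↔ f = 0 := by
  refine ⟨fun h => ?_, fun h => by simp [h]⟩
  rw [← P.extEquivCohomologyClass.apply_eq_iff_eq,
    ProjectiveResolution.extEquivCohomologyClass_extMk,
    ProjectiveResolution.extEquivCohomologyClass_zero,
    CochainComplex.HomComplex.CohomologyClass.mk_eq_zero_iff,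
    CochainComplex.HomComplex.Cocycle.toSingleMk_mem_coboundaries_iff _ _ _ _ _ 1 (by lia)] at h
  obtain ⟨g, hg⟩ := h
  have d_eq_zero : P.cochainComplex.d (-((0 : ℕ) : ℤ)) 1 = 0 :=
    (P.cochainComplex.isZero_of_isStrictlyLE 0 1).eq_of_tgt _ _
  rw [d_eq_zero, Limits.zero_comp] at hg
  exact ((cancel_epi (P.cochainComplexXIso (-((0 : ℕ) : ℤ)) 0 rfl).hom).1
    (by rw [← hg, Limits.comp_zero])).symm

lemma extMk_eq_zero_iff_exists_d_next_comp_eq {n : ℕ} (f : P.complex.X n ⟶ M) (m : ℕ)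
    (hm : n + 1 = m) (hf : P.complex.d m n ≫ f = 0) :
    P.extMk f m hm hf = 0 ↔
      ∃ g, P.complex.d n ((ComplexShape.down ℕ).next n) ≫ g = f := by
  cases n with
  | zero =>
    have d_eq_zero : P.complex.d 0 ((ComplexShape.down ℕ).next 0) = 0 :=
      P.complex.shape _ _ (by simp)
    rw [extMk_eq_zero_iff_of_zero]
    simp only [d_eq_zero, Limits.zero_comp, exists_const]
    exact eq_comm
  | succ n =>
    rw [P.extMk_eq_zero_iff f m hm hf n rfl, (ComplexShape.down ℕ).next_eq' rfl]

/-- The class in `Abelian.Ext` of a cocycle of `Hom(P, M)`. -/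
noncomputable def abelianExtMk (n : ℕ) :
    ((opHomComplex P M).opcycles n).unop →ₗ[R] Abelian.Ext N M n where
  toFun z := P.extMk (cochainOfCocycle P n z) (n + 1) rfl (d_comp_cochainOfCocycle P n z)
  map_add' x y := by
    rw [P.add_extMk]
    congr 1
    exact map_add _ x y
  map_smul' r x := by
    rw [RingHom.id_apply, ← smul_extMk]
    congr 1
    exact map_smul _ r x

lemma abelianExtMk_surjective (n : ℕ) : Function.Surjective (abelianExtMk (M := M) P n) := by
  intro x
  obtain ⟨f, hf, rfl⟩ := P.extMk_surjective x (n + 1) rfl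
  obtain ⟨z, rfl⟩ := (d_comp_eq_zero_iff_mem_range_cochainOfCocycle P n f).1 hf
  exact ⟨z, rfl⟩

/-- The class in the derived functor `extObj` of a cocycle of `Hom(P, M)`. -/
noncomputable def extObjMk (n : ℕ) :
    ((opHomComplex P M).opcycles n).unop →ₗ[R] extObj N M n :=
  (P.isoLeftDerivedObj ((linearYoneda R (ModuleCat.{u} R)).obj M).rightOp n).hom.unop.hom ∘ₗ
    ((opHomComplex P M).homologyι n).unop.hom

lemma isoLeftDerivedObj_unop_bijective (n : ℕ) : Function.Bijective
    (P.isoLeftDerivedObj ((linearYoneda R (ModuleCat.{u} R)).obj M).rightOp n).hom.unop.hom :=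
  ConcreteCategory.bijective_of_isIso
    (P.isoLeftDerivedObj ((linearYoneda R (ModuleCat.{u} R)).obj M).rightOp n).hom.unop

lemma extObjMk_surjective (n : ℕ) : Function.Surjective (extObjMk (M := M) P n) :=
  (isoLeftDerivedObj_unop_bijective P n).2.comp (homologyι_unop_surjective _ n)

lemma ker_extObjMk (n : ℕ) :
    LinearMap.ker (extObjMk (M := M) P n) = LinearMap.ker (abelianExtMk (M := M) P n) := by
  ext z
  rw [LinearMap.mem_ker, LinearMap.mem_ker]
  calc extObjMk P n z = 0
    _ ↔ ((opHomComplex P M).homologyι n).unop.hom z = 0 :=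
      map_eq_zero_iff _ (isoLeftDerivedObj_unop_bijective P n).1
    _ ↔ _ := homologyι_unop_eq_zero_iff (opHomComplex P M) n z
    _ ↔ abelianExtMk P n z = 0 := (extMk_eq_zero_iff_exists_d_next_comp_eq P _ (n + 1) rfl
      (d_comp_cochainOfCocycle P n z)).symm

/-- The comparison between `Abelian.Ext` and the derived functor `extObj`, matching the classes of
each cocycle of a projective resolution. -/
noncomputable def extEquiv (N M : ModuleCat.{u} R) (n : ℕ) :
    Abelian.Ext N M n ≃ₗ[R] extObj N M n :=
  ((abelianExtMk (projectiveResolution N) n).quotKerEquivOfSurjective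
      (abelianExtMk_surjective _ n)).symm ≪≫ₗ
    Submodule.quotEquivOfEq _ _ (ker_extObjMk _ n).symm ≪≫ₗ
    (extObjMk (projectiveResolution N) n).quotKerEquivOfSurjective (extObjMk_surjective _ n)

lemma extEquiv_abelianExtMk (n : ℕ)
    (z : ((opHomComplex (projectiveResolution N) M).opcycles n).unop) :
    extEquiv N M n (abelianExtMk (projectiveResolution N) n z) =
      extObjMk (projectiveResolution N) n z := by
  rw [← LinearMap.quotKerEquivOfSurjective_apply_mk _ (abelianExtMk_surjective _ n), extEquiv,
    LinearEquiv.trans_apply, LinearEquiv.trans_apply, LinearEquiv.symm_apply_apply]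
  rfl

lemma extObj_map_extObjMk {N' : ModuleCat.{u} R} {P : ProjectiveResolution N}
    {P' : ProjectiveResolution N'} {g : N' ⟶ N} (φ : ProjectiveResolution.Hom P' P g) (n : ℕ)
    (z : ((opHomComplex P M).opcycles n).unop) :
    ∃ z', cochainOfCocycle P' n z' = φ.hom.f n ≫ cochainOfCocycle P n z ∧
      (((Ext R (ModuleCat.{u} R) n).map g.op).app M).hom (extObjMk P n z) = extObjMk P' n z' := by
  let F := ((linearYoneda R (ModuleCat.{u} R)).obj M).rightOp
  let ψ : opHomComplex P' M ⟶ opHomComplex P M := (F.mapHomologicalComplex _).map φ.hom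
  refine ⟨(HomologicalComplex.opcyclesMap ψ n).unop.hom z, ?_, ?_⟩
  · have p_naturality := congrArg Quiver.Hom.unop (HomologicalComplex.p_opcyclesMap ψ n)
    exact congr($(p_naturality).hom z)
  · have iso_naturality := congrArg Quiver.Hom.unop
      (ProjectiveResolution.isoLeftDerivedObj_hom_naturality g P' P φ.hom
        (by simpa using φ.hom_f_zero_comp_π_f_zero) F n)
    have ι_naturality :
        ((opHomComplex P M).homologyι n).unop ≫ (HomologicalComplex.homologyMap ψ n).unop =
          (HomologicalComplex.opcyclesMap ψ n).unop ≫ ((opHomComplex P' M).homologyι n).unop :=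
      congrArg Quiver.Hom.unop (HomologicalComplex.homologyι_naturality ψ n)
    exact congr($(iso_naturality).hom (((opHomComplex P M).homologyι n).unop.hom z)).trans
      (congrArg (P'.isoLeftDerivedObj F n).hom.unop.hom congr($(ι_naturality).hom z))

lemma extEquiv_mk₀_comp {N' : ModuleCat.{u} R} (g : N' ⟶ N) (n : ℕ) (x : Abelian.Ext N M n) :
    extEquiv N' M n ((Abelian.Ext.mk₀ g).comp x (zero_add n)) =
      (((Ext R (ModuleCat.{u} R) n).map g.op).app M).hom (extEquiv N M n x) := by
  let φ : ProjectiveResolution.Hom (projectiveResolution N') (projectiveResolution N) g :=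
    ⟨ProjectiveResolution.lift g _ _, by
      simpa using ProjectiveResolution.lift_commutes_zero g _ _⟩
  obtain ⟨z, rfl⟩ := abelianExtMk_surjective (projectiveResolution N) n x
  obtain ⟨z', hz', h⟩ := extObj_map_extObjMk φ n z
  rw [extEquiv_abelianExtMk, h, ← extEquiv_abelianExtMk]
  refine congrArg (extEquiv N' M n) ((ProjectiveResolution.mk₀_comp_extMk
    (cochainOfCocycle (projectiveResolution N) n z) (n + 1) rfl
    (d_comp_cochainOfCocycle _ n z) φ).trans ?_)
  simp only [← hz']
  rfl

end ExtComparison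

section LocalCohomologyData

variable {R : Type u} [CommRing R] (𝔞 : Ideal R)

/-- The projection `R/𝔞^t → R/𝔞^s` for `s ≤ t`, a transition map of the direct system computing
local cohomology. -/
noncomputable abbrev powFactor {s t : ℕ} (h : s ≤ t) : (R ⧸ 𝔞 ^ t) →ₗ[R] (R ⧸ 𝔞 ^ s) :=
  Submodule.factor (Ideal.pow_le_pow_right h)

/-- A presentation of the module `H` as the direct limit of the `Ext^i(R/𝔞^t, M)`, in terms of
elements. Local cohomology has one, and the modules with one are unique up to isomorphism. -/
structure LocalCohomologyData (i : ℕ) (M H : Type u) [AddCommGroup M] [Module R M]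
    [AddCommGroup H] [Module R H] where
  /-- The maps to the direct limit. -/
  ι (t : ℕ) : ExtM R (R ⧸ 𝔞 ^ t) M i →ₗ[R] H
  ι_comap {s t : ℕ} (h : s ≤ t) (x : ExtM R (R ⧸ 𝔞 ^ s) M i) :
    ι t (ExtM.comap M (powFactor 𝔞 h) i x) = ι s x
  exists_ι (y : H) : ∃ t x, ι t x = y
  exists_comap_eq_zero {t : ℕ} (x : ExtM R (R ⧸ 𝔞 ^ t) M i) (hx : ι t x = 0) :
    ∃ (v : ℕ) (h : t ≤ v), ExtM.comap M (powFactor 𝔞 h) i x = 0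

open Limits in
lemma nonempty_localCohomologyData (i : ℕ) (M : ModuleCat.{u} R) :
    Nonempty (LocalCohomologyData 𝔞 i M ((localCohomology 𝔞 i).obj M)) := by
  let D := localCohomology.diagram (localCohomology.idealPowersDiagram 𝔞) i
  let F := D ⋙ (evaluation _ _).obj M
  let c : Cocone F := ((evaluation _ _).obj M).mapCocone (colimit.cocone D)
  have hc : IsColimit c := isColimitOfPreserves _ (colimit.isColimit _)
  have : PreservesFilteredColimitsOfSize.{0, 0} (forget (ModuleCat.{u} R)) :=
    preservesFilteredColimitsOfSize_shrink.{0, u, 0, u} _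
  let index (t : ℕ) : ℕᵒᵖᵒᵖ := Opposite.op (Opposite.op t)
  let indexHom {s t : ℕ} (h : s ≤ t) : index s ⟶ index t := (homOfLE h).op.op
  let e (t : ℕ) : ExtM R (R ⧸ 𝔞 ^ t) M i ≃ₗ[R] F.obj (index t) :=
    extEquiv (ModuleCat.of R (R ⧸ 𝔞 ^ t)) M i
  have e_comap {s t : ℕ} (h : s ≤ t) (x) : e t (ExtM.comap M (powFactor 𝔞 h) i x) =
      (F.map (indexHom h)).hom (e s x) :=
    extEquiv_mk₀_comp (ModuleCat.ofHom (powFactor 𝔞 h)) i x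
  refine ⟨⟨fun t => (c.ι.app (index t)).hom ∘ₗ (e t).toLinearMap, fun {s t} h x => ?_,
    fun y => ?_, fun {t} x hx => ?_⟩⟩
  · exact (congrArg (c.ι.app (index t)).hom (e_comap h x)).trans
      congr($(c.w (indexHom h)).hom (e s x))
  · obtain ⟨j, x, hx⟩ := Concrete.isColimit_exists_rep F hc y
    exact ⟨j.unop.unop, (e _).symm x,
      (congrArg (c.ι.app j).hom ((e j.unop.unop).apply_symm_apply x)).trans hx⟩
  · obtain ⟨k, f, g, hfg⟩ := Concrete.isColimit_exists_of_rep_eq F hc (e t x)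
      (0 : F.obj (index t)) (hx.trans (map_zero (c.ι.app (index t)).hom).symm)
    refine ⟨k.unop.unop, leOfHom f.unop.unop, (e _).injective ?_⟩
    rw [e_comap, map_zero]
    exact hfg.trans (map_zero (F.map g).hom)

end LocalCohomologyData

namespace LocalCohomologyData

variable {R : Type u} [CommRing R] {𝔞 : Ideal R} {i j : ℕ} {M M' H H' : Type u}
  [AddCommGroup M] [Module R M] [AddCommGroup M'] [Module R M']
  [AddCommGroup H] [Module R H] [AddCommGroup H'] [Module R H']

lemma ι_eq_of_ι_eq (D : LocalCohomologyData 𝔞 i M H) (D' : LocalCohomologyData 𝔞 i M H')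
    {s t : ℕ} {x : ExtM R (R ⧸ 𝔞 ^ s) M i} {y : ExtM R (R ⧸ 𝔞 ^ t) M i}
    (h : D.ι s x = D.ι t y) : D'.ι s x = D'.ι t y := by
  rw [← D.ι_comap (le_max_left s t), ← D.ι_comap (le_max_right s t), ← sub_eq_zero,
    ← map_sub] at h
  obtain ⟨v, hv, h0⟩ := D.exists_comap_eq_zero _ h
  rw [← D'.ι_comap (le_max_left s t), ← D'.ι_comap (le_max_right s t), ← sub_eq_zero,
    ← map_sub, ← D'.ι_comap hv, h0, map_zero]

/-- The canonical map between two direct limits of the same system. -/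
noncomputable def lift (D : LocalCohomologyData 𝔞 i M H) (D' : LocalCohomologyData 𝔞 i M H') :
    H →ₗ[R] H' where
  toFun y := D'.ι (D.exists_ι y).choose (D.exists_ι y).choose_spec.choose
  map_add' y z := by
    set s := (D.exists_ι y).choose
    set t := (D.exists_ι z).choose
    rw [← D'.ι_comap (le_max_left s t), ← D'.ι_comap (le_max_right s t), ← map_add]
    refine D.ι_eq_of_ι_eq D' ?_
    rw [map_add, D.ι_comap, D.ι_comap, (D.exists_ι y).choose_spec.choose_spec,
      (D.exists_ι z).choose_spec.choose_spec, (D.exists_ι (y + z)).choose_spec.choose_spec]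
  map_smul' r y := by
    rw [RingHom.id_apply, ← map_smul]
    refine D.ι_eq_of_ι_eq D' ?_
    rw [map_smul, (D.exists_ι y).choose_spec.choose_spec,
      (D.exists_ι (r • y)).choose_spec.choose_spec]

lemma lift_ι (D : LocalCohomologyData 𝔞 i M H) (D' : LocalCohomologyData 𝔞 i M H') (t : ℕ)
    (x : ExtM R (R ⧸ 𝔞 ^ t) M i) : D.lift D' (D.ι t x) = D'.ι t x :=
  D.ι_eq_of_ι_eq D' (D.exists_ι (D.ι t x)).choose_spec.choose_spec

lemma lift_comp_lift (D : LocalCohomologyData 𝔞 i M H) (D' : LocalCohomologyData 𝔞 i M H') :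
    D'.lift D ∘ₗ D.lift D' = LinearMap.id := by
  ext y
  obtain ⟨t, x, rfl⟩ := D.exists_ι y
  rw [LinearMap.comp_apply, lift_ι, lift_ι, LinearMap.id_apply]

/-- Direct limits of the same system are isomorphic. -/
noncomputable def equiv (D : LocalCohomologyData 𝔞 i M H) (D' : LocalCohomologyData 𝔞 i M H') :
    H ≃ₗ[R] H' :=
  LinearEquiv.ofLinearMap (D.lift D') (D'.lift D) (lift_comp_lift D' D) (lift_comp_lift D D')

/-- Transport along a morphism of systems that becomes an isomorphism in the limit. -/
noncomputable def ofMorphism (D : LocalCohomologyData 𝔞 j M' H)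
    (ψ : ∀ t, ExtM R (R ⧸ 𝔞 ^ t) M i →ₗ[R] ExtM R (R ⧸ 𝔞 ^ t) M' j)
    (hψ : ∀ {s t : ℕ} (h : s ≤ t) (x), ψ t (ExtM.comap M (powFactor 𝔞 h) i x) =
      ExtM.comap M' (powFactor 𝔞 h) j (ψ s x))
    (hker : ∀ t (x), ψ t x = 0 → ∃ (v : ℕ) (h : t ≤ v), ExtM.comap M (powFactor 𝔞 h) i x = 0)
    (hsurj : ∀ t (y), ∃ (v : ℕ) (h : t ≤ v), ∃ x, ψ v x = ExtM.comap M' (powFactor 𝔞 h) j y) :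
    LocalCohomologyData 𝔞 i M H where
  ι t := D.ι t ∘ₗ ψ t
  ι_comap h x := by rw [LinearMap.comp_apply, hψ, D.ι_comap, LinearMap.comp_apply]
  exists_ι y := by
    obtain ⟨t, x, rfl⟩ := D.exists_ι y
    obtain ⟨v, h, z, hz⟩ := hsurj t x
    exact ⟨v, z, by rw [LinearMap.comp_apply, hz, D.ι_comap]⟩
  exists_comap_eq_zero {t} x hx := by
    obtain ⟨v, h, hv⟩ := D.exists_comap_eq_zero _ hx
    rw [← hψ] at hv
    obtain ⟨w, h', hw⟩ := hker v _ hv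
    have factor_comp : powFactor 𝔞 h ∘ₗ powFactor 𝔞 h' = powFactor 𝔞 (h.trans h') :=
      Submodule.factor_comp _ _
    exact ⟨w, h.trans h', by rw [← factor_comp, ExtM.comap_comp, LinearMap.comp_apply, hw]⟩

lemma isTorsionIdeal (D : LocalCohomologyData 𝔞 i M H) : IsTorsionIdeal 𝔞 H := fun y => by
  obtain ⟨t, x, rfl⟩ := D.exists_ι y
  refine ⟨t, fun a ha => ?_⟩
  have lsmul_eq_zero : LinearMap.lsmul R (R ⧸ 𝔞 ^ t) a = 0 :=
    lsmul_eq_zero_of_mem_annihilator (Ideal.annihilator_quotient.ge ha)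
  have smul_eq_zero : LinearMap.lsmul R _ a x = 0 := by
    rw [← ExtM.comap_lsmul, lsmul_eq_zero, ExtM.comap_zero_hom, LinearMap.zero_apply]
  rw [← map_smul, ← LinearMap.lsmul_apply, smul_eq_zero, map_zero]

variable (𝔞 M) in
lemma torsionBySet_pow_le_primaryComponent (t : ℕ) :
    Submodule.torsionBySet R M (𝔞 ^ t : Ideal R) ≤ 𝔞.primaryComponent M :=
  le_iSup (fun t : ℕ => Submodule.torsionBySet R M (𝔞 ^ t : Ideal R)) t

variable (𝔞 M) in
/-- The zeroth local cohomology is the `𝔞`-torsion submodule `⋃ₜ (0 :_M 𝔞^t)`. -/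
noncomputable def zero : LocalCohomologyData 𝔞 0 M (𝔞.primaryComponent M) where
  ι t := Submodule.inclusion (torsionBySet_pow_le_primaryComponent 𝔞 M t) ∘ₗ
    (extZeroEquivTorsionBySet M (𝔞 ^ t)).toLinearMap
  ι_comap h x := Subtype.ext congr($(ExtM.zeroEquiv_comap M (powFactor 𝔞 h) x) 1)
  exists_ι := fun ⟨m, hm⟩ => by
    obtain ⟨t, ht⟩ := (𝔞.primaryComponent_mem M m).1 hm
    refine ⟨t, (extZeroEquivTorsionBySet M (𝔞 ^ t)).symm ⟨m, ht⟩, ?_⟩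
    rw [LinearMap.comp_apply, LinearEquiv.coe_coe, LinearEquiv.apply_symm_apply]
    rfl
  exists_comap_eq_zero {t} x hx := by
    have inclusion_injective :=
      Submodule.inclusion_injective (torsionBySet_pow_le_primaryComponent 𝔞 M t)
    have hx0 : x = 0 := (extZeroEquivTorsionBySet M (𝔞 ^ t)).map_eq_zero_iff.1
      ((map_eq_zero_iff _ inclusion_injective).1 hx)
    exact ⟨t, le_rfl, by rw [hx0, map_zero]⟩

end LocalCohomologyData

section TorsionFree

variable {R : Type u} [CommRing R] {𝔞 : Ideal R}

lemma subsingleton_hom_of_primaryComponent_eq_bot {T N : Type u} [AddCommGroup T] [Module R T]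
    [AddCommGroup N] [Module R N] {n : ℕ} (hT : 𝔞 ^ n ≤ Module.annihilator R T)
    (hN : 𝔞.primaryComponent N = ⊥) : Subsingleton (T →ₗ[R] N) := by
  refine subsingleton_of_forall_eq 0 fun f => LinearMap.ext fun x => ?_
  have hfx : f x ∈ 𝔞.primaryComponent N := mem_primaryComponent_iff.2 ⟨n, fun a ha => by
    rw [← map_smul, Module.mem_annihilator.1 (hT ha), map_zero]⟩
  exact (Submodule.mem_bot R).1 (hN ▸ hfx)

variable [IsNoetherianRing R] (M : Type u) [AddCommGroup M] [Module R M]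

lemma primaryComponent_quotient_primaryComponent :
    𝔞.primaryComponent (M ⧸ 𝔞.primaryComponent M) = ⊥ := by
  refine (Submodule.eq_bot_iff _).2 ((Submodule.mkQ_surjective _).forall.2 fun m hm => ?_)
  obtain ⟨n, hn⟩ := mem_primaryComponent_iff.1 hm
  have smul_mem : ∀ a ∈ 𝔞 ^ n, a • m ∈ 𝔞.primaryComponent M := fun a ha =>
    (Submodule.Quotient.mk_eq_zero _).1 (hn a ha)
  let f : ↥(𝔞 ^ n) →ₗ[R] 𝔞.primaryComponent M :=
    (LinearMap.toSpanSingleton R M m).restrict smul_mem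
  obtain ⟨k, hk⟩ :=
    ((isTorsionIdeal_primaryComponent 𝔞 M).submodule (LinearMap.range f)).exists_pow_le_annihilator
  refine (Submodule.Quotient.mk_eq_zero _).2 (mem_primaryComponent_iff.2 ⟨k + n, ?_⟩)
  suffices 𝔞 ^ (k + n) ≤ LinearMap.ker (LinearMap.toSpanSingleton R M m) from this
  rw [pow_add, Ideal.mul_le]
  intro b hb c hc
  have smul_f : b • f.rangeRestrict ⟨c, hc⟩ = 0 := Module.mem_annihilator.1 (hk hb) _
  rw [LinearMap.mem_ker, LinearMap.toSpanSingleton_apply, mul_smul]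
  exact congr(($smul_f : M))

lemma subsingleton_ext_zero_quotient_primaryComponent {T : Type u} [AddCommGroup T] [Module R T]
    {n : ℕ} (hT : 𝔞 ^ n ≤ Module.annihilator R T) :
    Subsingleton (ExtM R T (M ⧸ 𝔞.primaryComponent M) 0) :=
  have := subsingleton_hom_of_primaryComponent_eq_bot hT
    (primaryComponent_quotient_primaryComponent M)
  (ExtM.zeroEquiv T _).toEquiv.subsingleton

end TorsionFree

section TorsionInjective

variable {R : Type u} [CommRing R] (𝔞 : Ideal R)

lemma exists_pow_inf_le_pow_mul [IsNoetherianRing R] (J : Ideal R) (n : ℕ) :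
    ∃ m, 𝔞 ^ m ⊓ J ≤ 𝔞 ^ n * J := by
  obtain ⟨k, hk⟩ := Ideal.exists_pow_inf_eq_pow_smul 𝔞 (M := R) J
  refine ⟨n + k, ?_⟩
  have artinRees := hk (n + k) (Nat.le_add_left _ _)
  simp only [smul_eq_mul, Ideal.mul_top, Nat.add_sub_cancel] at artinRees
  exact artinRees.trans_le (Ideal.mul_mono le_rfl inf_le_right)

variable {𝔞} in
lemma IsTorsionIdeal.exists_comap_pow_le_ker [IsNoetherianRing R] {N : Type u} [AddCommGroup N]
    [Module R N] (hN : IsTorsionIdeal 𝔞 N) {J : Ideal R} (f : J →ₗ[R] N) :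
    ∃ m, Submodule.comap J.subtype (𝔞 ^ m) ≤ LinearMap.ker f := by
  obtain ⟨n, hn⟩ := (hN.submodule (LinearMap.range f)).exists_pow_le_annihilator
  obtain ⟨m, hm⟩ := exists_pow_inf_le_pow_mul 𝔞 J n
  have pow_mul_le : 𝔞 ^ n * J ≤ Submodule.map J.subtype (LinearMap.ker f) := by
    refine Ideal.mul_le.2 fun a ha b hb => ⟨a • ⟨b, hb⟩, ?_, rfl⟩
    rw [SetLike.mem_coe, LinearMap.mem_ker, map_smul]
    exact congrArg Subtype.val (Module.mem_annihilator.1 (hn ha) (f.rangeRestrict ⟨b, hb⟩))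
  refine ⟨m, fun x hx => ?_⟩
  obtain ⟨y, hy, hyx⟩ := pow_mul_le (hm ⟨hx, x.2⟩)
  exact Subtype.ext hyx ▸ hy

lemma mapQ_injective_of_eq_comap {M N : Type u} [AddCommGroup M] [Module R M] [AddCommGroup N]
    [Module R N] {p : Submodule R M} {q : Submodule R N} {f : M →ₗ[R] N}
    (h : p = q.comap f) : Function.Injective (p.mapQ q f h.le) := by
  rw [← LinearMap.ker_eq_bot, Submodule.ker_mapQ, ← h, Submodule.mkQ_map_self]

variable {I : Type u} [AddCommGroup I] [Module R I]

lemma injective_quotient_of_injective (hI : Module.Injective R I) {N : Submodule R I}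
    (hN : Module.Injective R N) : Module.Injective R (I ⧸ N) := by
  obtain ⟨retraction, h_retraction⟩ := hN.out N.subtype N.injective_subtype LinearMap.id
  let s : (I ⧸ N) →ₗ[R] I := N.liftQ (LinearMap.id - N.subtype ∘ₗ retraction) fun x hx => by
    have : retraction x = ⟨x, hx⟩ := h_retraction ⟨x, hx⟩
    simp [this]
  have mkQ_comp_s : N.mkQ ∘ₗ s = LinearMap.id := by
    ext x
    simp [s]
  refine ⟨fun X Y _ _ _ _ f hf g => ?_⟩
  obtain ⟨h, hh⟩ := hI.out f hf (s ∘ₗ g)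
  refine ⟨N.mkQ ∘ₗ h, fun x => ?_⟩
  rw [LinearMap.comp_apply, hh]
  exact congr($mkQ_comp_s (g x))

variable [IsNoetherianRing R]

lemma injective_primaryComponent (hI : Module.Injective R I) :
    Module.Injective R (𝔞.primaryComponent I) := by
  refine Module.Baer.injective fun J f => ?_
  obtain ⟨m, hm⟩ := (isTorsionIdeal_primaryComponent 𝔞 I).exists_comap_pow_le_ker f
  let K : Submodule R J := Submodule.comap J.subtype (𝔞 ^ m)
  -- Being killed by `𝔞 ^ m`, the image of `R/𝔞^m` in `I` is torsion, so the extension of `f`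
  -- through `J/(J ∩ 𝔞^m) ↪ R/𝔞^m` stays in the torsion submodule.
  obtain ⟨h, hh⟩ := hI.out (K.mapQ (𝔞 ^ m) J.subtype le_rfl) (mapQ_injective_of_eq_comap rfl)
    ((𝔞.primaryComponent I).subtype ∘ₗ K.liftQ f hm)
  have h_mem : ∀ r, h ((𝔞 ^ m).mkQ r) ∈ 𝔞.primaryComponent I := fun r =>
    mem_primaryComponent_iff.2 ⟨m, fun a ha => by
      rw [← map_smul, Module.mem_annihilator.1 (Ideal.annihilator_quotient.ge ha), map_zero]⟩
  exact ⟨(h ∘ₗ (𝔞 ^ m).mkQ).codRestrict _ h_mem, fun x hx => Subtype.ext (hh (K.mkQ ⟨x, hx⟩))⟩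

end TorsionInjective

section TorsionAcyclic

variable {R : Type u} [CommRing R]

lemma exists_injective_embedding (M : Type u) [AddCommGroup M] [Module R M] :
    ∃ (I : ModuleCat.{u} R) (f : M →ₗ[R] I), Module.Injective R I ∧ Function.Injective f :=
  ⟨Injective.under (ModuleCat.of R M), (Injective.ι (ModuleCat.of R M)).hom,
    Module.injective_module_of_injective_object (inj := Injective.injective_under _),
    (ModuleCat.mono_iff_injective _).1 inferInstance⟩

variable {𝔞 : Ideal R}

lemma IsTorsionIdeal.exists_map_eq_comap {J C : Type u} [AddCommGroup J] [Module R J]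
    [AddCommGroup C] [Module R C] (hJ : IsTorsionIdeal 𝔞 J) {g : J →ₗ[R] C}
    (hg : Function.Surjective g) (t : ℕ) (y : ExtM R (R ⧸ 𝔞 ^ t) C 0) :
    ∃ (v : ℕ) (h : t ≤ v) (x : ExtM R (R ⧸ 𝔞 ^ v) J 0),
      ExtM.map _ g 0 x = ExtM.comap C (powFactor 𝔞 h) 0 y := by
  obtain ⟨q, hq⟩ := hg (ExtM.zeroEquiv _ _ y 1)
  obtain ⟨k, hk⟩ := hJ q
  let l : (R ⧸ 𝔞 ^ (max t k)) →ₗ[R] J := Submodule.liftQ _ (LinearMap.toSpanSingleton R J q)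
    fun a ha => hk a (Ideal.pow_le_pow_right (le_max_right t k) ha)
  refine ⟨max t k, le_max_left _ _, (ExtM.zeroEquiv _ _).symm l,
    (ExtM.zeroEquiv _ _).injective ?_⟩
  rw [ExtM.zeroEquiv_map, LinearEquiv.apply_symm_apply, ExtM.zeroEquiv_comap]
  ext
  exact (congrArg g (one_smul R q)).trans hq

variable [IsNoetherianRing R]

lemma IsTorsionIdeal.exists_injective_embedding {N : Type u} [AddCommGroup N] [Module R N]
    (hN : IsTorsionIdeal 𝔞 N) :
    ∃ (J : ModuleCat.{u} R) (f : N →ₗ[R] J),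
      Module.Injective R J ∧ IsTorsionIdeal 𝔞 J ∧ Function.Injective f := by
  obtain ⟨I, f, hI, hf⟩ := _root_.exists_injective_embedding (R := R) N
  have f_mem : ∀ n, f n ∈ 𝔞.primaryComponent I := fun n =>
    mem_primaryComponent_iff.2 ((hN n).imp fun k hk a ha => by rw [← map_smul, hk a ha, map_zero])
  exact ⟨ModuleCat.of R (𝔞.primaryComponent I), f.codRestrict _ f_mem,
    injective_primaryComponent 𝔞 hI, isTorsionIdeal_primaryComponent 𝔞 I,
    (LinearMap.injective_codRestrict_iff f_mem).2 hf⟩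

lemma exists_comap_eq_zero_of_isTorsionIdeal (i : ℕ) (N : Type u) [AddCommGroup N] [Module R N]
    (hN : IsTorsionIdeal 𝔞 N) (t : ℕ) (x : ExtM R (R ⧸ 𝔞 ^ t) N (i + 1)) :
    ∃ (v : ℕ) (h : t ≤ v), ExtM.comap N (powFactor 𝔞 h) (i + 1) x = 0 := by
  induction i generalizing N t with
  | zero =>
    obtain ⟨J, f, hJ, hJt, hf⟩ := hN.exists_injective_embedding
    have hfg := isShortExact_mkQ_range hf
    have := ExtM.subsingleton_of_injective (R ⧸ 𝔞 ^ t) J hJ 0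
    obtain ⟨y, rfl⟩ := (ExtM.exact_δ_map (R ⧸ 𝔞 ^ t) hfg 0 x).1 (Subsingleton.elim _ _)
    obtain ⟨v, h, l, hl⟩ := hJt.exists_map_eq_comap hfg.surjective t y
    exact ⟨v, h, by rw [← ExtM.δ_comap]; exact (ExtM.exact_map_δ _ hfg 0 _).2 ⟨l, hl⟩⟩
  | succ i ih =>
    obtain ⟨J, f, hJ, hJt, hf⟩ := hN.exists_injective_embedding
    have hfg := isShortExact_mkQ_range hf
    have := ExtM.subsingleton_of_injective (R ⧸ 𝔞 ^ t) J hJ (i + 1)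
    obtain ⟨y, rfl⟩ := (ExtM.exact_δ_map (R ⧸ 𝔞 ^ t) hfg (i + 1) x).1 (Subsingleton.elim _ _)
    obtain ⟨v, h, hv⟩ := ih _ (hJt.quotient (LinearMap.range f)) t y
    exact ⟨v, h, by rw [← ExtM.δ_comap, hv, map_zero]⟩

end TorsionAcyclic

namespace LocalCohomologyData

variable {R : Type u} [CommRing R] {𝔞 : Ideal R} {i : ℕ}

/-- Local cohomology in positive degrees is unchanged by killing the torsion submodule. -/
noncomputable def ofQuotientPrimaryComponent [IsNoetherianRing R] {M H : Type u}
    [AddCommGroup M] [Module R M] [AddCommGroup H] [Module R H]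
    (D : LocalCohomologyData 𝔞 (i + 1) (M ⧸ 𝔞.primaryComponent M) H) :
    LocalCohomologyData 𝔞 (i + 1) M H :=
  D.ofMorphism (fun _ => ExtM.map _ (𝔞.primaryComponent M).mkQ (i + 1))
    (fun _ _ => ExtM.map_comap _ _ _ _ _ _)
    (fun t x hx => by
      obtain ⟨y, rfl⟩ := (ExtM.exact_map_map _ (isShortExact_subtype_mkQ _) (i + 1) x).1 hx
      obtain ⟨v, h, hv⟩ := exists_comap_eq_zero_of_isTorsionIdeal i _
        (isTorsionIdeal_primaryComponent 𝔞 M) t y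
      exact ⟨v, h, by rw [← ExtM.map_comap, hv, map_zero]⟩)
    (fun t y => by
      have hΓ := isShortExact_subtype_mkQ (𝔞.primaryComponent M)
      obtain ⟨v, h, hv⟩ := exists_comap_eq_zero_of_isTorsionIdeal (i + 1) _
        (isTorsionIdeal_primaryComponent 𝔞 M) t (ExtM.δ _ hΓ (i + 1) y)
      rw [← ExtM.δ_comap] at hv
      exact ⟨v, h, (ExtM.exact_map_δ _ hΓ (i + 1) _).1 hv⟩)

/-- Dimension shifting along a short exact sequence whose middle term is acyclic. -/
noncomputable def shift {A B C H : Type u} [AddCommGroup A] [Module R A] [AddCommGroup B]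
    [Module R B] [AddCommGroup C] [Module R C] [AddCommGroup H] [Module R H] {f : A →ₗ[R] B}
    {g : B →ₗ[R] C} (hfg : IsShortExact f g)
    (hB : ∀ t i, Subsingleton (ExtM R (R ⧸ 𝔞 ^ t) B i)) (D : LocalCohomologyData 𝔞 i C H) :
    LocalCohomologyData 𝔞 (i + 1) A H :=
  let e (t : ℕ) : ExtM R (R ⧸ 𝔞 ^ t) C i ≃ₗ[R] ExtM R (R ⧸ 𝔞 ^ t) A (i + 1) :=
    LinearEquiv.ofBijective _ (ExtM.δ_bijective _ hfg (hB t) i)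
  D.ofMorphism (fun t => (e t).symm.toLinearMap)
    (fun {s t} h x => by
      obtain ⟨y, rfl⟩ := (e s).surjective x
      rw [LinearEquiv.coe_coe, LinearEquiv.coe_coe, LinearEquiv.symm_apply_apply,
        LinearEquiv.symm_apply_eq]
      exact (ExtM.δ_comap _ _ hfg (powFactor 𝔞 h) i y).symm)
    (fun t x hx => ⟨t, le_rfl, by rw [(e t).symm.map_eq_zero_iff.1 hx, map_zero]⟩)
    (fun t y => ⟨t, le_rfl, _, LinearEquiv.symm_apply_apply _ _⟩)

end LocalCohomologyData

section DimensionShift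

variable {R : Type u} [CommRing R] [IsNoetherianRing R]

lemma subsingleton_ext_quotient_primaryComponent_of_injective {𝔞 : Ideal R} {T I : Type u}
    [AddCommGroup T] [Module R T] [AddCommGroup I] [Module R I] (hI : Module.Injective R I)
    {n : ℕ} (hT : 𝔞 ^ n ≤ Module.annihilator R T) :
    ∀ i, Subsingleton (ExtM R T (I ⧸ 𝔞.primaryComponent I) i)
  | 0 => subsingleton_ext_zero_quotient_primaryComponent I hT
  | i + 1 => ExtM.subsingleton_of_injective _ _
      (injective_quotient_of_injective hI (injective_primaryComponent 𝔞 hI)) i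

-- `M'` is the cokernel of `M / Γ(M) ↪ I / Γ(I)` for an embedding of `M` in an injective `I`:
-- unlike `I` itself, the injective module `I / Γ(I)` has no `Hom` from the `R/𝔞^t`.
lemma exists_localCohomology_shift (𝔞 : Ideal R) (M : Type u) [AddCommGroup M] [Module R M] :
    ∃ M' : ModuleCat.{u} R,
      (∀ i, Nonempty (ExtM R (R ⧸ 𝔞) M' i ≃ₗ[R]
        ExtM R (R ⧸ 𝔞) (M ⧸ 𝔞.primaryComponent M) (i + 1))) ∧
      ∀ i, Nonempty ((localCohomology 𝔞 i).obj M' ≃ₗ[R]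
        (localCohomology 𝔞 (i + 1)).obj (ModuleCat.of R M)) := by
  obtain ⟨I, f, hI, hf⟩ := exists_injective_embedding (R := R) M
  have primaryComponent_eq : 𝔞.primaryComponent M = (𝔞.primaryComponent I).comap f := by
    ext m
    rw [Submodule.mem_comap, mem_primaryComponent_iff, mem_primaryComponent_iff]
    simp only [← map_smul, map_eq_zero_iff f hf]
  let f' : (M ⧸ 𝔞.primaryComponent M) →ₗ[R] (I ⧸ 𝔞.primaryComponent I) :=
    Submodule.mapQ _ _ f primaryComponent_eq.le
  have hM' := isShortExact_mkQ_range (mapQ_injective_of_eq_comap primaryComponent_eq :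
    Function.Injective f')
  have acyclic_pow (t : ℕ) :=
    subsingleton_ext_quotient_primaryComponent_of_injective (T := R ⧸ 𝔞 ^ t) hI
      Ideal.annihilator_quotient.ge
  have acyclic := subsingleton_ext_quotient_primaryComponent_of_injective (T := R ⧸ 𝔞) (n := 1) hI
    (by rw [pow_one, Ideal.annihilator_quotient])
  refine ⟨ModuleCat.of R (_ ⧸ LinearMap.range f'),
    fun i => ⟨LinearEquiv.ofBijective _ (ExtM.δ_bijective _ hM' acyclic i)⟩, fun i => ?_⟩
  obtain ⟨D⟩ := nonempty_localCohomologyData 𝔞 i (ModuleCat.of R (_ ⧸ LinearMap.range f'))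
  obtain ⟨D'⟩ := nonempty_localCohomologyData 𝔞 (i + 1) (ModuleCat.of R M)
  exact ⟨(D.shift hM' acyclic_pow).ofQuotientPrimaryComponent.equiv D'⟩

end DimensionShift

section FinitenessInduction

variable {R : Type u} [CommRing R] {𝔞 : Ideal R}

lemma finite_ext_congr {M M' : Type u} [AddCommGroup M] [Module R M] [AddCommGroup M']
    [Module R M'] (e : M ≃ₗ[R] M') (i : ℕ) :
    Module.Finite R (ExtM R (R ⧸ 𝔞) M i) ↔ Module.Finite R (ExtM R (R ⧸ 𝔞) M' i) :=
  Module.Finite.equiv_iff (ExtM.congr (LinearEquiv.refl R _) e i)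

variable (𝔞) in
lemma nonempty_primaryComponent_equiv_localCohomology_zero (M : ModuleCat.{u} R) :
    Nonempty (𝔞.primaryComponent M ≃ₗ[R] (localCohomology 𝔞 0).obj M) :=
  (nonempty_localCohomologyData 𝔞 0 M).map (LocalCohomologyData.zero 𝔞 M).equiv

variable (𝔞) in
lemma subsingleton_ext_zero_quotient_ideal_quotient_primaryComponent (M : Type u)
    [AddCommGroup M] [Module R M] [IsNoetherianRing R] :
    Subsingleton (ExtM R (R ⧸ 𝔞) (M ⧸ 𝔞.primaryComponent M) 0) :=
  subsingleton_ext_zero_quotient_primaryComponent (n := 1) M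
    (by rw [pow_one, Ideal.annihilator_quotient])

variable [IsNoetherianRing R]

lemma finite_ext_zero_localCohomology_zero_iff (M : ModuleCat.{u} R) :
    Module.Finite R (ExtM R (R ⧸ 𝔞) ((localCohomology 𝔞 0).obj M) 0) ↔
      Module.Finite R (ExtM R (R ⧸ 𝔞) M 0) := by
  obtain ⟨e⟩ := nonempty_primaryComponent_equiv_localCohomology_zero 𝔞 M
  have hΓ := isShortExact_subtype_mkQ (𝔞.primaryComponent M)
  have := subsingleton_ext_zero_quotient_ideal_quotient_primaryComponent 𝔞 M
  rw [← finite_ext_congr e]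
  exact ⟨fun h => (isSerreClass_finite R).covariant_mem₂ _ hΓ 0 h inferInstance,
    fun _ => Module.Finite.of_injective _ (ExtM.map_zero_injective _ hΓ.injective)⟩

lemma finite_ext_primaryComponent (hB : ExtBound R 2 𝔞) {M : Type u} [AddCommGroup M]
    [Module R M] (hM : ∀ i ≤ 2, Module.Finite R (ExtM R (R ⧸ 𝔞) M i))
    (h : Module.Finite R
      (ExtM R (R ⧸ 𝔞) ((localCohomology 𝔞 1).obj (ModuleCat.of R M)) 0)) (i : ℕ) :
    Module.Finite R (ExtM R (R ⧸ 𝔞) (𝔞.primaryComponent M) i) := by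
  obtain ⟨M', hM', hH⟩ := exists_localCohomology_shift 𝔞 M
  have ext_zero : Module.Finite R (ExtM R (R ⧸ 𝔞) (M ⧸ 𝔞.primaryComponent M) 0) := by
    have := subsingleton_ext_zero_quotient_ideal_quotient_primaryComponent 𝔞 M
    infer_instance
  have ext_one : Module.Finite R (ExtM R (R ⧸ 𝔞) (M ⧸ 𝔞.primaryComponent M) 1) := by
    rw [← Module.Finite.equiv_iff (hM' 0).some, ← finite_ext_zero_localCohomology_zero_iff]
    exact (finite_ext_congr (hH 0).some 0).2 h
  refine hB _ (isTorsionIdeal_primaryComponent 𝔞 M) (fun j hj => ?_) i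
  refine (isSerreClass_finite R).covariant_mem₁ _
    (isShortExact_subtype_mkQ (𝔞.primaryComponent M)) j (fun k hk => ?_) (hM j hj)
  obtain rfl | rfl : k = 0 ∨ k = 1 := by lia
  · exact ext_zero
  · exact ext_one

theorem ext_localCohomology_finite_iff (hB : ExtBound R 2 𝔞) (t : ℕ) (M : ModuleCat.{u} R)
    (hM : ∀ i, Module.Finite R (ExtM R (R ⧸ 𝔞) M i)) :
    (∀ i < t, ∀ j, Module.Finite R (ExtM R (R ⧸ 𝔞) ((localCohomology 𝔞 i).obj M) j)) ↔
      ∀ i < t + 1, Module.Finite R (ExtM R (R ⧸ 𝔞) ((localCohomology 𝔞 i).obj M) 0) := by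
  induction t generalizing M with
  | zero =>
    simpa only [Nat.not_lt_zero, false_imp_iff, implies_true, true_iff, zero_add,
      Nat.lt_one_iff, forall_eq] using (finite_ext_zero_localCohomology_zero_iff M).2 (hM 0)
  | succ t ih =>
    obtain ⟨e⟩ := nonempty_primaryComponent_equiv_localCohomology_zero 𝔞 M
    obtain ⟨M', hM', hH⟩ := exists_localCohomology_shift 𝔞 M
    rw [Nat.forall_lt_succ_left, Nat.forall_lt_succ_left (n := t + 1)]
    have shift (hΓ : ∀ j, Module.Finite R (ExtM R (R ⧸ 𝔞) ((localCohomology 𝔞 0).obj M) j)) :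
        (∀ i < t, ∀ j, Module.Finite R
          (ExtM R (R ⧸ 𝔞) ((localCohomology 𝔞 (i + 1)).obj M) j)) ↔
        ∀ i < t + 1, Module.Finite R
          (ExtM R (R ⧸ 𝔞) ((localCohomology 𝔞 (i + 1)).obj M) 0) := by
      have key := ih M' fun i => (Module.Finite.equiv_iff (hM' i).some).2 <|
        (isSerreClass_finite R).covariant_mem₃ _
          (isShortExact_subtype_mkQ (𝔞.primaryComponent M)) (i + 1) (hM _)
          ((finite_ext_congr e _).2 (hΓ _))
      simpa only [finite_ext_congr (hH _).some] using key
    refine ⟨fun ⟨h0, h⟩ => ⟨h0 0, (shift h0).1 h⟩, fun ⟨_, h⟩ => ?_⟩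
    have h0 (j : ℕ) := (finite_ext_congr e j).1
      (finite_ext_primaryComponent hB (fun i _ => hM i) (h 0 t.succ_pos) j)
    exact ⟨h0, (shift h0).2 h⟩

end FinitenessInduction

section Cofinite

variable {R : Type u} [CommRing R] {𝔞 : Ideal R}

lemma support_subset_zeroLocus_of_isTorsionIdeal {M : Type u} [AddCommGroup M] [Module R M]
    (hM : IsTorsionIdeal 𝔞 M) : Module.support R M ⊆ PrimeSpectrum.zeroLocus (𝔞 : Set R) := by
  intro p hp a ha
  obtain ⟨m, hm⟩ := Module.mem_support_iff_exists_annihilator.1 hp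
  obtain ⟨n, hn⟩ := hM m
  exact p.2.mem_of_pow_mem n
    (hm ((Submodule.mem_annihilator_span_singleton _ _).2 (hn _ (Ideal.pow_mem_pow ha n))))

variable (𝔞) in
lemma isCofinite_localCohomology_iff (i : ℕ) (M : ModuleCat.{u} R) :
    IsCofinite 𝔞 ((localCohomology 𝔞 i).obj M) ↔
      ∀ j, Module.Finite R (ExtM R (R ⧸ 𝔞) ((localCohomology 𝔞 i).obj M) j) := by
  obtain ⟨D⟩ := nonempty_localCohomologyData 𝔞 i M
  exact (and_iff_right (support_subset_zeroLocus_of_isTorsionIdeal D.isTorsionIdeal)).trans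
    (forall_congr' fun j => Module.Finite.equiv_iff (extEquiv _ _ j).symm)

end Cofinite

theorem localCohomology_isCofinite_iff_hom_finite_general
    {R : Type u} [CommRing R] [IsNoetherianRing R] (𝔞 : Ideal R)
    (hcase : ringKrullDim R ≤ 3 ∨ ringKrullDim (R ⧸ 𝔞) ≤ 2 ∨ arithRank 𝔞 ≤ 2)
    (t : ℕ) (M : ModuleCat.{u} R) (hext : ∀ i : ℕ, Module.Finite R (extIdeal 𝔞 i M)) :
    (∀ i : ℕ, i < t → IsCofinite 𝔞 ((localCohomology 𝔞 i).obj M)) ↔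
      (∀ i : ℕ, i ≤ t → Module.Finite R ((R ⧸ 𝔞) →ₗ[R] ((localCohomology 𝔞 i).obj M))) := by
  have ext_finite_iff := ext_localCohomology_finite_iff (extBound_two hcase) t M fun i =>
    (Module.Finite.equiv_iff (extEquiv (ModuleCat.of R (R ⧸ 𝔞)) M i)).2 (hext i)
  have hom_finite_iff (i : ℕ) :
      Module.Finite R ((R ⧸ 𝔞) →ₗ[R] ((localCohomology 𝔞 i).obj M)) ↔
        Module.Finite R (ExtM R (R ⧸ 𝔞) ((localCohomology 𝔞 i).obj M) 0) :=
    Module.Finite.equiv_iff (ExtM.zeroEquiv _ _).symm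
  simpa only [isCofinite_localCohomology_iff, hom_finite_iff, Nat.lt_succ_iff]
    using ext_finite_iff

/-- Yang–Shen, Proposition 4.1(3) (module case): let `𝔞` be a proper ideal of a noetherian
ring `R` with `dim R = 3`, or `dim R/𝔞 = 2`, or `ara 𝔞 = 2`, and `M` an `R`-module with
`Ext^i_R(R/𝔞, M)` finitely generated for all `i`. Then `H^i_𝔞(M)` is `𝔞`-cofinite for all
`i ≤ t - 1` if and only if `Hom_R(R/𝔞, H^i_𝔞(M))` is finitely generated for all `i ≤ t`. -/
theorem localCohomology_isCofinite_iff_hom_finite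
    {R : Type u} [CommRing R] [IsNoetherianRing R] (𝔞 : Ideal R) (ha : 𝔞 ≠ ⊤)
    (hcase : ringKrullDim R = 3 ∨ ringKrullDim (R ⧸ 𝔞) = 2 ∨ arithRank 𝔞 = 2)
    (t : ℕ) (M : ModuleCat.{u} R) (hext : ∀ i : ℕ, Module.Finite R (extIdeal 𝔞 i M)) :
    (∀ i : ℕ, i < t → IsCofinite 𝔞 ((localCohomology 𝔞 i).obj M)) ↔
      (∀ i : ℕ, i ≤ t → Module.Finite R ((R ⧸ 𝔞) →ₗ[R] ((localCohomology 𝔞 i).obj M))) :=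
  localCohomology_isCofinite_iff_hom_finite_general 𝔞
    (hcase.imp le_of_eq (Or.imp le_of_eq le_of_eq)) t M hext
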